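/- For every universal oracle machine U, the cofiniteness probability μ(COF(U)) (the probability that U computes a function with cofinite domain) is a 3-random 0''-left-c.e. real, and the computability probability μ(COM(U)) is a 3-random 0''-left-c.e. real. Conversely, every 3-random 0''-left-c.e. real α ∈ (0,1) equals μ(COF(U)) for some universal oracle machine U, and also equals μ(COM(V)) for some universal oracle machine V. -/

import Mathlib

open scoped Classical
open MeasureTheory

namespace RandProb

/-- Cantor space: the space of infinite binary sequences. -/
abbrev Cantor := ℕ → Bool

/-! ### Oracle partial recursive functions, via codes -/

/-- Codes for partial recursive functions with access to an oracle `O : ℕ → ℕ`.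
These codes play the role of (oracle) Turing machines. -/
inductive CodeO : Type
  | zero : CodeO
  | succ : CodeO
  | left : CodeO
  | right : CodeO
  | oracle : CodeO
  | pair : CodeO → CodeO → CodeO
  | comp : CodeO → CodeO → CodeO
  | prec : CodeO → CodeO → CodeO
  | rfind' : CodeO → CodeO

/-- Evaluation of an oracle code with (total) oracle `O`. -/
def CodeO.eval (O : ℕ → ℕ) : CodeO → ℕ →. ℕ
  | .zero => pure 0
  | .succ => Nat.succ
  | .left => ↑fun n : ℕ => n.unpair.1
  | .right => ↑fun n : ℕ => n.unpair.2
  | .oracle => ↑fun n : ℕ => O n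
  | .pair cf cg => fun n => Nat.pair <$> cf.eval O n <*> cg.eval O n
  | .comp cf cg => fun n => cg.eval O n >>= cf.eval O
  | .prec cf cg =>
    Nat.unpaired fun a n =>
      n.rec (cf.eval O a) fun y IH => do
        let i ← IH
        cg.eval O (Nat.pair a (Nat.pair y i))
  | .rfind' cf =>
    Nat.unpaired fun a m =>
      (Nat.rfind fun n => (fun m => m = 0) <$> cf.eval O (Nat.pair a (n + m))).map (· + m)

/-- A canonical injective numbering of oracle codes. -/
def CodeO.encode : CodeO → ℕ
  | .zero => 0
  | .succ => 1
  | .left => 2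
  | .right => 3
  | .oracle => 4
  | .pair cf cg => 2 * (2 * Nat.pair cf.encode cg.encode) + 5
  | .comp cf cg => 2 * (2 * Nat.pair cf.encode cg.encode + 1) + 5
  | .prec cf cg => 2 * (2 * Nat.pair cf.encode cg.encode) + 6
  | .rfind' cf => 2 * (2 * cf.encode + 1) + 6

/-- The Turing jump of an oracle: the halting problem relative to `O`,
as a `{0,1}`-valued function. -/
noncomputable def jump (O : ℕ → ℕ) : ℕ → ℕ := fun e =>
  if ∃ c : CodeO, c.encode = e ∧ (c.eval O e).Dom then 1 else 0

/-- `iterJump n` is `∅^(n)`, the `n`-th iterate of the halting problem (as an oracle). -/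
noncomputable def iterJump : ℕ → ℕ → ℕ
  | 0 => fun _ => 0
  | n + 1 => jump (iterJump n)

/-- `S ⊆ ℕ` is computably enumerable relative to the oracle `O`. -/
def CeIn (O : ℕ → ℕ) (S : Set ℕ) : Prop := ∃ c : CodeO, S = {m | (c.eval O m).Dom}

/-- The left Dedekind cut of `α` (as a set of codes of rationals) is c.e. in `O`. -/
def LeftCeIn (O : ℕ → ℕ) (α : ℝ) : Prop :=
  CeIn O {m | ∃ q : ℚ, Encodable.encode q = m ∧ (q : ℝ) < α}

/-- The right Dedekind cut of `α` (as a set of codes of rationals) is c.e. in `O`. -/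
def RightCeIn (O : ℕ → ℕ) (α : ℝ) : Prop :=
  CeIn O {m | ∃ q : ℚ, Encodable.encode q = m ∧ α < (q : ℝ)}

/-! ### Martin-Löf randomness for real numbers -/

/-- The `i`-th component of a Martin-Löf test coded by the set `W ⊆ ℕ`:
the union of all open rational intervals whose codes are enumerated into the
`i`-th section of `W`. -/
def testSet (W : Set ℕ) (i : ℕ) : Set ℝ :=
  {x | ∃ p q : ℚ, Nat.pair i (Encodable.encode (p, q)) ∈ W ∧ (p : ℝ) < x ∧ x < (q : ℝ)}

/-- `α` is Martin-Löf random relative to the oracle `O`. -/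
def MLRandomIn (O : ℕ → ℕ) (α : ℝ) : Prop :=
  ∀ W : Set ℕ, CeIn O W →
    (∀ i, volume (testSet W i) ≤ ENNReal.ofReal ((2 : ℝ)⁻¹ ^ i)) →
    ∃ i, α ∉ testSet W i

/-- `α` is `n`-random: Martin-Löf random relative to `∅^(n-1)`. -/
def NRandom (n : ℕ) (α : ℝ) : Prop := MLRandomIn (iterJump (n - 1)) α

/-! ### The uniform measure on Cantor space -/

/-- The binary digits of a real number (meaningful on `[0,1)`). -/
noncomputable def digits (x : ℝ) : Cantor := fun n => decide (⌊x * 2 ^ (n + 1)⌋ % 2 = 1)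

/-- The uniform (Lebesgue) product measure on Cantor space, obtained as the
pushforward of Lebesgue measure on `[0,1)` under the binary-digit map. -/
noncomputable def mu : Measure Cantor :=
  Measure.map digits (volume.restrict (Set.Ico (0 : ℝ) 1))

/-- The uniform measure of a set of elements of Cantor space, as a real number. -/
noncomputable def muR (S : Set Cantor) : ℝ := (mu S).toReal

/-! ### Strings, prefixes and cylinders -/

/-- The length-`n` initial segment of `X ∈ 2^ω`, as a finite binary string. -/
def initSeg (X : Cantor) (n : ℕ) : List Bool := (List.range n).map X

/-- `⟦S⟧`: the elements of Cantor space having a prefix in the set of strings `S`. -/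
def cyl (S : Set (List Bool)) : Set Cantor := {X | ∃ n, initSeg X n ∈ S}

/-- A set of strings is prefix-free if none of its elements properly extends another. -/
def IsPrefixFree (S : Set (List Bool)) : Prop := ∀ σ ∈ S, ∀ τ ∈ S, σ <+: τ → σ = τ

/-- A set of strings is upward closed if it is closed under taking extensions. -/
def UpClosed (S : Set (List Bool)) : Prop := ∀ σ ∈ S, ∀ τ, σ <+: τ → τ ∈ S

/-- Two strings are compatible if one is a prefix of the other. -/
def Compatible (σ τ : List Bool) : Prop := σ <+: τ ∨ τ <+: σ

/-! ### Oracle machines -/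

/-- An element of Cantor space viewed as a `{0,1}`-valued oracle. -/
def oX (X : Cantor) : ℕ → ℕ := fun n => cond (X n) 1 0

/-- `evalO X c n`: the (possibly divergent) output of the oracle machine `c`
on input `n` with oracle `X`. -/
def evalO (X : Cantor) (c : CodeO) (n : ℕ) : Part ℕ := c.eval (oX X) n

/-- The oracle obtained by writing the string `ρ` before the bits of `X`. -/
def prepend (ρ : List Bool) (X : Cantor) : Cantor := fun n =>
  if n < ρ.length then ρ.getD n false else X (n - ρ.length)

/-- `X ∈ 2^ω` extends the finite string `ρ`. -/
def Extends (X : Cantor) (ρ : List Bool) : Prop := initSeg X ρ.length = ρ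

/-- `u` is a universal oracle machine: some effective, prefix-free translation
`c ↦ σ_c` satisfies `u(σ_c * X, n) ≃ c(X, n)` for all machines `c`. -/
def UniversalOM (u : CodeO) : Prop :=
  ∃ σ : CodeO → List Bool,
    (∃ f : ℕ → ℕ, Computable f ∧ ∀ c : CodeO, f c.encode = Encodable.encode (σ c)) ∧
    IsPrefixFree (Set.range σ) ∧
    ∀ (c : CodeO) (X : Cantor) (n : ℕ), evalO (prepend (σ c) X) u n = evalO X c n

/-- `TOT(c)`: the oracles `X` such that the function `c(X)` is total. -/
def TOT (c : CodeO) : Set Cantor := {X | ∀ n, (evalO X c n).Dom}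

/-- The domain of the partial function `c(X)`. -/
def domSet (c : CodeO) (X : Cantor) : Set ℕ := {n | (evalO X c n).Dom}

/-- The range of the partial function `c(X)`. -/
def ranSet (c : CodeO) (X : Cantor) : Set ℕ := {v | ∃ n, v ∈ evalO X c n}

/-- `INF(c)`: the oracles `X` such that `c(X)` has infinite domain. -/
def INF (c : CodeO) : Set Cantor := {X | (domSet c X).Infinite}

/-- `COF(c)`: the oracles `X` such that `c(X)` has cofinite domain. -/
def COF (c : CodeO) : Set Cantor := {X | (domSet c X)ᶜ.Finite}

/-- `COM(c)`: the oracles `X` such that `c(X)` has computable domain. -/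
def COM (c : CodeO) : Set Cantor := {X | ComputablePred fun n => n ∈ domSet c X}

/-- The characteristic function of a set of naturals. -/
noncomputable def chi (A : Set ℕ) : ℕ → ℕ := fun n => if n ∈ A then 1 else 0

/-- Turing reducibility between sets of naturals. -/
def TuringLEs (B A : Set ℕ) : Prop := ∃ c : CodeO, ∀ n, c.eval (chi A) n = Part.some (chi B n)

/-- The halting problem `∅'` as a set of naturals. -/
noncomputable def HaltingSet : Set ℕ := {e | iterJump 1 e = 1}

/-- `COMPL(c)`: the oracles `X` such that the domain of `c(X)` computes the halting problem. -/
noncomputable def COMPL (c : CodeO) : Set Cantor := {X | TuringLEs HaltingSet (domSet c X)}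

/-- Turing reducibility between total functions on ℕ. -/
def TuringLEf (f g : ℕ → ℕ) : Prop := ∃ c : CodeO, ∀ n, c.eval g n = Part.some (f n)

/-- A real number viewed as an oracle, via its binary expansion. -/
noncomputable def realOracle (α : ℝ) : ℕ → ℕ := oX (digits α)

/-- Two reals have Turing-incomparable degrees. -/
noncomputable def TIncompReal (α β : ℝ) : Prop :=
  ¬ TuringLEf (realOracle α) (realOracle β) ∧ ¬ TuringLEf (realOracle β) (realOracle α)

/-! ### Arithmetical hierarchy -/

/-- Evaluation with the trivial (empty) oracle: ordinary partial recursion. -/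
def eval0 (c : CodeO) : ℕ →. ℕ := c.eval fun _ => 0

/-- `SigmaNumIdx n c` is the `Σ^0_{n+1}` subset of `ℕ` with index `c`. -/
def SigmaNumIdx : ℕ → CodeO → Set ℕ
  | 0, c => {m | (eval0 c m).Dom}
  | n + 1, c => {m | ∃ k, Nat.pair m k ∉ SigmaNumIdx n c}

/-- `S ⊆ ℕ` is `Σ^0_n` (intended for `n ≥ 1`). -/
def SigmaN (n : ℕ) (S : Set ℕ) : Prop := ∃ c : CodeO, S = SigmaNumIdx (n - 1) c

/-- The set of codes of the elements of a set of binary strings. -/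
def strCodes (S : Set (List Bool)) : Set ℕ := {m | ∃ σ ∈ S, Encodable.encode σ = m}

/-- A set of binary strings is `Σ^0_n`. -/
def SigmaStr (n : ℕ) (S : Set (List Bool)) : Prop := SigmaN n (strCodes S)

/-- A set of binary strings is `Π^0_n`: its complement is `Σ^0_n`. -/
def PiStr (n : ℕ) (S : Set (List Bool)) : Prop := SigmaStr n Sᶜ

/-- A set of binary strings is c.e. relative to the oracle `O`. -/
def CeStrIn (O : ℕ → ℕ) (S : Set (List Bool)) : Prop := CeIn O (strCodes S)

/-- `SigmaClassIdx n c m` is the `Σ^0_{n+1}` class of elements of Cantor space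
with index `c` and parameter `m`. -/
def SigmaClassIdx : ℕ → CodeO → ℕ → Set Cantor
  | 0, c, m => {X | (evalO X c m).Dom}
  | n + 1, c, m => {X | ∃ k, X ∉ SigmaClassIdx n c (Nat.pair m k)}

/-! ### Monotone machines -/

/-- A monotone machine: a partial computable, monotone map on finite binary strings. -/
structure MonoMachine where
  f : List Bool →. List Bool
  partrec : Partrec f
  mono : ∀ ⦃σ τ a b : List Bool⦄, σ <+: τ → a ∈ f σ → b ∈ f τ → a <+: b

/-- The oracles `X` such that the output of the monotone machine on `X` is infinite. -/
def MonoINF (M : MonoMachine) : Set Cantor :=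
  {X | ∀ k, ∃ n a, a ∈ M.f (initSeg X n) ∧ k ≤ a.length}

/-- The `k`-th bit of the output `M(X)` of a monotone machine is `b`. -/
def MonoMachine.hasBit (M : MonoMachine) (X : Cantor) (k : ℕ) (b : Bool) : Prop :=
  ∃ n a, a ∈ M.f (initSeg X n) ∧ a[k]? = some b

/-- `U` is a universal monotone machine. -/
def UniversalMono (U : MonoMachine) : Prop :=
  ∃ (M : ℕ → MonoMachine) (σ : ℕ → List Bool),
    Partrec₂ (fun (e : ℕ) (τ : List Bool) => (M e).f τ) ∧
    (∀ V : MonoMachine, ∃ e, (M e).f = V.f) ∧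
    Computable σ ∧ IsPrefixFree (Set.range σ) ∧
    ∀ e τ, U.f (σ e ++ τ) = (M e).f τ

/-! ### Infinitary self-delimiting machines -/

/-- Chaitin's infinitary self-delimiting machines: `f σ n` is the `n`-th approximation
of the output on program `σ` (`none` meaning divergence); the convergence relation is
decidable, approximations are monotone, and machines are self-delimiting. -/
structure InfMachine where
  f : List Bool → ℕ → Option (List Bool)
  computable : Computable₂ f
  mono : ∀ σ m n a, n < m → f σ m = some a → ∃ b, f σ n = some b ∧ b <+: a
  sd : ∀ σ τ n a, f σ n = some a → f (σ ++ τ) n = some a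

/-- `M^∞(σ)↓`: all approximations converge. -/
def InfMachine.domInf (M : InfMachine) (σ : List Bool) : Prop := ∀ n, M.f σ n ≠ none

/-- The domain of `M^∞`. -/
def InfMachine.DOM (M : InfMachine) : Set (List Bool) := {σ | M.domInf σ}

/-- The output `M^∞(σ)` is infinite (a stream). -/
def InfMachine.outInf (M : InfMachine) (σ : List Bool) : Prop :=
  ∀ k, ∃ n a, M.f σ n = some a ∧ k ≤ a.length

/-- `FIN(M^∞)`: programs in the domain with finite output. -/
def InfMachine.FIN (M : InfMachine) : Set (List Bool) := {σ | M.domInf σ ∧ ¬ M.outInf σ}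

/-- `INF(M^∞)`: programs in the domain with infinite output. -/
def InfMachine.INF (M : InfMachine) : Set (List Bool) := {σ | M.domInf σ ∧ M.outInf σ}

/-- The `k`-th bit of the output `M^∞(σ)` is `b`. -/
def InfMachine.hasBit (M : InfMachine) (σ : List Bool) (k : ℕ) (b : Bool) : Prop :=
  ∃ n a, M.f σ n = some a ∧ a[k]? = some b

/-- The domain of the prefix-free machine `M^*`: minimal strings in the domain of `M^∞`. -/
def InfMachine.DOMstar (M : InfMachine) : Set (List Bool) :=
  {σ | M.domInf σ ∧ ∀ τ, τ <+: σ → τ ≠ σ → ¬ M.domInf τ}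

/-- Programs whose output is a stream with a tail of 1s. -/
def InfMachine.COFout (M : InfMachine) : Set (List Bool) :=
  {σ | M.domInf σ ∧ M.outInf σ ∧ ∃ t, ∀ k, t ≤ k → M.hasBit σ k true}

/-- `A^∞(σ) ≃ B^∞(τ)`: both converge or both diverge, with equal outputs. -/
def InfAgree (A : InfMachine) (σ : List Bool) (B : InfMachine) (τ : List Bool) : Prop :=
  (A.domInf σ ↔ B.domInf τ) ∧ (A.domInf σ → ∀ k b, (A.hasBit σ k b ↔ B.hasBit τ k b))

/-- `U` is a universal infinitary self-delimiting machine. -/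
def UniversalInf (U : InfMachine) : Prop :=
  ∃ (M : ℕ → InfMachine) (σ : ℕ → List Bool),
    Computable (fun p : ℕ × List Bool × ℕ => (M p.1).f p.2.1 p.2.2) ∧
    (∀ V : InfMachine, ∃ e, ∀ τ, InfAgree (M e) τ V τ) ∧
    Computable σ ∧ IsPrefixFree (Set.range σ) ∧
    ∀ e τ, InfAgree U (σ e ++ τ) (M e) τ

end RandProb

/-!
On the cylinder `⟦σ_c⟧` a universal machine `U` copies the machine `c`, so the probability that its
domain is cofinite is `2^{-|σ_c|} · μ(COF(c)) + γ`. Both `COF` and `COM` are effectively `Σ⁰₃`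
classes, so `γ`, the measure of such a class outside a cylinder, is `0''`-left-c.e. Every
`0''`-left-c.e. real in `[0, 1]` is the measure of a `Σ⁰₃` class, and every `Σ⁰₃` class is realized
up to measure zero as both `COF(c)` and `COM(c)` for one machine `c`: its domain is the deficiency
set of a `Π⁰₂` guessing procedure, thinned out by a second, independent oracle so that it is either
cofinite or almost surely not computable. Choosing `c` with `μ(COF(c))` random makes `μ(COF(U))`
random, since a test covering `2^{-k} β + γ` turns into one covering `β`.

Conversely, by the Kučera–Slaman argument a random left-c.e. `α` admits approximations by which
`(2^k α - β) / (2^k - 1)` is left-c.e. for every left-c.e. `β` and all large `k`. Hence `α` is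
`2^{-k} β + (1 - 2^{-k}) γ` with `β` the probability of a universal machine and `γ` the probability
of some machine `d`, and it is realized by reading the oracle until its first `1`: `d` is run when
this occurs within the first `k` bits, the universal machine otherwise.
-/

namespace RandProb

/-! ### Primitive recursive functions and predicates -/

attribute [fun_prop] Primrec PrimrecPred Primrec.id Primrec.const Primrec.comp Primrec.fst
  Primrec.snd Primrec.pair Primrec.unpair Primrec.encode Primrec.option_some Primrec.option_isSome
  Primrec.list_length Primrec.list_range PrimrecPred.not PrimrecPred.and PrimrecPred.or

section PrimitiveRecursion

variable {α β γ : Type*} [Primcodable α] [Primcodable β] [Primcodable γ]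

@[fun_prop]
theorem primrec_add {f g : α → ℕ} (hf : Primrec f) (hg : Primrec g) :
    Primrec fun a => f a + g a :=
  Primrec.nat_add.comp hf hg

@[fun_prop]
theorem primrec_sub {f g : α → ℕ} (hf : Primrec f) (hg : Primrec g) :
    Primrec fun a => f a - g a :=
  Primrec.nat_sub.comp hf hg

@[fun_prop]
theorem primrec_mul {f g : α → ℕ} (hf : Primrec f) (hg : Primrec g) :
    Primrec fun a => f a * g a :=
  Primrec.nat_mul.comp hf hg

@[fun_prop]
theorem primrec_div {f g : α → ℕ} (hf : Primrec f) (hg : Primrec g) :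
    Primrec fun a => f a / g a :=
  Primrec.nat_div.comp hf hg

@[fun_prop]
theorem primrec_mod {f g : α → ℕ} (hf : Primrec f) (hg : Primrec g) :
    Primrec fun a => f a % g a :=
  Primrec.nat_mod.comp hf hg

@[fun_prop]
theorem primrec_pow {f g : α → ℕ} (hf : Primrec f) (hg : Primrec g) :
    Primrec fun a => f a ^ g a :=
  (Primrec₂.unpaired'.1 Nat.Primrec.pow).comp hf hg

@[fun_prop]
theorem primrec_natPair {f g : α → ℕ} (hf : Primrec f) (hg : Primrec g) :
    Primrec fun a => Nat.pair (f a) (g a) :=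
  Primrec₂.natPair.comp hf hg

@[fun_prop]
theorem primrec_getElem? {f : α → List β} {g : α → ℕ} (hf : Primrec f) (hg : Primrec g) :
    Primrec fun a => (f a)[g a]? :=
  Primrec.list_getElem?.comp hf hg

@[fun_prop]
theorem primrec_take {f : α → ℕ} {g : α → List β} (hf : Primrec f) (hg : Primrec g) :
    Primrec fun a => (g a).take (f a) :=
  Primrec.list_take.comp hf hg

@[fun_prop]
theorem primrec_append {f g : α → List β} (hf : Primrec f) (hg : Primrec g) :
    Primrec fun a => f a ++ g a :=
  Primrec.list_append.comp hf hg

@[fun_prop]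
theorem primrec_cons {f : α → β} {g : α → List β} (hf : Primrec f) (hg : Primrec g) :
    Primrec fun a => f a :: g a :=
  Primrec.list_cons.comp hf hg

@[fun_prop]
theorem primrec_map {f : α → List β} {g : α → β → γ} (hf : Primrec f)
    (hg : Primrec fun p : α × β => g p.1 p.2) : Primrec fun a => (f a).map (g a) :=
  Primrec.list_map hf hg

@[fun_prop]
theorem primrec_getD {f : α → Option β} {g : α → β} (hf : Primrec f) (hg : Primrec g) :
    Primrec fun a => (f a).getD (g a) :=
  Primrec.option_getD.comp hf hg

@[fun_prop]
theorem primrec_ite {p : α → Prop} [DecidablePred p] {f g : α → β} (hp : PrimrecPred p)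
    (hf : Primrec f) (hg : Primrec g) : Primrec fun a => if p a then f a else g a :=
  Primrec.ite hp hf hg

@[fun_prop]
theorem primrec_decide {p : α → Prop} [DecidablePred p] (hp : PrimrecPred p) :
    Primrec fun a => decide (p a) :=
  hp.decide

@[fun_prop]
theorem primrecPred_lt {f g : α → ℕ} (hf : Primrec f) (hg : Primrec g) :
    PrimrecPred fun a => f a < g a :=
  Primrec.nat_lt.comp hf hg

@[fun_prop]
theorem primrecPred_le {f g : α → ℕ} (hf : Primrec f) (hg : Primrec g) :
    PrimrecPred fun a => f a ≤ g a :=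
  Primrec.nat_le.comp hf hg

@[fun_prop]
theorem primrecPred_eq {f g : α → β} (hf : Primrec f) (hg : Primrec g) :
    PrimrecPred fun a => f a = g a :=
  Primrec.eq.comp hf hg

@[fun_prop]
theorem primrecPred_imp {p q : α → Prop} (hp : PrimrecPred p) (hq : PrimrecPred q) :
    PrimrecPred fun a => p a → q a :=
  (hp.not.or hq).of_eq fun _ => imp_iff_not_or.symm

@[fun_prop]
theorem primrecPred_exists_lt {f : α → ℕ} {p : α → ℕ → Prop} (hf : Primrec f)
    (hp : PrimrecPred fun x : α × ℕ => p x.1 x.2) : PrimrecPred fun a => ∃ n < f a, p a n :=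
  (PrimrecRel.comp (PrimrecRel.exists_mem_list (R := fun n a => p a n)
    (hp.comp (Primrec.snd.pair Primrec.fst))) (Primrec.list_range.comp hf) Primrec.id).of_eq
    (by simp)

@[fun_prop]
theorem primrecPred_forall_lt {f : α → ℕ} {p : α → ℕ → Prop} (hf : Primrec f)
    (hp : PrimrecPred fun x : α × ℕ => p x.1 x.2) : PrimrecPred fun a => ∀ n < f a, p a n :=
  (PrimrecRel.comp (PrimrecRel.forall_mem_list (R := fun n a => p a n)
    (hp.comp (Primrec.snd.pair Primrec.fst))) (Primrec.list_range.comp hf) Primrec.id).of_eq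
    (by simp)

@[fun_prop]
theorem primrec_count {f : α → ℕ} {p : α → ℕ → Prop} [∀ a, DecidablePred (p a)] (hf : Primrec f)
    (hp : PrimrecPred fun x : α × ℕ => p x.1 x.2) : Primrec fun a => Nat.count (p a) (f a) := by
  have hfilter := PrimrecRel.listFilter (R := fun n a => p a n)
    (hp.comp (Primrec.snd.pair Primrec.fst))
  refine (Primrec.list_length.comp (hfilter.comp (Primrec.list_range.comp hf) Primrec.id)).of_eq
    fun a => ?_
  simp [Nat.count, List.countP_eq_length_filter]

end PrimitiveRecursion

/-! ### Exhaustion of partial values -/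

/-- The partial values `q i` increase to `p`: the form in which the use principle is proved. -/
structure Exhausts {α : Type*} (q : ℕ → Part α) (p : Part α) : Prop where
  monotone : Monotone q
  mem_iff : ∀ v, v ∈ p ↔ ∃ i, v ∈ q i

namespace Exhausts

variable {α β : Type*}

theorem const (p : Part α) : Exhausts (fun _ => p) p :=
  ⟨monotone_const, fun _ => (exists_const ℕ).symm⟩

theorem bind {q : ℕ → Part α} {p : Part α} {f : ℕ → α → Part β} {g : α → Part β}
    (hq : Exhausts q p) (hf : ∀ a, Exhausts (fun i => f i a) (g a)) :
    Exhausts (fun i => (q i).bind (f i)) (p.bind g) := by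
  have mono : Monotone fun i => (q i).bind (f i) := by
    intro i j hij v hv
    obtain ⟨a, ha, hv⟩ := Part.mem_bind_iff.1 hv
    exact Part.mem_bind (hq.monotone hij a ha) ((hf a).monotone hij v hv)
  refine ⟨mono, fun v => ⟨fun hv => ?_, fun ⟨i, hv⟩ => ?_⟩⟩
  · obtain ⟨a, ha, hv⟩ := Part.mem_bind_iff.1 hv
    obtain ⟨i, hi⟩ := (hq.mem_iff a).1 ha
    obtain ⟨j, hj⟩ := ((hf a).mem_iff v).1 hv
    exact ⟨max i j, Part.mem_bind (hq.monotone (le_max_left i j) a hi)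
      ((hf a).monotone (le_max_right i j) v hj)⟩
  · obtain ⟨a, ha, hv⟩ := Part.mem_bind_iff.1 hv
    exact Part.mem_bind ((hq.mem_iff a).2 ⟨i, ha⟩) (((hf a).mem_iff v).2 ⟨i, hv⟩)

theorem map (f : α → β) {q : ℕ → Part α} {p : Part α} (hq : Exhausts q p) :
    Exhausts (fun i => (q i).map f) (p.map f) := by
  simpa only [← Part.bind_some_eq_map] using hq.bind fun a => const (Part.some (f a))

theorem rfind {q : ℕ → ℕ → Part Bool} {p : ℕ → Part Bool}
    (hq : ∀ n, Exhausts (fun i => q i n) (p n)) :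
    Exhausts (fun i => Nat.rfind (q i)) (Nat.rfind p) := by
  have mono : Monotone fun i => Nat.rfind (q i) := fun i j hij v hv =>
    have hv := Nat.mem_rfind.1 hv
    Nat.mem_rfind.2 ⟨(hq v).monotone hij _ hv.1, fun hm => (hq _).monotone hij _ (hv.2 hm)⟩
  refine ⟨mono, fun v => ⟨fun hv => ?_, fun ⟨i, hv⟩ => ?_⟩⟩
  · obtain ⟨hv, hlt⟩ := Nat.mem_rfind.1 hv
    obtain ⟨i, hi⟩ := ((hq v).mem_iff _).1 hv
    have hJ : ∀ m, ∃ j, m < v → false ∈ q j m := fun m => by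
      by_cases hm : m < v
      · exact (((hq m).mem_iff _).1 (hlt hm)).imp fun j hj _ => hj
      · exact ⟨0, fun h => absurd h hm⟩
    choose J hJ using hJ
    refine ⟨max i ((Finset.range v).sup J), Nat.mem_rfind.2
      ⟨(hq v).monotone (le_max_left _ _) _ hi, fun {m} hm => ?_⟩⟩
    have hJm : J m ≤ (Finset.range v).sup J := Finset.le_sup (Finset.mem_range.2 hm)
    exact (hq m).monotone (hJm.trans (le_max_right _ _)) _ (hJ m hm)
  · obtain ⟨hv, hlt⟩ := Nat.mem_rfind.1 hv
    exact Nat.mem_rfind.2 ⟨((hq v).mem_iff _).2 ⟨i, hv⟩, fun hm => ((hq _).mem_iff _).2 ⟨i, hlt hm⟩⟩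

end Exhausts

/-! ### Initial segments of oracles -/

/-- The initial segment of length `k` of the oracle `O`, as a list. -/
def oracleSeg (O : ℕ → ℕ) (k : ℕ) : List ℕ := (List.range k).map O

@[simp]
theorem length_oracleSeg (O : ℕ → ℕ) (k : ℕ) : (oracleSeg O k).length = k := by
  simp [oracleSeg]

theorem getElem?_oracleSeg (O : ℕ → ℕ) (k n : ℕ) :
    (oracleSeg O k)[n]? = if n < k then some (O n) else none := by
  unfold oracleSeg
  split_ifs with h <;> simp [h]

theorem take_oracleSeg (O : ℕ → ℕ) (j k : ℕ) :
    (oracleSeg O k).take j = oracleSeg O (min j k) := by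
  rw [oracleSeg, ← List.map_take, List.take_range, oracleSeg]

theorem oracleSeg_succ (O : ℕ → ℕ) (k : ℕ) : oracleSeg O (k + 1) = oracleSeg O k ++ [O k] := by
  simp [oracleSeg, List.range_succ]

theorem primrec_oracleSeg_const (a : ℕ) : Primrec (oracleSeg fun _ => a) := by
  unfold oracleSeg
  fun_prop

/-! ### Translating oracle codes into codes reading a finite oracle segment -/

open Nat.Partrec (Code)

@[fun_prop]
theorem primrec_ofNat_list {α : Type*} [Primcodable α] {f : α → ℕ} (hf : Primrec f) :
    Primrec fun a => Denumerable.ofNat (List ℕ) (f a) :=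
  (Primrec.ofNat _).comp hf

theorem exists_lookupCode : ∃ c : Code, ∀ (L : List ℕ) (n : ℕ),
    c.eval (Nat.pair (Encodable.encode L) n) = L[n]? := by
  have h : Partrec fun m : ℕ => ((Denumerable.ofNat (List ℕ) m.unpair.1)[m.unpair.2]? : Part ℕ) :=
    Computable.ofOption (Primrec.to_comp (by fun_prop))
  obtain ⟨c, hc⟩ := Code.exists_code.1 (Partrec.nat_iff.1 h)
  exact ⟨c, fun L n => by simp [hc]⟩

/-- A code which looks up an entry of a list, diverging when the index is out of range. -/
noncomputable def lookupCode : Code := exists_lookupCode.choose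

/-- A code for `⟨⟨l, x⟩, z⟩ ↦ ⟨l, ⟨x, z⟩⟩`. -/
def assocCode : Code := .pair (.comp .left .left) (.pair (.comp .right .left) .right)

/-- A code for `⟨l, ⟨x, z⟩⟩ ↦ ⟨⟨l, x⟩, z⟩`. -/
def unassocCode : Code := .pair (.pair .left (.comp .left .right)) (.comp .right .right)

theorem codeComp_eval (a b : Code) (n : ℕ) :
    (a.comp b).eval n = (b.eval n).bind fun x => a.eval x := rfl

theorem codePair_eval (a b : Code) (n : ℕ) :
    (a.pair b).eval n = (a.eval n).bind fun x => (b.eval n).map (Nat.pair x) := by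
  simp [Code.eval, Seq.seq]

theorem codeSucc_eval (n : ℕ) : Code.succ.eval n = Part.some (n + 1) := rfl

theorem codeLeft_eval (n : ℕ) : Code.left.eval n = Part.some n.unpair.1 := rfl

theorem codeRight_eval (n : ℕ) : Code.right.eval n = Part.some n.unpair.2 := rfl

theorem codeRfind'_eval (a : Code) (n : ℕ) :
    a.rfind'.eval n = (Nat.rfind fun k => (a.eval (Nat.pair n.unpair.1 (k + n.unpair.2))).map
      fun m => decide (m = 0)).map (· + n.unpair.2) := rfl

theorem assocCode_eval (l x z : ℕ) :
    assocCode.eval (Nat.pair (Nat.pair l x) z) = Part.some (Nat.pair l (Nat.pair x z)) := by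
  simp [assocCode, codeComp_eval, codePair_eval, codeLeft_eval, codeRight_eval]

theorem unassocCode_eval (l n : ℕ) :
    unassocCode.eval (Nat.pair l n) = Part.some (Nat.pair (Nat.pair l n.unpair.1) n.unpair.2) := by
  simp [unassocCode, codeComp_eval, codePair_eval, codeLeft_eval, codeRight_eval]

/-- The ordinary code which on input `⟨L, n⟩` runs the given oracle code on `n`, answering oracle
queries from the list `L` and diverging on queries beyond its end. -/
noncomputable def translate : CodeO → Code
  | .zero => .zero
  | .succ => .comp .succ .right
  | .left => .comp .left .right
  | .right => .comp .right .right
  | .oracle => lookupCode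
  | .pair a b => .pair (translate a) (translate b)
  | .comp a b => .comp (translate a) (.pair .left (translate b))
  | .prec a b => .comp (.prec (translate a) (.comp (translate b) assocCode)) unassocCode
  | .rfind' a => .comp (.rfind' (.comp (translate a) assocCode)) unassocCode

theorem translate_comp_eval (a b : CodeO) (l n : ℕ) :
    (translate (.comp a b)).eval (Nat.pair l n) =
      ((translate b).eval (Nat.pair l n)).bind fun x => (translate a).eval (Nat.pair l x) := by
  simp [translate, codeComp_eval, codePair_eval, codeLeft_eval, Part.bind_map]

theorem translate_prec_eval (a b : CodeO) (l n : ℕ) :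
    (translate (.prec a b)).eval (Nat.pair l n) =
      n.unpair.2.rec ((translate a).eval (Nat.pair l n.unpair.1)) fun y ih =>
        ih.bind fun i => (translate b).eval (Nat.pair l (Nat.pair n.unpair.1 (Nat.pair y i))) := by
  have h : (translate (.prec a b)).eval (Nat.pair l n) =
      ((translate a).prec ((translate b).comp assocCode)).eval
        (Nat.pair (Nat.pair l n.unpair.1) n.unpair.2) := by
    simp [translate, codeComp_eval, unassocCode_eval]
  rw [h]
  generalize n.unpair.2 = m
  induction m with
  | zero => simp
  | succ m ih =>
    rw [Code.eval_prec_succ, ih]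
    simp [codeComp_eval, assocCode_eval, Part.bind_eq_bind]

theorem translate_rfind'_eval (a : CodeO) (l n : ℕ) :
    (translate (.rfind' a)).eval (Nat.pair l n) =
      (Nat.rfind fun k => ((translate a).eval (Nat.pair l (Nat.pair n.unpair.1
        (k + n.unpair.2)))).map fun m => decide (m = 0)).map (· + n.unpair.2) := by
  simp [translate, codeComp_eval, codeRfind'_eval, unassocCode_eval, assocCode_eval]

/-- The use principle: a computation with oracle `O` only consults a finite segment of `O`. -/
theorem exhausts_translate (O : ℕ → ℕ) (c : CodeO) (n : ℕ) :
    Exhausts (fun k => (translate c).eval (Nat.pair (Encodable.encode (oracleSeg O k)) n))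
      (c.eval O n) := by
  induction c generalizing n with
  | zero => exact .const _
  | succ =>
    simpa [translate, codeComp_eval, codeRight_eval, codeSucc_eval] using .const _
  | left =>
    simpa [translate, codeComp_eval, codeRight_eval, codeLeft_eval] using .const _
  | right => simpa [translate, codeComp_eval, codeRight_eval] using .const _
  | oracle =>
    simp only [translate, lookupCode, exists_lookupCode.choose_spec, getElem?_oracleSeg]
    refine ⟨fun i j hij v => ?_, fun v => ?_⟩
    · simp only [Part.mem_coe, Option.mem_def, Option.ite_none_right_eq_some]
      exact And.imp_left hij.trans_lt'
    · simp only [CodeO.eval, PFun.coe_val, Part.mem_some_iff, Part.mem_coe, Option.mem_def,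
        Option.ite_none_right_eq_some, Option.some.injEq]
      exact ⟨fun h => ⟨n + 1, n.lt_succ_self, h.symm⟩, fun ⟨_, _, h⟩ => h.symm⟩
  | pair a b iha ihb =>
    simpa [translate, Code.eval, CodeO.eval, Seq.seq] using
      (iha n).bind fun x => (ihb n).map (Nat.pair x)
  | comp a b iha ihb =>
    simp only [translate_comp_eval]
    exact (ihb n).bind iha
  | prec a b iha ihb =>
    simp only [translate_prec_eval, CodeO.eval, Nat.unpaired]
    induction n.unpair.2 with
    | zero => exact iha _
    | succ m ih => exact ih.bind fun i => ihb _
  | rfind' a iha =>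
    simp only [translate_rfind'_eval]
    exact (Exhausts.rfind fun k => (iha _).map _).map _

/-! ### Effectivity of the translation -/

theorem CodeO.exists_encode_eq (n : ℕ) : ∃ c : CodeO, c.encode = n := by
  induction n using Nat.strong_induction_on with
  | _ n ih =>
    by_cases h5 : n < 5
    · interval_cases n
      exacts [⟨.zero, rfl⟩, ⟨.succ, rfl⟩, ⟨.left, rfl⟩, ⟨.right, rfl⟩, ⟨.oracle, rfl⟩]
    · have hp := Nat.pair_unpair ((n - 5) / 4)
      have hl := Nat.unpair_left_le ((n - 5) / 4)
      have hr := Nat.unpair_right_le ((n - 5) / 4)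
      obtain ⟨a, ha⟩ := ih ((n - 5) / 4).unpair.1 (by omega)
      obtain ⟨b, hb⟩ := ih ((n - 5) / 4).unpair.2 (by omega)
      obtain ⟨d, hd⟩ := ih ((n - 5) / 4) (by omega)
      obtain h | h | h | h : (n - 5) % 4 = 0 ∨ (n - 5) % 4 = 1 ∨ (n - 5) % 4 = 2 ∨
        (n - 5) % 4 = 3 := by omega
      · exact ⟨.pair a b, by simp only [CodeO.encode, ha, hb, hp]; omega⟩
      · exact ⟨.prec a b, by simp only [CodeO.encode, ha, hb, hp]; omega⟩
      · exact ⟨.comp a b, by simp only [CodeO.encode, ha, hb, hp]; omega⟩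
      · exact ⟨.rfind' d, by simp only [CodeO.encode, hd]; omega⟩

section

variable {α : Type*} [Primcodable α]

@[fun_prop]
theorem primrec_codePair {f g : α → Code} (hf : Primrec f) (hg : Primrec g) :
    Primrec fun a => Code.pair (f a) (g a) :=
  Code.primrec₂_pair.comp hf hg

@[fun_prop]
theorem primrec_codeComp {f g : α → Code} (hf : Primrec f) (hg : Primrec g) :
    Primrec fun a => Code.comp (f a) (g a) :=
  Code.primrec₂_comp.comp hf hg

@[fun_prop]
theorem primrec_codePrec {f g : α → Code} (hf : Primrec f) (hg : Primrec g) :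
    Primrec fun a => Code.prec (f a) (g a) :=
  Code.primrec₂_prec.comp hf hg

@[fun_prop]
theorem primrec_codeRfind' {f : α → Code} (hf : Primrec f) :
    Primrec fun a => Code.rfind' (f a) :=
  Code.primrec_rfind'.comp hf

end

/-- One step of the course-of-values recursion computing `translate` on code numbers: `L` lists
the translations of the codes numbered below `L.length`. -/
noncomputable def translateStep (L : List Code) : Code :=
  let m := (L.length - 5) / 4
  let a := L[m.unpair.1]?.getD .zero
  let b := L[m.unpair.2]?.getD .zero
  if L.length = 0 then .zero
  else if L.length = 1 then .comp .succ .right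
  else if L.length = 2 then .comp .left .right
  else if L.length = 3 then .comp .right .right
  else if L.length = 4 then lookupCode
  else if (L.length - 5) % 4 = 0 then .pair a b
  else if (L.length - 5) % 4 = 1 then .comp (.prec a (.comp b assocCode)) unassocCode
  else if (L.length - 5) % 4 = 2 then .comp a (.pair .left b)
  else .comp (.rfind' (.comp (L[m]?.getD .zero) assocCode)) unassocCode

theorem primrec_translateStep : Primrec translateStep := by
  unfold translateStep
  fun_prop

/-- `translate` as a function of the number of the oracle code. -/
noncomputable def translateNum (n : ℕ) : Code :=
  translateStep ((List.range n).attach.map fun i => translateNum i.1)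
termination_by n
decreasing_by exact List.mem_range.1 i.2

theorem translateNum_eq (n : ℕ) :
    translateNum n = translateStep ((List.range n).map translateNum) := by
  rw [translateNum]
  exact congrArg translateStep List.attach_map_val

theorem primrec_translateNum : Primrec translateNum := by
  have h := Primrec.nat_strong_rec (fun (_ : Unit) n => translateNum n)
    (g := fun _ L => some (translateStep L))
    (Primrec.option_some.comp (primrec_translateStep.comp Primrec.snd))
    fun _ n => congrArg some (translateNum_eq n).symm
  exact (h.comp (Primrec.const ()) Primrec.id : Primrec fun n : ℕ => translateNum n)

theorem getD_map_translateNum {n i : ℕ} (h : i < n) :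
    ((List.range n).map translateNum)[i]?.getD .zero = translateNum i := by
  simp [h]

theorem translateNum_encode (c : CodeO) : translateNum c.encode = translate c := by
  induction c with
  | pair a b iha ihb | comp a b iha ihb | prec a b iha ihb =>
    have ha := Nat.left_le_pair a.encode b.encode
    have hb := Nat.right_le_pair a.encode b.encode
    rw [translateNum_eq, translateStep]
    simp only [CodeO.encode, List.length_map, List.length_range]
    first
    | rw [show (2 * (2 * Nat.pair a.encode b.encode) + 5 - 5) / 4 = Nat.pair a.encode b.encode by
        omega]
    | rw [show (2 * (2 * Nat.pair a.encode b.encode + 1) + 5 - 5) / 4 =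
        Nat.pair a.encode b.encode by omega]
    | rw [show (2 * (2 * Nat.pair a.encode b.encode) + 6 - 5) / 4 = Nat.pair a.encode b.encode by
        omega]
    simp only [Nat.unpair_pair]
    rw [getD_map_translateNum (by omega), getD_map_translateNum (by omega), iha, ihb, translate]
    repeat' first | rw [if_neg (by omega)] | rw [if_pos (by omega)]
  | rfind' a ih =>
    rw [translateNum_eq, translateStep]
    simp only [CodeO.encode, List.length_map, List.length_range]
    rw [show (2 * (2 * a.encode + 1) + 6 - 5) / 4 = a.encode by omega,
      getD_map_translateNum (i := a.encode) (by omega), ih, translate]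
    repeat rw [if_neg (by omega)]
  | _ => simp [translateNum_eq, translateStep, CodeO.encode, translate]

open Nat.Partrec (Code)

/-! ### Halting in finitely many stages -/

@[fun_prop]
theorem primrec_evaln {α : Type*} [Primcodable α] {k : α → ℕ} {c : α → Code} {n : α → ℕ}
    (hk : Primrec k) (hc : Primrec c) (hn : Primrec n) :
    Primrec fun a => Code.evaln (k a) (c a) (n a) :=
  Code.primrec_evaln.comp ((hk.pair hc).pair hn)

/-- Evaluation of the oracle code with number `e` on a finite oracle segment `L`. The length of `L`
codes the pair of the length of the part of `L` in use and the bound on the running time. -/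
noncomputable def stageEval (e : ℕ) (L : List ℕ) (n : ℕ) : Option ℕ :=
  Code.evaln L.length.unpair.2 (translateNum e)
    (Nat.pair (Encodable.encode (L.take L.length.unpair.1)) n)

@[fun_prop]
theorem primrec_stageEval {α : Type*} [Primcodable α] {e : α → ℕ} {L : α → List ℕ} {n : α → ℕ}
    (he : Primrec e) (hL : Primrec L) (hn : Primrec n) :
    Primrec fun a => stageEval (e a) (L a) (n a) := by
  have htranslate : Primrec fun a => translateNum (e a) := primrec_translateNum.comp he
  unfold stageEval
  fun_prop

theorem mem_eval_iff_stageEval {O : ℕ → ℕ} {c : CodeO} {n v : ℕ} :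
    v ∈ c.eval O n ↔ ∃ k, stageEval c.encode (oracleSeg O k) n = some v := by
  have stage : ∀ j s, stageEval c.encode (oracleSeg O (Nat.pair j s)) n =
      Code.evaln s (translate c) (Nat.pair (Encodable.encode (oracleSeg O j)) n) := fun j s => by
    simp [stageEval, take_oracleSeg, translateNum_encode, min_eq_left (Nat.left_le_pair j s)]
  rw [(exhausts_translate O c n).mem_iff]
  constructor
  · rintro ⟨j, h⟩
    obtain ⟨s, hs⟩ := Code.evaln_complete.1 h
    exact ⟨Nat.pair j s, (stage j s).trans hs⟩
  · rintro ⟨k, h⟩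
    rw [← Nat.pair_unpair k, stage] at h
    exact ⟨k.unpair.1, Code.evaln_sound h⟩

/-- The oracle code with number `e` halts on `n` at some stage permitted by the segment `L`. -/
def HaltsBy (e : ℕ) (L : List ℕ) (n : ℕ) : Prop :=
  ∃ j < L.length + 1, (stageEval e (L.take j) n).isSome = true

@[fun_prop]
theorem primrecPred_haltsBy {α : Type*} [Primcodable α] {e : α → ℕ} {L : α → List ℕ} {n : α → ℕ}
    (he : Primrec e) (hL : Primrec L) (hn : Primrec n) :
    PrimrecPred fun a => HaltsBy (e a) (L a) (n a) := by
  unfold HaltsBy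
  fun_prop

theorem haltsBy_oracleSeg {e k n : ℕ} {O : ℕ → ℕ} :
    HaltsBy e (oracleSeg O k) n ↔ ∃ j ≤ k, (stageEval e (oracleSeg O j) n).isSome = true := by
  simp only [HaltsBy, length_oracleSeg, take_oracleSeg, Nat.lt_succ_iff]
  exact exists_congr fun j => and_congr_right fun hj => by rw [min_eq_left hj]

theorem HaltsBy.mono {e i j n : ℕ} {O : ℕ → ℕ} (h : HaltsBy e (oracleSeg O i) n) (hij : i ≤ j) :
    HaltsBy e (oracleSeg O j) n := by
  rw [haltsBy_oracleSeg] at *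
  exact h.imp fun k => And.imp_left (le_trans · hij)

theorem dom_iff_haltsBy {O : ℕ → ℕ} {c : CodeO} {n : ℕ} :
    (c.eval O n).Dom ↔ ∃ k, HaltsBy c.encode (oracleSeg O k) n := by
  simp only [Part.dom_iff_mem, mem_eval_iff_stageEval, haltsBy_oracleSeg,
    Option.isSome_iff_exists]
  exact ⟨fun ⟨v, k, h⟩ => ⟨k, k, le_rfl, v, h⟩, fun ⟨_, k, _, v, h⟩ => ⟨v, k, h⟩⟩

/-! ### Oracle codes by unbounded search -/

namespace CodeO

theorem comp_eval (O : ℕ → ℕ) (a b : CodeO) (n : ℕ) :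
    (a.comp b).eval O n = (b.eval O n).bind fun x => a.eval O x := rfl

theorem pair_eval (O : ℕ → ℕ) (a b : CodeO) (n : ℕ) :
    (a.pair b).eval O n = (a.eval O n).bind fun x => (b.eval O n).map (Nat.pair x) := by
  simp [eval, Seq.seq]

theorem zero_eval (O : ℕ → ℕ) (n : ℕ) : zero.eval O n = Part.some 0 := rfl

theorem succ_eval (O : ℕ → ℕ) (n : ℕ) : succ.eval O n = Part.some (n + 1) := rfl

theorem left_eval (O : ℕ → ℕ) (n : ℕ) : left.eval O n = Part.some n.unpair.1 := rfl

theorem right_eval (O : ℕ → ℕ) (n : ℕ) : right.eval O n = Part.some n.unpair.2 := rfl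

theorem oracle_eval (O : ℕ → ℕ) (n : ℕ) : oracle.eval O n = Part.some (O n) := rfl

theorem rfind'_eval (O : ℕ → ℕ) (a : CodeO) (n : ℕ) :
    a.rfind'.eval O n = (Nat.rfind fun k => (a.eval O (Nat.pair n.unpair.1 (k + n.unpair.2))).map
      fun m => decide (m = 0)).map (· + n.unpair.2) := by
  simp [eval, Nat.unpaired]

/-- An ordinary code, regarded as an oracle code which makes no queries. -/
def ofCode : Code → CodeO
  | .zero => .zero
  | .succ => .succ
  | .left => .left
  | .right => .right
  | .pair a b => .pair (ofCode a) (ofCode b)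
  | .comp a b => .comp (ofCode a) (ofCode b)
  | .prec a b => .prec (ofCode a) (ofCode b)
  | .rfind' a => .rfind' (ofCode a)

theorem ofCode_eval (O : ℕ → ℕ) (c : Code) : (ofCode c).eval O = c.eval := by
  induction c with
  | pair a b iha ihb | comp a b iha ihb | prec a b iha ihb =>
    simp only [ofCode, eval, Code.eval, iha, ihb]
    rfl
  | rfind' a iha =>
    simp only [ofCode, eval, Code.eval, iha]
    rfl
  | _ => rfl

theorem exists_eval_eq_of_primrec {f : ℕ → ℕ} (hf : Primrec f) :
    ∃ c : CodeO, ∀ O n, c.eval O n = Part.some (f n) := by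
  obtain ⟨c, hc⟩ := Code.exists_code.1 (Partrec.nat_iff.1 hf.to_comp.partrec)
  exact ⟨ofCode c, fun O n => by rw [ofCode_eval, hc]; rfl⟩

theorem exists_eval_eq_oracleSeg :
    ∃ c : CodeO, ∀ O n, c.eval O n = Part.some (Encodable.encode (oracleSeg O n.unpair.2)) := by
  obtain ⟨z, hz⟩ := exists_eval_eq_of_primrec
    (f := fun _ => Encodable.encode ([] : List ℕ)) (by fun_prop)
  obtain ⟨F, hF⟩ := exists_eval_eq_of_primrec (f := fun m => Encodable.encode
    (Denumerable.ofNat (List ℕ) m.unpair.1 ++ [m.unpair.2])) (by fun_prop)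
  refine ⟨.prec z (.comp F (.pair (.comp .right .right) (.comp .oracle (.comp .left .right)))),
    fun O n => ?_⟩
  simp only [eval.eq_8, Nat.unpaired]
  induction n.unpair.2 with
  | zero => simp [hz, oracleSeg]
  | succ m ih =>
    change Part.bind _ _ = _
    rw [ih]
    simp [comp_eval, pair_eval, hF, left_eval, right_eval, oracle_eval, oracleSeg_succ]

theorem exists_eval_eq_rfindOpt {g : List ℕ → ℕ → Option ℕ}
    (hg : Primrec fun p : List ℕ × ℕ => g p.1 p.2) :
    ∃ c : CodeO, ∀ O n, c.eval O n = Nat.rfindOpt fun k => g (oracleSeg O k) n := by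
  obtain ⟨p, hp⟩ := exists_eval_eq_oracleSeg
  have : Primrec fun m : ℕ => g (Denumerable.ofNat (List ℕ) m.unpair.1) m.unpair.2 :=
    hg.comp (g := fun m : ℕ => (Denumerable.ofNat (List ℕ) m.unpair.1, m.unpair.2)) (by fun_prop)
  obtain ⟨T, hT⟩ := exists_eval_eq_of_primrec (f := fun m : ℕ =>
    if (g (Denumerable.ofNat (List ℕ) m.unpair.1) m.unpair.2).isSome = true then 0 else 1)
    (by fun_prop)
  obtain ⟨V, hV⟩ := exists_eval_eq_of_primrec (f := fun m : ℕ =>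
    (g (Denumerable.ofNat (List ℕ) m.unpair.1) m.unpair.2).getD 0) (by fun_prop)
  let search : CodeO := .comp (.rfind' (.comp T (.pair p .left))) (.pair (.pair .left .right) .zero)
  have hsearch : ∀ O n, search.eval O n =
      Nat.rfind fun k => Part.some (g (oracleSeg O k) n).isSome := fun O n => by
    have htest : ∀ o : Option ℕ, decide ((if o.isSome = true then 0 else 1) = 0) = o.isSome :=
      fun o => by cases o <;> rfl
    simp only [search, comp_eval, pair_eval, rfind'_eval, left_eval, right_eval, zero_eval, hp, hT,
      Part.bind_some, Part.map_some, Nat.unpair_pair, Nat.pair_unpair, Denumerable.ofNat_encode,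
      add_zero, htest]
    exact Part.map_id' (fun _ => rfl) _
  refine ⟨.comp V (.comp (.pair p .left) (.pair (.pair .left .right) search)), fun O n => ?_⟩
  refine Part.ext fun v => ?_
  have hvalue : ∀ o : Option ℕ, o.isSome = true → (v = o.getD 0 ↔ o = some v) := by
    rintro (_ | w) h
    · simp at h
    · simp [eq_comm]
  simp only [Nat.rfindOpt, Part.mem_bind_iff, comp_eval, pair_eval, hsearch, left_eval, right_eval,
    hp, hV, Part.bind_some, Part.map_some, Part.mem_map_iff, Part.mem_some_iff, Part.mem_coe]
  simp only [↓existsAndEq, and_true, Nat.unpair_pair, Nat.pair_unpair, Denumerable.ofNat_encode]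
  refine exists_congr fun k => and_congr_right fun hk => hvalue _ ?_
  exact (Part.mem_some_iff.1 (Nat.rfind_spec hk)).symm

/-- A code for the constant function with value `n`. -/
def const : ℕ → CodeO
  | 0 => .zero
  | n + 1 => .comp .succ (const n)

theorem const_eval (O : ℕ → ℕ) (m n : ℕ) : (const m).eval O n = Part.some m := by
  induction m with
  | zero => rfl
  | succ m ih => simp [const, comp_eval, ih, succ_eval]

@[fun_prop]
theorem primrec_encode_const {α : Type*} [Primcodable α] {f : α → ℕ} (hf : Primrec f) :
    Primrec fun a => (const (f a)).encode := by
  have h : Primrec fun n : ℕ => (const n).encode := by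
    refine (Primrec.nat_rec₁ 0 (f := fun _ i => 2 * (2 * Nat.pair 1 i + 1) + 5) ?_).of_eq
      fun n => ?_
    · exact (by fun_prop : Primrec fun p : ℕ × ℕ => 2 * (2 * Nat.pair 1 p.2 + 1) + 5)
    · induction n with
      | zero => rfl
      | succ n ih => simp only [const, encode, ← ih]
  exact h.comp hf

end CodeO

/-! ### Computably enumerable sets and the jump -/

theorem ceIn_setOf_exists {O : ℕ → ℕ} {P : ℕ → List ℕ → ℕ → Prop}
    (hP : PrimrecPred fun x : ℕ × List ℕ × ℕ => P x.1 x.2.1 x.2.2) :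
    CeIn O {m | ∃ a k, P a (oracleSeg O k) m} := by
  have hP' : PrimrecPred fun x : List ℕ × ℕ =>
      P x.1.length.unpair.1 (x.1.take x.1.length.unpair.2) x.2 :=
    hP.comp (f := fun x : List ℕ × ℕ =>
      (x.1.length.unpair.1, x.1.take x.1.length.unpair.2, x.2)) (by fun_prop)
  obtain ⟨c, hc⟩ := CodeO.exists_eval_eq_rfindOpt (g := fun L n =>
    if P L.length.unpair.1 (L.take L.length.unpair.2) n then some 0 else none)
    (Primrec.ite hP' (by fun_prop) (by fun_prop))
  refine ⟨c, Set.ext fun m => ?_⟩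
  simp only [Set.mem_ofPred_eq, hc, Nat.rfindOpt_dom, Option.mem_def,
    Option.ite_none_right_eq_some, length_oracleSeg, take_oracleSeg]
  constructor
  · rintro ⟨a, k, h⟩
    refine ⟨Nat.pair a k, 0, ?_, rfl⟩
    rwa [Nat.unpair_pair, min_eq_left (Nat.right_le_pair a k)]
  · rintro ⟨k, v, h, -⟩
    exact ⟨_, _, h⟩

theorem jump_eq_zero_or_one (O : ℕ → ℕ) (e : ℕ) : jump O e = 0 ∨ jump O e = 1 := by
  unfold jump
  split_ifs <;> simp

theorem jump_eq_one_iff {O : ℕ → ℕ} {e : ℕ} :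
    jump O e = 1 ↔ ∃ k, HaltsBy e (oracleSeg O k) e := by
  have h : jump O e = 1 ↔ ∃ c : CodeO, c.encode = e ∧ (c.eval O e).Dom := by
    unfold jump
    split_ifs with h <;> simp [h]
  simp only [h, dom_iff_haltsBy]
  constructor
  · rintro ⟨c, rfl, hc⟩
    exact hc
  · intro he
    obtain ⟨c, rfl⟩ := CodeO.exists_encode_eq e
    exact ⟨c, rfl, he⟩

theorem CeIn.exists_mem_iff_jump_eq_one {O : ℕ → ℕ} {S : Set ℕ} (hS : CeIn O S) :
    ∃ s : ℕ → ℕ, Primrec s ∧ ∀ m, m ∈ S ↔ jump O (s m) = 1 := by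
  obtain ⟨c, rfl⟩ := hS
  refine ⟨fun m => (CodeO.comp c (.const m)).encode, ?_, fun m => ?_⟩
  · simp only [CodeO.encode]
    fun_prop
  · rw [jump_eq_one_iff, ← dom_iff_haltsBy]
    simp [CodeO.comp_eval, CodeO.const_eval]

theorem CeIn.jump_setOf_exists_notMem {O : ℕ → ℕ} {S : Set ℕ} (hS : CeIn O S) :
    CeIn (jump O) {m | ∃ a, Nat.pair m a ∉ S} := by
  obtain ⟨s, hs, h⟩ := hS.exists_mem_iff_jump_eq_one
  convert ceIn_setOf_exists (O := jump O) (P := fun a L m => L[s (Nat.pair m a)]? = some 0)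
    (by fun_prop) using 1
  ext m
  refine exists_congr fun a => ?_
  rw [h]
  rcases jump_eq_zero_or_one O (s (Nat.pair m a)) with h | h
  · simpa [getElem?_oracleSeg, h] using exists_gt _
  · simp [getElem?_oracleSeg, h]

/-- The list `τ` passes for a segment of the jump of the oracle approximated by `L`: its entries are
`0` or `1`, those claiming convergence are confirmed by stage `t`, and those claiming divergence
are not refuted by `L`. -/
def CertifiesJump (L τ : List ℕ) (t : ℕ) : Prop :=
  ∀ i < τ.length, (τ[i]? = some 1 ∧ (t ≤ L.length → HaltsBy i (L.take t) i)) ∨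
    (τ[i]? = some 0 ∧ ¬ HaltsBy i L i)

theorem exists_certifiesJump (O : ℕ → ℕ) (j : ℕ) :
    ∃ t, ∀ k, CertifiesJump (oracleSeg O k) (oracleSeg (jump O) j) t := by
  have hstage : ∀ i, ∃ k, jump O i = 1 → HaltsBy i (oracleSeg O k) i := fun i => by
    by_cases hi : jump O i = 1
    · exact (jump_eq_one_iff.1 hi).imp fun k hk _ => hk
    · exact ⟨0, fun h => absurd h hi⟩
  choose K hK using hstage
  refine ⟨(Finset.range j).sup K, fun k i hi => ?_⟩
  rw [length_oracleSeg] at hi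
  rw [getElem?_oracleSeg, if_pos hi, length_oracleSeg, take_oracleSeg]
  rcases jump_eq_zero_or_one O i with h | h
  · exact .inr ⟨by rw [h], fun hk => by simp [jump_eq_one_iff.2 ⟨k, hk⟩] at h⟩
  · refine .inl ⟨by rw [h], fun hk => ?_⟩
    rw [min_eq_left hk]
    exact (hK i h).mono (Finset.le_sup (Finset.mem_range.2 hi))

theorem eq_oracleSeg_jump_of_certifiesJump {O : ℕ → ℕ} {τ : List ℕ} {t : ℕ}
    (h : ∀ k, CertifiesJump (oracleSeg O k) τ t) : τ = oracleSeg (jump O) τ.length := by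
  refine List.ext_getElem? fun i => ?_
  rw [getElem?_oracleSeg]
  split_ifs with hi
  · rcases h t i hi with ⟨hτ, hhalt⟩ | ⟨hτ, -⟩
    · rw [hτ, jump_eq_one_iff.2 ⟨t, by simpa [take_oracleSeg] using hhalt⟩]
    · rcases jump_eq_zero_or_one O i with hO | hO
      · rw [hτ, hO]
      · obtain ⟨k, hk⟩ := jump_eq_one_iff.1 hO
        rcases h k i hi with ⟨hτ', -⟩ | ⟨-, hdiv⟩
        · simp [hτ] at hτ'
        · exact absurd hk hdiv
  · exact List.getElem?_eq_none (not_lt.1 hi)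

theorem CeIn.exists_forall_of_jump {O : ℕ → ℕ} {S : Set ℕ} (hS : CeIn (jump O) S) :
    ∃ P : ℕ → ℕ → List ℕ → Prop, (PrimrecPred fun x : ℕ × ℕ × List ℕ => P x.1 x.2.1 x.2.2) ∧
      ∀ m, m ∈ S ↔ ∃ a, ∀ k, P m a (oracleSeg O k) := by
  obtain ⟨c, rfl⟩ := hS
  let τ : ℕ → List ℕ := fun a => Denumerable.ofNat (List ℕ) a.unpair.1
  refine ⟨fun m a L => HaltsBy c.encode (τ a) m ∧ CertifiesJump L (τ a) a.unpair.2, ?_,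
    fun m => ?_⟩
  · simp only [CertifiesJump, τ]
    fun_prop
  · rw [Set.mem_ofPred_eq, dom_iff_haltsBy]
    constructor
    · rintro ⟨j, h⟩
      obtain ⟨t, ht⟩ := exists_certifiesJump O j
      exact ⟨Nat.pair (Encodable.encode (oracleSeg (jump O) j)) t, fun k => by simp [τ, h, ht]⟩
    · rintro ⟨a, h⟩
      have hτ := eq_oracleSeg_jump_of_certifiesJump fun k => (h k).2
      exact ⟨(τ a).length, hτ ▸ (h 0).1⟩

theorem ceIn_iterJump_two_setOf {R : ℕ → ℕ → ℕ → ℕ → Prop}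
    (hR : PrimrecPred fun x : ℕ × ℕ × ℕ × ℕ => R x.1 x.2.1 x.2.2.1 x.2.2.2) :
    CeIn (iterJump 2) {m | ∃ a, ∀ b, ∃ k, R m a b k} := by
  have hce : CeIn (iterJump 0)
      {x | ∃ k _l : ℕ, R x.unpair.1.unpair.1 x.unpair.1.unpair.2 x.unpair.2 k} :=
    ceIn_setOf_exists (O := iterJump 0)
      (P := fun k _ x => R x.unpair.1.unpair.1 x.unpair.1.unpair.2 x.unpair.2 k)
      (hR.comp (f := fun x : ℕ × List ℕ × ℕ =>
        (x.2.2.unpair.1.unpair.1, x.2.2.unpair.1.unpair.2, x.2.2.unpair.2, x.1)) (by fun_prop))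
  have hjump : CeIn (iterJump 2) _ := hce.jump_setOf_exists_notMem.jump_setOf_exists_notMem
  convert hjump using 1
  ext m
  simp

theorem exists_sigma_three_of_ceIn {S : Set ℕ} (hS : CeIn (iterJump 2) S) :
    ∃ R : ℕ → ℕ → ℕ → ℕ → Prop,
      (PrimrecPred fun x : ℕ × ℕ × ℕ × ℕ => R x.1 x.2.1 x.2.2.1 x.2.2.2) ∧
      ∀ m, m ∈ S ↔ ∃ a, ∀ b, ∃ k, R m a b k := by
  obtain ⟨P, hP, hS⟩ := CeIn.exists_forall_of_jump (O := iterJump 1) hS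
  have hnotP : CeIn (iterJump 1)
      {x | ∃ _a k : ℕ, ¬ P x.unpair.1 x.unpair.2 (oracleSeg (iterJump 1) k)} :=
    ceIn_setOf_exists (P := fun _ L x => ¬ P x.unpair.1 x.unpair.2 L)
      (hP.comp (f := fun x : ℕ × List ℕ × ℕ => (x.2.2.unpair.1, x.2.2.unpair.2, x.2.1))
        (by fun_prop)).not
  obtain ⟨Q, hQ, hPQ⟩ := CeIn.exists_forall_of_jump (O := iterJump 0) hnotP
  refine ⟨fun m a b k => ¬ Q (Nat.pair m a) b (oracleSeg (iterJump 0) k), ?_, fun m => ?_⟩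
  · have hseg : Primrec fun x : ℕ × ℕ × ℕ × ℕ => oracleSeg (iterJump 0) x.2.2.2 :=
      (primrec_oracleSeg_const 0).comp (by fun_prop)
    exact (hQ.comp (f := fun x : ℕ × ℕ × ℕ × ℕ => (Nat.pair x.1 x.2.1, x.2.2.1,
      oracleSeg (iterJump 0) x.2.2.2)) (by fun_prop)).not
  · refine (hS m).trans (exists_congr fun a => ?_)
    have h := hPQ (Nat.pair m a)
    simp only [Set.mem_ofPred_eq, Nat.unpair_pair, exists_const] at h
    simpa using not_congr h

theorem ceIn_iterJump_two_iff {S : Set ℕ} :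
    CeIn (iterJump 2) S ↔ ∃ R : ℕ → ℕ → ℕ → ℕ → Prop,
      (PrimrecPred fun x : ℕ × ℕ × ℕ × ℕ => R x.1 x.2.1 x.2.2.1 x.2.2.2) ∧
      ∀ m, m ∈ S ↔ ∃ a, ∀ b, ∃ k, R m a b k :=
  ⟨exists_sigma_three_of_ceIn, fun ⟨R, hR, hS⟩ => by
    convert ceIn_iterJump_two_setOf hR using 1
    exact Set.ext hS⟩

/-! ### Codes of rationals -/

/-- The positive part of the integer coded by `n` under `Equiv.intEquivNat`. -/
def intPosPart (n : ℕ) : ℕ := if n % 2 = 1 then 0 else n / 2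

/-- The negative part of the integer coded by `n` under `Equiv.intEquivNat`. -/
def intNegPart (n : ℕ) : ℕ := if n % 2 = 1 then n / 2 + 1 else 0

theorem intPosPart_sub_intNegPart (z : ℤ) :
    (intPosPart (Equiv.intEquivNat z) : ℤ) - intNegPart (Equiv.intEquivNat z) = z := by
  rcases z with n | n
  · rw [show Equiv.intEquivNat (Int.ofNat n) = 2 * n from rfl]
    simp [intPosPart, intNegPart]
  · rw [show Equiv.intEquivNat (Int.negSucc n) = 2 * n + 1 from rfl]
    simp [intPosPart, intNegPart, Int.negSucc_eq]
    omega

theorem intPosPart_add_intNegPart (z : ℤ) :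
    intPosPart (Equiv.intEquivNat z) + intNegPart (Equiv.intEquivNat z) = z.natAbs := by
  rcases z with n | n
  · rw [show Equiv.intEquivNat (Int.ofNat n) = 2 * n from rfl]
    simp [intPosPart, intNegPart]
  · rw [show Equiv.intEquivNat (Int.negSucc n) = 2 * n + 1 from rfl]
    simp [intPosPart, intNegPart]
    omega

/-- The number `m` is the code of a rational in lowest terms. -/
def IsRatCode (m : ℕ) : Prop :=
  0 < m.unpair.2 ∧ ∀ d < m.unpair.2 + 1,
    (intPosPart m.unpair.1 + intNegPart m.unpair.1) % d = 0 → m.unpair.2 % d = 0 → d = 1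

/-- `RatCodeLT m A B D` expresses `q * D + B < A` for the rational `q` coded by `m`. -/
def RatCodeLT (m A B D : ℕ) : Prop :=
  intPosPart m.unpair.1 * D + B * m.unpair.2 < A * m.unpair.2 + intNegPart m.unpair.1 * D

/-- `RatCodeGT m A B D` expresses `A < q * D + B` for the rational `q` coded by `m`. -/
def RatCodeGT (m A B D : ℕ) : Prop :=
  A * m.unpair.2 + intNegPart m.unpair.1 * D < intPosPart m.unpair.1 * D + B * m.unpair.2

section

variable {α : Type*} [Primcodable α] {f A B D : α → ℕ}

@[fun_prop]
theorem primrec_intPosPart (hf : Primrec f) : Primrec fun a => intPosPart (f a) := by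
  unfold intPosPart
  fun_prop

@[fun_prop]
theorem primrec_intNegPart (hf : Primrec f) : Primrec fun a => intNegPart (f a) := by
  unfold intNegPart
  fun_prop

@[fun_prop]
theorem primrecPred_isRatCode (hf : Primrec f) : PrimrecPred fun a => IsRatCode (f a) := by
  unfold IsRatCode
  fun_prop

@[fun_prop]
theorem primrecPred_ratCodeLT (hf : Primrec f) (hA : Primrec A) (hB : Primrec B)
    (hD : Primrec D) : PrimrecPred fun a => RatCodeLT (f a) (A a) (B a) (D a) := by
  unfold RatCodeLT
  fun_prop

@[fun_prop]
theorem primrecPred_ratCodeGT (hf : Primrec f) (hA : Primrec A) (hB : Primrec B)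
    (hD : Primrec D) : PrimrecPred fun a => RatCodeGT (f a) (A a) (B a) (D a) := by
  unfold RatCodeGT
  fun_prop

end

theorem encode_rat (q : ℚ) :
    Encodable.encode q = Nat.pair (Equiv.intEquivNat q.num) q.den := rfl

theorem isRatCode_iff {m : ℕ} : IsRatCode m ↔ ∃ q : ℚ, Encodable.encode q = m := by
  constructor
  · rintro ⟨hpos, hred⟩
    obtain ⟨z, hz⟩ := Equiv.intEquivNat.surjective m.unpair.1
    rw [← hz, intPosPart_add_intNegPart] at hred
    have hdvd := Nat.gcd_dvd z.natAbs m.unpair.2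
    have hcop : z.natAbs.Coprime m.unpair.2 :=
      hred _ (Nat.lt_succ_of_le (Nat.le_of_dvd hpos hdvd.2)) (Nat.mod_eq_zero_of_dvd hdvd.1)
        (Nat.mod_eq_zero_of_dvd hdvd.2)
    exact ⟨⟨z, m.unpair.2, hpos.ne', hcop⟩, by rw [encode_rat, hz, Nat.pair_unpair]⟩
  · rintro ⟨q, rfl⟩
    rw [encode_rat, IsRatCode, Nat.unpair_pair, intPosPart_add_intNegPart]
    refine ⟨q.den_pos, fun d _ hnum hden => Nat.dvd_one.1 ?_⟩
    rw [← Nat.Coprime.gcd_eq_one q.reduced]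
    exact Nat.dvd_gcd (Nat.dvd_of_mod_eq_zero hnum) (Nat.dvd_of_mod_eq_zero hden)

theorem isRatCode_unpair_iff {w : ℕ} : IsRatCode w.unpair.1 ∧ IsRatCode w.unpair.2 ↔
    ∃ p q : ℚ, Encodable.encode (p, q) = w := by
  simp only [isRatCode_iff, Encodable.encode_prod_val]
  constructor
  · rintro ⟨⟨p, hp⟩, q, hq⟩
    exact ⟨p, q, by rw [hp, hq, Nat.pair_unpair]⟩
  · rintro ⟨p, q, rfl⟩
    rw [Nat.unpair_pair]
    exact ⟨⟨p, rfl⟩, q, rfl⟩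

theorem intPosPart_num_sub_intNegPart_num (q : ℚ) :
    (intPosPart (Equiv.intEquivNat q.num) : ℝ) - intNegPart (Equiv.intEquivNat q.num) =
      q * q.den := by
  have h : (q.num : ℝ) = q * q.den := by exact_mod_cast (Rat.mul_den_eq_num q).symm
  rw [← h]
  exact_mod_cast intPosPart_sub_intNegPart q.num

theorem ratCodeLT_encode {q : ℚ} {A B D : ℕ} :
    RatCodeLT (Encodable.encode q) A B D ↔ (q : ℝ) * D + B < A := by
  have hden : (0 : ℝ) < q.den := by exact_mod_cast q.den_pos
  have hnum := intPosPart_num_sub_intNegPart_num q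
  rw [RatCodeLT, encode_rat, Nat.unpair_pair, ← Nat.cast_lt (α := ℝ),
    ← mul_lt_mul_iff_left₀ (b := (q : ℝ) * D + B) hden]
  push_cast
  rw [show ((q : ℝ) * D + B) * q.den = q * q.den * D + B * q.den by ring, ← hnum, sub_mul]
  constructor <;> intro h <;> linarith

theorem ratCodeGT_encode {q : ℚ} {A B D : ℕ} :
    RatCodeGT (Encodable.encode q) A B D ↔ (A : ℝ) < q * D + B := by
  have hden : (0 : ℝ) < q.den := by exact_mod_cast q.den_pos
  have hnum := intPosPart_num_sub_intNegPart_num q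
  rw [RatCodeGT, encode_rat, Nat.unpair_pair, ← Nat.cast_lt (α := ℝ),
    ← mul_lt_mul_iff_left₀ (c := (q : ℝ) * D + B) hden]
  push_cast
  rw [show ((q : ℝ) * D + B) * q.den = q * q.den * D + B * q.den by ring, ← hnum, sub_mul]
  constructor <;> intro h <;> linarith

/-! ### Approximation of left-c.e. reals from below -/

/-- The dyadic rational `g L / 2 ^ s`, where `L` is the segment of `O` of length `s`. -/
noncomputable def approx (O : ℕ → ℕ) (g : List ℕ → ℕ) (s : ℕ) : ℝ :=
  (g (oracleSeg O s) : ℝ) / 2 ^ s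

/-- `g` provides an `O`-computable increasing sequence of dyadic rationals, starting at `0`, with
supremum `α`. When `α` is positive the supremum is not attained. -/
structure IsApproxBelow (O : ℕ → ℕ) (α : ℝ) (g : List ℕ → ℕ) : Prop where
  primrec : Primrec g
  zero : g (oracleSeg O 0) = 0
  monotone : Monotone (approx O g)
  le : ∀ s, approx O g s ≤ α
  lt : 0 < α → ∀ s, approx O g s < α
  exists_lt : ∀ x < α, ∃ s, x < approx O g s

theorem lt_count_iff_of_antitone {P : ℕ → Prop} [DecidablePred P]
    (hP : ∀ i j, i ≤ j → P j → P i) {j n : ℕ} : j < Nat.count P n ↔ j < n ∧ P j := by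
  constructor
  · intro h
    have hfin : ∀ hf : (Set.ofPred P).Finite, j < hf.toFinset.card := fun hf =>
      h.trans_le (Nat.count_le_card hf n)
    exact ⟨h.trans_le (Nat.count_le P), hP _ _ (Nat.le_nth hfin) (Nat.nth_mem j hfin)⟩
  · rintro ⟨hj, hPj⟩
    have hcount : Nat.count P (j + 1) = j + 1 :=
      Nat.count_iff_forall.2 fun i hi => hP i j (Nat.lt_succ_iff.1 hi) hPj
    exact Nat.lt_of_succ_le (hcount.symm.trans_le (Nat.count_monotone P hj))

/-- The numerator over `2 ^ s`, with `s = L.length`, of the approximation to a left-c.e. real whose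
left cut is enumerated by the oracle code with number `e`: multiples of `2⁻ˢ` are counted as long as
they are at most a rational enumerated within `s` stages. The bound `s * 2 ^ s` truncates the
value at `s`. -/
noncomputable def cutApprox (e : ℕ) (L : List ℕ) : ℕ :=
  Nat.count (fun j => ∃ m < L.length, IsRatCode m ∧ HaltsBy e L m ∧
    ¬ RatCodeLT m (j + 1) 0 (2 ^ L.length)) (L.length * 2 ^ L.length)

theorem primrec_cutApprox (e : ℕ) : Primrec (cutApprox e) := by
  unfold cutApprox
  fun_prop

theorem lt_cutApprox_iff {O : ℕ → ℕ} {e s j : ℕ} :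
    j < cutApprox e (oracleSeg O s) ↔ j < s * 2 ^ s ∧ ∃ q : ℚ, Encodable.encode q < s ∧
      HaltsBy e (oracleSeg O s) (Encodable.encode q) ∧ ((j + 1 : ℕ) : ℝ) ≤ q * 2 ^ s := by
  have hrat : ∀ i, (∃ m < s, IsRatCode m ∧ HaltsBy e (oracleSeg O s) m ∧
      ¬ RatCodeLT m (i + 1) 0 (2 ^ s)) ↔ ∃ q : ℚ, Encodable.encode q < s ∧
      HaltsBy e (oracleSeg O s) (Encodable.encode q) ∧ ((i + 1 : ℕ) : ℝ) ≤ q * 2 ^ s := by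
    simp only [isRatCode_iff]
    refine fun i => ⟨?_, ?_⟩
    · rintro ⟨_, hs, ⟨q, rfl⟩, hq, hlt⟩
      rw [ratCodeLT_encode, not_lt] at hlt
      exact ⟨q, hs, hq, by simpa using hlt⟩
    · rintro ⟨q, hs, hq, hle⟩
      refine ⟨_, hs, ⟨q, rfl⟩, hq, ?_⟩
      rw [ratCodeLT_encode, not_lt]
      simpa using hle
  simp only [cutApprox, length_oracleSeg, hrat]
  refine lt_count_iff_of_antitone fun i j hij => ?_
  rintro ⟨q, hs, hq, hle⟩
  exact ⟨q, hs, hq, hle.trans' (by exact_mod_cast Nat.succ_le_succ hij)⟩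

theorem two_mul_cutApprox_le (O : ℕ → ℕ) (e s : ℕ) :
    2 * cutApprox e (oracleSeg O s) ≤ cutApprox e (oracleSeg O (s + 1)) := by
  rcases Nat.eq_zero_or_pos (cutApprox e (oracleSeg O s)) with h | h
  · simp [h]
  obtain ⟨j, hj⟩ := Nat.exists_eq_succ_of_ne_zero h.ne'
  obtain ⟨hjs, q, hs, hq, hle⟩ := lt_cutApprox_iff.1 (hj ▸ Nat.lt_succ_self j)
  suffices h : 2 * j + 1 < cutApprox e (oracleSeg O (s + 1)) by omega
  refine lt_cutApprox_iff.2 ⟨?_, q, hs.trans s.lt_succ_self, hq.mono s.le_succ, ?_⟩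
  · calc 2 * j + 1 < 2 * (s * 2 ^ s) := by omega
      _ = s * 2 ^ (s + 1) := by ring
      _ ≤ (s + 1) * 2 ^ (s + 1) := Nat.mul_le_mul_right _ s.le_succ
  · calc ((2 * j + 1 + 1 : ℕ) : ℝ) = 2 * ((j + 1 : ℕ) : ℝ) := by push_cast; ring
      _ ≤ 2 * (q * 2 ^ s) := by gcongr
      _ = q * 2 ^ (s + 1) := by ring

theorem monotone_approx_cutApprox (O : ℕ → ℕ) (e : ℕ) : Monotone (approx O (cutApprox e)) := by
  refine monotone_nat_of_le_succ fun s => ?_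
  have h : (2 * cutApprox e (oracleSeg O s) : ℝ) ≤ cutApprox e (oracleSeg O (s + 1)) := by
    exact_mod_cast two_mul_cutApprox_le O e s
  rw [approx, approx, pow_succ', ← div_div]
  gcongr
  linarith

theorem approx_cutApprox_lt {O : ℕ → ℕ} {e : ℕ} {α : ℝ}
    (h : ∀ q : ℚ, (∃ k, HaltsBy e (oracleSeg O k) (Encodable.encode q)) → (q : ℝ) < α) {s : ℕ}
    (hs : 0 < cutApprox e (oracleSeg O s)) : approx O (cutApprox e) s < α := by
  obtain ⟨j, hj⟩ := Nat.exists_eq_succ_of_ne_zero hs.ne'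
  obtain ⟨-, q, -, hq, hle⟩ := lt_cutApprox_iff.1 (hj ▸ Nat.lt_succ_self j)
  refine lt_of_le_of_lt ?_ (h q ⟨s, hq⟩)
  rwa [approx, hj, div_le_iff₀ (by positivity)]

theorem exists_lt_approx_cutApprox {O : ℕ → ℕ} {e : ℕ} {α x : ℝ}
    (h : ∀ q : ℚ, (q : ℝ) < α → ∃ k, HaltsBy e (oracleSeg O k) (Encodable.encode q))
    (hx : x < α) : ∃ s, x < approx O (cutApprox e) s := by
  obtain ⟨q, hxq, hqα⟩ := exists_rat_btwn hx
  obtain ⟨k, hk⟩ := h q hqα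
  obtain ⟨n, hn⟩ := exists_nat_gt (q : ℝ)
  obtain ⟨l, hl⟩ := exists_pow_lt_of_lt_one (sub_pos.2 hxq) (show (2⁻¹ : ℝ) < 1 by norm_num)
  let s := k + (Encodable.encode q + 1) + n + l
  have hpos : (0 : ℝ) < 2 ^ s := by positivity
  have hsl : (2⁻¹ : ℝ) ^ s ≤ 2⁻¹ ^ l :=
    pow_le_pow_of_le_one (by norm_num) (by norm_num) (by omega)
  have hfloor : ⌊(q : ℝ) * 2 ^ s⌋₊ ≤ cutApprox e (oracleSeg O s) := by
    refine le_of_forall_lt fun j hj => lt_cutApprox_iff.2 ?_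
    have hjq : ((j + 1 : ℕ) : ℝ) ≤ q * 2 ^ s := (Nat.le_floor_iff' j.succ_ne_zero).1 hj
    refine ⟨?_, q, by omega, hk.mono (by omega), hjq⟩
    have hqs : (q : ℝ) ≤ s := hn.le.trans (by exact_mod_cast (by omega : n ≤ s))
    exact_mod_cast hjq.trans (mul_le_mul_of_nonneg_right hqs hpos.le)
  refine ⟨s, (lt_div_iff₀ hpos).2 ?_⟩
  calc x * 2 ^ s < (q - 2⁻¹ ^ s) * 2 ^ s := by gcongr; linarith
    _ = q * 2 ^ s - 1 := by rw [sub_mul, ← mul_pow]; norm_num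
    _ < ⌊(q : ℝ) * 2 ^ s⌋₊ := by linarith [Nat.lt_floor_add_one ((q : ℝ) * 2 ^ s)]
    _ ≤ cutApprox e (oracleSeg O s) := by exact_mod_cast hfloor

theorem LeftCeIn.exists_isApproxBelow {O : ℕ → ℕ} {α : ℝ} (h : LeftCeIn O α) (h0 : 0 ≤ α) :
    ∃ g, IsApproxBelow O α g := by
  obtain ⟨c, hc⟩ := h
  have hcut : ∀ q : ℚ, (q : ℝ) < α ↔
      ∃ k, HaltsBy c.encode (oracleSeg O k) (Encodable.encode q) := fun q => by
    have h := Set.ext_iff.1 hc (Encodable.encode q)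
    simpa [← dom_iff_haltsBy] using h
  have hlt : ∀ s, 0 < cutApprox c.encode (oracleSeg O s) → approx O (cutApprox c.encode) s < α :=
    fun s => approx_cutApprox_lt fun q => (hcut q).2
  have hzero : ∀ s, ¬ 0 < cutApprox c.encode (oracleSeg O s) →
      approx O (cutApprox c.encode) s = 0 := fun s h => by
    simp [approx, Nat.eq_zero_of_not_pos h]
  refine ⟨cutApprox c.encode, primrec_cutApprox _, by simp [cutApprox],
    monotone_approx_cutApprox O _, fun s => ?_, fun hα s => ?_,
    fun x => exists_lt_approx_cutApprox fun q => (hcut q).1⟩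
  · by_cases hs : 0 < cutApprox c.encode (oracleSeg O s)
    · exact (hlt s hs).le
    · exact (hzero s hs).trans_le h0
  · by_cases hs : 0 < cutApprox c.encode (oracleSeg O s)
    · exact hlt s hs
    · exact (hzero s hs).trans_lt hα

theorem leftCeIn_of_approx {O : ℕ → ℕ} {γ : ℝ} {A B : List ℕ → ℕ} {D : ℕ} (hA : Primrec A)
    (hB : Primrec B) (hle : ∀ t, approx O A t - approx O B t ≤ γ * D)
    (hsup : ∀ x < γ, ∃ t, x * D < approx O A t - approx O B t) : LeftCeIn O γ := by
  have hlt : ∀ (q : ℚ) (t : ℕ), RatCodeLT (Encodable.encode q) (A (oracleSeg O t))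
      (B (oracleSeg O t)) (D * 2 ^ t) ↔ (q : ℝ) * D < approx O A t - approx O B t := fun q t => by
    rw [ratCodeLT_encode, approx, approx, ← sub_div, lt_div_iff₀ (by positivity), lt_sub_iff_add_lt,
      mul_assoc]
    push_cast
    rfl
  rw [LeftCeIn]
  convert ceIn_setOf_exists (O := O) (P := fun _ L m =>
    IsRatCode m ∧ RatCodeLT m (A L) (B L) (D * 2 ^ L.length)) (by fun_prop) using 1
  ext m
  simp only [Set.mem_ofPred_eq, length_oracleSeg, isRatCode_iff, exists_const]
  constructor
  · rintro ⟨q, rfl, hq⟩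
    obtain ⟨t, ht⟩ := hsup q hq
    exact ⟨t, ⟨q, rfl⟩, (hlt q t).2 ht⟩
  · rintro ⟨t, ⟨q, rfl⟩, h⟩
    exact ⟨q, rfl, lt_of_mul_lt_mul_right (((hlt q t).1 h).trans_le (hle t)) D.cast_nonneg⟩

/-! ### The uniform measure on Cantor space -/

@[simp]
theorem length_initSeg (X : Cantor) (k : ℕ) : (initSeg X k).length = k := by
  simp [initSeg]

theorem take_initSeg (X : Cantor) (k j : ℕ) : (initSeg X k).take j = initSeg X (min j k) := by
  rw [initSeg, initSeg, ← List.map_take, List.take_range]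

theorem extends_iff {X : Cantor} {ρ : List Bool} :
    Extends X ρ ↔ ∀ i < ρ.length, X i = ρ.getD i false := by
  rw [Extends, List.ext_getElem_iff]
  simp +contextual [initSeg]

theorem prepend_length_add (ρ : List Bool) (X : Cantor) (i : ℕ) :
    prepend ρ X (ρ.length + i) = X i := by
  simp [prepend]

theorem extends_prepend (ρ : List Bool) (X : Cantor) : Extends (prepend ρ X) ρ :=
  extends_iff.2 fun i hi => by simp [prepend, hi]

theorem Extends.exists_prepend_eq {X : Cantor} {ρ : List Bool} (h : Extends X ρ) :
    ∃ Y, prepend ρ Y = X := by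
  refine ⟨fun i => X (ρ.length + i), funext fun n => ?_⟩
  by_cases hn : n < ρ.length
  · simp [prepend, hn, extends_iff.1 h n hn]
  · simp [prepend, hn, Nat.add_sub_cancel' (not_lt.1 hn)]

theorem cylinder_inter_cylinder (X : Cantor) (n m : ℕ) :
    PiNat.cylinder X n ∩ PiNat.cylinder X m = PiNat.cylinder X (max n m) := by
  ext W
  simp only [Set.mem_inter_iff, PiNat.mem_cylinder_iff, lt_max_iff, or_imp, forall_and]

theorem setOf_extends_eq_cylinder (ρ : List Bool) (Y : Cantor) :
    {X | Extends X ρ} = PiNat.cylinder (prepend ρ Y) ρ.length := by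
  ext X
  simp +contextual [extends_iff, PiNat.mem_cylinder_iff, prepend]

theorem prepend_mem_cylinder_prepend_iff {ρ : List Bool} {X Y : Cantor} {n : ℕ} :
    prepend ρ X ∈ PiNat.cylinder (prepend ρ Y) n ↔ X ∈ PiNat.cylinder Y (n - ρ.length) := by
  simp only [PiNat.mem_cylinder_iff]
  constructor
  · intro h i hi
    simpa only [prepend_length_add] using h (ρ.length + i) (by omega)
  · intro h i hi
    by_cases hiρ : i < ρ.length <;> simp only [prepend, hiρ, if_true, if_false]
    exact h _ (by omega)

/-- The natural number with binary digits `X 0, …, X (n - 1)`, most significant digit first. -/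
def initVal (X : Cantor) : ℕ → ℕ
  | 0 => 0
  | n + 1 => 2 * initVal X n + (X n).toNat

theorem initVal_lt (X : Cantor) (n : ℕ) : initVal X n < 2 ^ n := by
  induction n with
  | zero => simp [initVal]
  | succ n ih => rw [initVal, pow_succ]; have := (X n).toNat_lt; omega

theorem initVal_eq_iff {X Y : Cantor} {n : ℕ} :
    initVal X n = initVal Y n ↔ X ∈ PiNat.cylinder Y n := by
  rw [PiNat.mem_cylinder_iff]
  induction n with
  | zero => simp [initVal]
  | succ n ih =>
    rw [Nat.forall_lt_succ_right, ← ih, initVal, initVal]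
    cases X n <;> cases Y n <;> simp <;> omega

/-- The binary string of length `k` that represents `j`, most significant digit first. -/
def bitString (k j : ℕ) : List Bool :=
  (List.range k).map fun i => decide (j / 2 ^ (k - 1 - i) % 2 = 1)

@[fun_prop]
theorem primrec_bitString {α : Type*} [Primcodable α] {f g : α → ℕ} (hf : Primrec f)
    (hg : Primrec g) : Primrec fun a => bitString (f a) (g a) := by
  unfold bitString
  fun_prop

theorem initVal_add_div (X : Cantor) (m d : ℕ) : initVal X (m + d) / 2 ^ d = initVal X m := by
  induction d with
  | zero => simp
  | succ d ih =>
    have hstep : initVal X (m + (d + 1)) / 2 = initVal X (m + d) := by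
      rw [← add_assoc, initVal]
      have := (X (m + d)).toNat_lt
      omega
    rw [pow_succ', ← Nat.div_div_eq_div_mul, hstep, ih]

theorem bitString_initVal (X : Cantor) (k : ℕ) : bitString k (initVal X k) = initSeg X k := by
  refine List.map_congr_left fun i hi => ?_
  obtain ⟨d, rfl⟩ := Nat.exists_eq_add_of_lt (List.mem_range.1 hi)
  rw [show i + d + 1 - 1 - i = d by omega, add_right_comm, initVal_add_div, initVal]
  cases X i <;> simp

theorem initVal_digits {x : ℝ} (hx : x ∈ Set.Ico (0 : ℝ) 1) (n : ℕ) :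
    (initVal (digits x) n : ℤ) = ⌊x * 2 ^ n⌋ := by
  induction n with
  | zero => simpa [initVal, eq_comm, Int.floor_eq_zero_iff] using hx
  | succ n ih =>
    have hhalf : ⌊x * 2 ^ (n + 1)⌋ / 2 = ⌊x * 2 ^ n⌋ := by
      have h := Int.floor_div_natCast (x * 2 ^ (n + 1)) 2
      rw [pow_succ, ← mul_assoc, Nat.cast_ofNat, mul_div_cancel_right₀ _ two_ne_zero,
        Nat.cast_ofNat] at h
      rw [pow_succ, ← mul_assoc]
      exact h.symm
    rw [initVal, Nat.cast_add, Nat.cast_mul, ih, digits, ← hhalf]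
    by_cases h : ⌊x * 2 ^ (n + 1)⌋ % 2 = 1 <;> simp [h] <;> omega

theorem initVal_digits_eq_iff {x : ℝ} (hx : x ∈ Set.Ico (0 : ℝ) 1) {n j : ℕ} :
    initVal (digits x) n = j ↔ x ∈ Set.Ico (j / 2 ^ n : ℝ) ((j + 1) / 2 ^ n) := by
  rw [← Nat.cast_inj (R := ℤ), initVal_digits hx, Int.floor_eq_iff, Set.mem_Ico,
    div_le_iff₀ (by positivity), lt_div_iff₀ (by positivity)]
  norm_cast

theorem measurable_initVal (n : ℕ) : Measurable fun X : Cantor => initVal X n := by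
  induction n with
  | zero => exact measurable_const
  | succ n ih =>
    exact (ih.const_mul 2).add
      ((Measurable.of_discrete (f := Bool.toNat)).comp (measurable_pi_apply n))

theorem measurableSet_setOf_initSeg (Q : List Bool → Prop) (k : ℕ) :
    MeasurableSet {X | Q (initSeg X k)} := by
  simp_rw [← bitString_initVal]
  exact measurable_initVal k (MeasurableSet.of_discrete (s := {j | Q (bitString k j)}))

theorem measurableSet_cylinder (X : Cantor) (n : ℕ) : MeasurableSet (PiNat.cylinder X n) :=
  (PiNat.isOpen_cylinder _ X n).measurableSet

theorem measurable_digits : Measurable digits := by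
  refine measurable_pi_lambda _ fun n => ?_
  have h : Measurable fun x : ℝ => ⌊x * 2 ^ (n + 1)⌋ := by fun_prop
  exact (Measurable.of_discrete (f := fun z : ℤ => decide (z % 2 = 1))).comp h

instance : IsProbabilityMeasure mu where
  measure_univ := by simp [mu, Measure.map_apply measurable_digits MeasurableSet.univ]

theorem mu_setOf_initVal_eq {n j : ℕ} (hj : j < 2 ^ n) :
    mu {X | initVal X n = j} = 2⁻¹ ^ n := by
  have hj' : (j : ℝ) + 1 ≤ 2 ^ n := by exact_mod_cast hj
  have hIco : Set.Ico (j / 2 ^ n : ℝ) ((j + 1) / 2 ^ n) ⊆ Set.Ico 0 1 :=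
    Set.Ico_subset_Ico (by positivity) ((div_le_one (by positivity)).2 hj')
  have hpre : digits ⁻¹' {X | initVal X n = j} ∩ Set.Ico 0 1 =
      Set.Ico (j / 2 ^ n : ℝ) ((j + 1) / 2 ^ n) := by
    ext x
    exact ⟨fun h => (initVal_digits_eq_iff h.2).1 h.1,
      fun h => ⟨(initVal_digits_eq_iff (hIco h)).2 h, hIco h⟩⟩
  have hmeas : MeasurableSet {X | initVal X n = j} :=
    measurable_initVal n (measurableSet_singleton j)
  rw [mu, Measure.map_apply measurable_digits hmeas,
    Measure.restrict_apply (measurable_digits hmeas), hpre, Real.volume_Ico, ← sub_div,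
    add_sub_cancel_left, one_div, ENNReal.ofReal_inv_of_pos (by positivity),
    ENNReal.ofReal_pow zero_le_two, ENNReal.ofReal_ofNat, ENNReal.inv_pow]

theorem mu_cylinder (X : Cantor) (n : ℕ) : mu (PiNat.cylinder X n) = 2⁻¹ ^ n := by
  rw [← mu_setOf_initVal_eq (initVal_lt X n)]
  simp only [initVal_eq_iff, Set.ofPred_mem_eq]

theorem muR_setOf_initSeg (Q : List Bool → Prop) (k : ℕ) :
    muR {X | Q (initSeg X k)} = (Nat.count (fun j => Q (bitString k j)) (2 ^ k) : ℝ) / 2 ^ k := by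
  have hunion : {X | Q (initSeg X k)} =
      ⋃ j ∈ (Finset.range (2 ^ k)).filter fun j => Q (bitString k j), {X | initVal X k = j} := by
    ext X
    simp [← bitString_initVal, initVal_lt]
  have hdisj : Set.PairwiseDisjoint Set.univ fun j => {X | initVal X k = j} := fun i _ j _ hij =>
    Set.disjoint_left.2 fun X hi hj => hij (hi.symm.trans hj)
  rw [muR, hunion, measure_biUnion_finset (hdisj.subset (Set.subset_univ _)) fun j _ =>
      measurable_initVal k (measurableSet_singleton j),
    Finset.sum_congr rfl fun j hj => mu_setOf_initVal_eq (by simp_all), Finset.sum_const,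
    ← Nat.count_eq_card_filter_range]
  simp [div_eq_mul_inv]

theorem measure_ext_of_cylinder {μ ν : Measure Cantor} [IsFiniteMeasure μ]
    (h : ∀ X n, μ (PiNat.cylinder X n) = ν (PiNat.cylinder X n)) : μ = ν := by
  refine ext_of_generate_finite _ ((BorelSpace.measurable_eq (α := Cantor)).trans
    (PiNat.isTopologicalBasis_cylinders fun _ => Bool).borel_eq_generateFrom) ?_ ?_ ?_
  · rintro _ ⟨X, n, rfl⟩ _ ⟨Y, m, rfl⟩ ⟨Z, hX, hY⟩
    refine ⟨Z, max n m, ?_⟩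
    rw [← PiNat.mem_cylinder_iff_eq.1 hX, ← PiNat.mem_cylinder_iff_eq.1 hY, cylinder_inter_cylinder]
  · rintro _ ⟨X, n, rfl⟩
    exact h X n
  · simpa using h (fun _ => false) 0

theorem measurable_prepend (ρ : List Bool) : Measurable (prepend ρ) := by
  refine measurable_pi_lambda _ fun n => ?_
  by_cases hn : n < ρ.length <;> simp only [prepend, hn, if_true, if_false]
  · exact measurable_const
  · exact measurable_pi_apply _

theorem measurableSet_extends (ρ : List Bool) : MeasurableSet {X | Extends X ρ} :=
  measurableSet_setOf_initSeg (· = ρ) ρ.length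

theorem mu_restrict_extends (ρ : List Bool) :
    mu.restrict {X | Extends X ρ} = (2⁻¹ : ENNReal) ^ ρ.length • mu.map (prepend ρ) := by
  refine measure_ext_of_cylinder fun X n => ?_
  rw [Measure.restrict_apply (measurableSet_cylinder X n), Measure.smul_apply,
    Measure.map_apply (measurable_prepend ρ) (measurableSet_cylinder X n), smul_eq_mul]
  by_cases h : ∃ Z, Z ∈ PiNat.cylinder X n ∧ Extends Z ρ
  · obtain ⟨Z, hZX, hZ⟩ := h
    obtain ⟨Y, rfl⟩ := hZ.exists_prepend_eq
    rw [← PiNat.mem_cylinder_iff_eq.1 hZX]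
    have hinter : PiNat.cylinder (prepend ρ Y) n ∩ {X | Extends X ρ} =
        PiNat.cylinder (prepend ρ Y) (ρ.length + (n - ρ.length)) := by
      rw [setOf_extends_eq_cylinder ρ Y, cylinder_inter_cylinder]
      congr 1
      omega
    have hpre : prepend ρ ⁻¹' PiNat.cylinder (prepend ρ Y) n = PiNat.cylinder Y (n - ρ.length) :=
      Set.ext fun _ => prepend_mem_cylinder_prepend_iff
    rw [hinter, hpre, mu_cylinder, mu_cylinder, pow_add]
  · push Not at h
    have hinter : PiNat.cylinder X n ∩ {X | Extends X ρ} = ∅ :=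
      Set.disjoint_iff_inter_eq_empty.1 (Set.disjoint_left.2 h)
    have hpre : prepend ρ ⁻¹' PiNat.cylinder X n = ∅ :=
      Set.eq_empty_of_forall_notMem fun Y hY => h _ hY (extends_prepend ρ Y)
    simp [hinter, hpre]

theorem muR_inter_extends {S : Set Cantor} (hS : MeasurableSet S) (ρ : List Bool) :
    muR (S ∩ {X | Extends X ρ}) = 2⁻¹ ^ ρ.length * muR (prepend ρ ⁻¹' S) := by
  rw [muR, ← Measure.restrict_apply hS, mu_restrict_extends, Measure.smul_apply,
    Measure.map_apply (measurable_prepend ρ) hS]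
  simp [muR]

/-- Interleaving of two sequences. -/
def interleave (p : Cantor × Cantor) : Cantor :=
  fun n => if n % 2 = 0 then p.1 (n / 2) else p.2 (n / 2)

theorem measurable_interleave : Measurable interleave := by
  refine measurable_pi_lambda _ fun n => ?_
  by_cases h : n % 2 = 0 <;> simp only [interleave, h, if_true, if_false] <;> fun_prop

theorem mu_map_interleave : (mu.prod mu).map interleave = mu := by
  refine measure_ext_of_cylinder fun X n => ?_
  have hpre : interleave ⁻¹' PiNat.cylinder X n =
      PiNat.cylinder (fun i => X (2 * i)) ((n + 1) / 2) ×ˢ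
        PiNat.cylinder (fun i => X (2 * i + 1)) (n / 2) := by
    ext ⟨Y, Z⟩
    simp only [Set.mem_preimage, Set.mem_prod, PiNat.mem_cylinder_iff, interleave]
    constructor
    · refine fun h => ⟨fun i hi => ?_, fun i hi => ?_⟩
      · simpa using h (2 * i) (by omega)
      · simpa [Nat.mul_add_mod, Nat.mul_add_div] using h (2 * i + 1) (by omega)
    · rintro ⟨hY, hZ⟩ i hi
      split_ifs with h
      · rw [hY _ (by omega), show 2 * (i / 2) = i by omega]
      · rw [hZ _ (by omega), show 2 * (i / 2) + 1 = i by omega]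
  rw [Measure.map_apply measurable_interleave (measurableSet_cylinder X n), hpre,
    Measure.prod_prod, mu_cylinder, mu_cylinder, mu_cylinder, ← pow_add]
  congr 1
  omega

theorem muR_mono {S T : Set Cantor} (h : S ⊆ T) : muR S ≤ muR T :=
  measureReal_mono h

theorem muR_nonneg (S : Set Cantor) : 0 ≤ muR S := ENNReal.toReal_nonneg

theorem muR_le_one (S : Set Cantor) : muR S ≤ 1 := measureReal_le_one

theorem tendsto_muR_iUnion {s : ℕ → Set Cantor} (h : Monotone s) :
    Filter.Tendsto (fun n => muR (s n)) Filter.atTop (nhds (muR (⋃ n, s n))) :=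
  (ENNReal.tendsto_toReal (measure_ne_top _ _)).comp (tendsto_measure_iUnion_atTop h)

theorem tendsto_muR_iInter {s : ℕ → Set Cantor} (hs : ∀ n, MeasurableSet (s n))
    (h : Antitone s) :
    Filter.Tendsto (fun n => muR (s n)) Filter.atTop (nhds (muR (⋂ n, s n))) :=
  (ENNReal.tendsto_toReal (measure_ne_top _ _)).comp (tendsto_measure_iInter_atTop
    (fun n => (hs n).nullMeasurableSet) h ⟨0, measure_ne_top _ _⟩)

/-! ### `Σ⁰₃` classes -/

/-- The class `{X | ∃ a, ∀ b, ∃ k, R a b (X ↾ k)}` with matrix `R`. -/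
def sigmaThree (R : ℕ → ℕ → List Bool → Prop) : Set Cantor :=
  {X | ∃ a, ∀ b, ∃ k, R a b (initSeg X k)}

/-- Lightface `Σ⁰₃` subsets of Cantor space. -/
def IsSigmaThree (S : Set Cantor) : Prop :=
  ∃ R : ℕ → ℕ → List Bool → Prop,
    (PrimrecPred fun x : ℕ × ℕ × List Bool => R x.1 x.2.1 x.2.2) ∧ S = sigmaThree R

theorem measurableSet_sigmaThree (R : ℕ → ℕ → List Bool → Prop) :
    MeasurableSet (sigmaThree R) := by
  simp only [sigmaThree, Set.ofPred_exists, Set.ofPred_forall]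
  exact .iUnion fun a => .iInter fun b => .iUnion fun k => measurableSet_setOf_initSeg _ k

theorem IsSigmaThree.measurableSet {S : Set Cantor} (h : IsSigmaThree S) : MeasurableSet S := by
  obtain ⟨R, -, rfl⟩ := h
  exact measurableSet_sigmaThree R

/-- The bounded version of the formula defining `sigmaThree R`: the outer quantifier ranges below
`N`, the middle one below `b` and the inner one below `k`. -/
def sigmaThreeBox (R : ℕ → ℕ → List Bool → Prop) (N b k : ℕ) : Set Cantor :=
  {X | ∃ a < N, ∀ b' < b, ∃ j < k, R a b' (initSeg X j)}

section

variable (R : ℕ → ℕ → List Bool → Prop)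

theorem monotone_sigmaThreeBox (N b : ℕ) : Monotone (sigmaThreeBox R N b) := by
  rintro k k' h X ⟨a, ha, hX⟩
  refine ⟨a, ha, fun b' hb => ?_⟩
  obtain ⟨j, hj, hR⟩ := hX b' hb
  exact ⟨j, hj.trans_le h, hR⟩

theorem antitone_iUnion_sigmaThreeBox (N : ℕ) : Antitone fun b => ⋃ k, sigmaThreeBox R N b k := by
  refine fun b b' h => Set.iUnion_mono ?_
  rintro k X ⟨a, ha, hX⟩
  exact ⟨a, ha, fun c hc => hX c (hc.trans_le h)⟩

theorem monotone_iInter_iUnion_sigmaThreeBox :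
    Monotone fun N => ⋂ b, ⋃ k, sigmaThreeBox R N b k := by
  refine fun N N' h => Set.iInter_mono fun b => Set.iUnion_mono ?_
  rintro k X ⟨a, ha, hX⟩
  exact ⟨a, ha.trans_le h, hX⟩

theorem sigmaThree_eq_iUnion_iInter_iUnion :
    sigmaThree R = ⋃ N, ⋂ b, ⋃ k, sigmaThreeBox R N b k := by
  ext X
  simp only [Set.mem_iUnion, Set.mem_iInter]
  constructor
  · rintro ⟨a, h⟩
    choose f hf using h
    exact ⟨a + 1, fun b => ⟨(Finset.range b).sup f + 1, a, a.lt_succ_self, fun b' hb =>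
      ⟨f b', Nat.lt_succ_of_le (Finset.le_sup (Finset.mem_range.2 hb)), hf b'⟩⟩⟩
  · rintro ⟨N, h⟩
    by_contra hX
    simp only [sigmaThree, Set.mem_ofPred_eq, not_exists, not_forall] at hX
    choose B hB using hX
    obtain ⟨k, a, ha, hR⟩ := h ((Finset.range N).sup B + 1)
    obtain ⟨j, -, hj⟩ := hR (B a) (Nat.lt_succ_of_le (Finset.le_sup (Finset.mem_range.2 ha)))
    exact hB a j hj

theorem sigmaThreeBox_eq_setOf_initSeg (N b k : ℕ) : sigmaThreeBox R N b k =
    {X | ∃ a < N, ∀ b' < b, ∃ j < k, R a b' ((initSeg X k).take j)} := by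
  ext X
  simp only [sigmaThreeBox, Set.mem_ofPred_eq, take_initSeg]
  refine exists_congr fun a => and_congr_right fun _ => forall₂_congr fun b' _ =>
    exists_congr fun j => and_congr_right fun hj => ?_
  rw [min_eq_left hj.le]

theorem measurableSet_sigmaThreeBox (N b k : ℕ) : MeasurableSet (sigmaThreeBox R N b k) := by
  rw [sigmaThreeBox_eq_setOf_initSeg]
  exact measurableSet_setOf_initSeg (fun L => ∃ a < N, ∀ b' < b, ∃ j < k, R a b' (L.take j)) k

theorem lt_muR_sigmaThree_iff {x : ℝ} :
    x < muR (sigmaThree R) ↔ ∃ N s, ∀ b, ∃ k, x + 2⁻¹ ^ s ≤ muR (sigmaThreeBox R N b k) := by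
  rw [sigmaThree_eq_iUnion_iInter_iUnion]
  constructor
  · intro hx
    obtain ⟨N, hN⟩ := ((tendsto_muR_iUnion (monotone_iInter_iUnion_sigmaThreeBox R)).eventually
      (lt_mem_nhds hx)).exists
    obtain ⟨s, hs⟩ := exists_pow_lt_of_lt_one (sub_pos.2 hN) (show (2⁻¹ : ℝ) < 1 by norm_num)
    refine ⟨N, s, fun b => ?_⟩
    have hb : x + 2⁻¹ ^ s < muR (⋃ k, sigmaThreeBox R N b k) :=
      (lt_sub_iff_add_lt'.1 hs).trans_le (muR_mono (Set.iInter_subset _ b))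
    obtain ⟨k, hk⟩ := ((tendsto_muR_iUnion (monotone_sigmaThreeBox R N b)).eventually
      (lt_mem_nhds hb)).exists
    exact ⟨k, hk.le⟩
  · rintro ⟨N, s, h⟩
    have hN : x + 2⁻¹ ^ s ≤ muR (⋂ b, ⋃ k, sigmaThreeBox R N b k) := by
      refine ge_of_tendsto' (tendsto_muR_iInter
        (fun b => .iUnion (measurableSet_sigmaThreeBox R N b)) (antitone_iUnion_sigmaThreeBox R N))
        fun b => ?_
      obtain ⟨k, hk⟩ := h b
      exact hk.trans (muR_mono (Set.subset_iUnion _ k))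
    calc x < x + 2⁻¹ ^ s := lt_add_of_pos_right x (by positivity)
      _ ≤ _ := hN.trans (muR_mono (Set.subset_iUnion_of_subset N subset_rfl))

end

/-- The numerator over `2 ^ k` of the measure of `sigmaThreeBox R N b k`. -/
noncomputable def sigmaThreeBoxCount (R : ℕ → ℕ → List Bool → Prop) (N b k : ℕ) : ℕ :=
  Nat.count (fun i => ∃ a < N, ∀ b' < b, ∃ j < k, R a b' ((bitString k i).take j)) (2 ^ k)

theorem primrec_sigmaThreeBoxCount {R : ℕ → ℕ → List Bool → Prop}
    (hR : PrimrecPred fun x : ℕ × ℕ × List Bool => R x.1 x.2.1 x.2.2) {α : Type*} [Primcodable α]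
    {N b k : α → ℕ} (hN : Primrec N) (hb : Primrec b) (hk : Primrec k) :
    Primrec fun a => sigmaThreeBoxCount R (N a) (b a) (k a) := by
  refine primrec_count (by fun_prop) (primrecPred_exists_lt (by fun_prop)
    (primrecPred_forall_lt (by fun_prop) (primrecPred_exists_lt (by fun_prop) ?_)))
  exact hR.comp (f := fun p : (((α × ℕ) × ℕ) × ℕ) × ℕ =>
    (p.1.1.2, p.1.2, (bitString (k p.1.1.1.1) p.1.1.1.2).take p.2)) (by fun_prop)

theorem muR_sigmaThreeBox (R : ℕ → ℕ → List Bool → Prop) (N b k : ℕ) :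
    muR (sigmaThreeBox R N b k) = sigmaThreeBoxCount R N b k / 2 ^ k := by
  rw [sigmaThreeBox_eq_setOf_initSeg, sigmaThreeBoxCount]
  convert muR_setOf_initSeg (fun L => ∃ a < N, ∀ b' < b, ∃ j < k, R a b' (L.take j)) k

theorem IsSigmaThree.leftCeIn {S : Set Cantor} (h : IsSigmaThree S) :
    LeftCeIn (iterJump 2) (muR S) := by
  obtain ⟨R, hR, rfl⟩ := h
  have hbox : ∀ (q : ℚ) (N b k s : ℕ), ¬ RatCodeGT (Encodable.encode q)
      (sigmaThreeBoxCount R N b k * 2 ^ s) (2 ^ k) (2 ^ (k + s)) ↔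
      (q : ℝ) + 2⁻¹ ^ s ≤ muR (sigmaThreeBox R N b k) := fun q N b k s => by
    rw [ratCodeGT_encode, not_lt, muR_sigmaThreeBox, le_div_iff₀ (by positivity),
      ← mul_le_mul_iff_left₀ (b := (_ + _) * _) (show (0 : ℝ) < 2 ^ s by positivity)]
    push_cast
    rw [show ((q : ℝ) + 2⁻¹ ^ s) * 2 ^ k * 2 ^ s = q * 2 ^ (k + s) + 2 ^ k by
      rw [inv_pow, pow_add]; field_simp]
  have hcount : Primrec fun x : ℕ × ℕ × ℕ × ℕ =>
      sigmaThreeBoxCount R x.2.1.unpair.1 x.2.2.1 x.2.2.2 :=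
    primrec_sigmaThreeBoxCount hR (by fun_prop) (by fun_prop) (by fun_prop)
  rw [LeftCeIn, ceIn_iterJump_two_iff]
  refine ⟨fun m a b k => IsRatCode m ∧ ¬ RatCodeGT m
    (sigmaThreeBoxCount R a.unpair.1 b k * 2 ^ a.unpair.2) (2 ^ k) (2 ^ (k + a.unpair.2)),
    by fun_prop, fun m => ?_⟩
  simp only [Set.mem_ofPred_eq, lt_muR_sigmaThree_iff, isRatCode_iff]
  constructor
  · rintro ⟨q, rfl, N, s, h⟩
    refine ⟨Nat.pair N s, fun b => ?_⟩
    obtain ⟨k, hk⟩ := h b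
    exact ⟨k, ⟨q, rfl⟩, by simpa only [Nat.unpair_pair, hbox] using hk⟩
  · rintro ⟨a, h⟩
    obtain ⟨-, ⟨q, rfl⟩, -⟩ := h 0
    refine ⟨q, rfl, a.unpair.1, a.unpair.2, fun b => ?_⟩
    obtain ⟨k, -, hk⟩ := h b
    exact ⟨k, (hbox _ _ _ _ _).1 hk⟩

theorem IsSigmaThree.diff_extends {S : Set Cantor} (h : IsSigmaThree S) (σ : List Bool) :
    IsSigmaThree (S \ {X | Extends X σ}) := by
  obtain ⟨R, hR, rfl⟩ := h
  have hex : PrimrecPred fun x : ℕ × ℕ × List Bool =>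
      ∃ j < x.2.2.length + 1, R x.1 x.2.1 (x.2.2.take j) :=
    primrecPred_exists_lt (by fun_prop) (hR.comp
      (f := fun p : (ℕ × ℕ × List Bool) × ℕ => (p.1.1, p.1.2.1, p.1.2.2.take p.2)) (by fun_prop))
  refine ⟨fun a b L => ¬ L.take σ.length = σ ∧ σ.length ≤ L.length ∧
    ∃ j < L.length + 1, R a b (L.take j), by fun_prop, ?_⟩
  ext X
  simp only [sigmaThree, Set.mem_sdiff, Set.mem_ofPred_eq, length_initSeg, take_initSeg, Extends]
  constructor
  · rintro ⟨⟨a, h⟩, hσ⟩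
    refine ⟨a, fun b => ?_⟩
    obtain ⟨k, hk⟩ := h b
    refine ⟨max k σ.length, ?_, le_max_right _ _, k, Nat.lt_succ_of_le (le_max_left _ _), ?_⟩
    · rwa [min_eq_left (le_max_right _ _)]
    · rwa [min_eq_left (le_max_left _ _)]
  · rintro ⟨a, h⟩
    refine ⟨⟨a, fun b => ?_⟩, ?_⟩
    · obtain ⟨k, -, -, j, -, hj⟩ := h b
      exact ⟨_, hj⟩
    · obtain ⟨k, hσ, hk, -⟩ := h 0
      rwa [min_eq_left hk] at hσ

/-! ### Cofiniteness and computability of the domain -/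

open Nat.Partrec (Code)

theorem map_toNat_initSeg (X : Cantor) (k : ℕ) :
    (initSeg X k).map Bool.toNat = oracleSeg (oX X) k := by
  simp only [initSeg, oracleSeg, List.map_map]
  rfl

@[fun_prop]
theorem primrec_toNat {α : Type*} [Primcodable α] {f : α → Bool} (hf : Primrec f) :
    Primrec fun a => (f a).toNat :=
  (Primrec.dom_finite Bool.toNat).comp hf

theorem mem_domSet_iff {c : CodeO} {X : Cantor} {n : ℕ} :
    n ∈ domSet c X ↔ ∃ k, HaltsBy c.encode ((initSeg X k).map Bool.toNat) n := by
  simp only [map_toNat_initSeg]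
  exact dom_iff_haltsBy

theorem isSigmaThree_COF (c : CodeO) : IsSigmaThree (COF c) := by
  refine ⟨fun a b L => b < a ∨ HaltsBy c.encode (L.map Bool.toNat) b, by fun_prop, ?_⟩
  ext X
  simp only [COF, sigmaThree, Set.mem_ofPred_eq, exists_or, ← mem_domSet_iff, exists_const]
  constructor
  · intro h
    obtain ⟨N, hN⟩ := h.bddAbove
    exact ⟨N + 1, fun b => or_iff_not_imp_right.2 fun hb => Nat.lt_succ_of_le (hN hb)⟩
  · rintro ⟨N, h⟩
    exact (Set.finite_lt_nat N).subset fun b hb => (h b).resolve_right hb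

theorem computablePred_iff_exists_code {P : ℕ → Prop} :
    ComputablePred P ↔ ∃ e : Code, ∀ n, e.eval n = Part.some (if P n then 1 else 0) := by
  rw [ComputablePred.computable_iff]
  constructor
  · rintro ⟨f, hf, rfl⟩
    obtain ⟨e, he⟩ := Code.exists_code.1 (Partrec.nat_iff.1
      ((Primrec.dom_finite Bool.toNat).to_comp.comp hf))
    exact ⟨e, fun n => by rw [he]; cases h : f n <;> simp [h]⟩
  · rintro ⟨e, he⟩
    have hcomp : Computable fun n => if P n then 1 else 0 :=
      Partrec.nat_iff.2 (Code.exists_code.2 ⟨e, funext he⟩)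
    exact ⟨_, (Primrec.beq (α := ℕ)).to_comp.comp hcomp (Computable.const 1), by simp⟩

theorem mem_COM_iff {c : CodeO} {X : Cantor} :
    X ∈ COM c ↔ ∃ e : Code, ∀ n m, ∃ k, m ≤ k ∧
      (Code.evaln k e n = some 1 ∧ HaltsBy c.encode ((initSeg X k).map Bool.toNat) n ∨
        Code.evaln k e n = some 0 ∧ ¬ HaltsBy c.encode ((initSeg X m).map Bool.toNat) n) := by
  simp only [COM, Set.mem_ofPred_eq, computablePred_iff_exists_code]
  refine exists_congr fun e => ⟨fun he n m => ?_, fun h n => ?_⟩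
  · obtain ⟨k, hk⟩ := Code.evaln_complete.1 (Part.eq_some_iff.1 (he n))
    by_cases hn : n ∈ domSet c X
    · obtain ⟨l, hl⟩ := mem_domSet_iff.1 hn
      refine ⟨max m (max k l), le_max_left _ _, Or.inl ⟨?_, ?_⟩⟩
      · rw [if_pos hn] at hk
        exact Code.evaln_mono (by omega) hk
      · rw [map_toNat_initSeg] at hl ⊢
        exact hl.mono (by omega)
    · rw [if_neg hn] at hk
      exact ⟨max m k, le_max_left _ _, Or.inr
        ⟨Code.evaln_mono (by omega) hk, fun h => hn (mem_domSet_iff.2 ⟨_, h⟩)⟩⟩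
  · refine Part.eq_some_iff.2 ?_
    by_cases hn : n ∈ domSet c X
    · obtain ⟨m, hm⟩ := mem_domSet_iff.1 hn
      obtain ⟨k, -, ⟨he, -⟩ | ⟨-, hk⟩⟩ := h n m
      · rw [if_pos hn]
        exact Code.evaln_sound he
      · exact absurd hm hk
    · obtain ⟨k, -, ⟨-, hk⟩ | ⟨he, -⟩⟩ := h n 0
      · exact absurd (mem_domSet_iff.2 ⟨_, hk⟩) hn
      · rw [if_neg hn]
        exact Code.evaln_sound he

theorem isSigmaThree_COM (c : CodeO) : IsSigmaThree (COM c) := by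
  have hcode : Primrec fun x : ℕ × ℕ × List Bool => Denumerable.ofNat Code x.1 :=
    (Primrec.ofNat Code).comp Primrec.fst
  refine ⟨fun a b L => b.unpair.2 ≤ L.length ∧
    (Code.evaln L.length (Denumerable.ofNat Code a) b.unpair.1 = some 1 ∧
        HaltsBy c.encode (L.map Bool.toNat) b.unpair.1 ∨
      Code.evaln L.length (Denumerable.ofNat Code a) b.unpair.1 = some 0 ∧
        ¬ HaltsBy c.encode ((L.take b.unpair.2).map Bool.toNat) b.unpair.1), by fun_prop, ?_⟩
  ext X
  simp only [mem_COM_iff, sigmaThree, Set.mem_ofPred_eq, length_initSeg, take_initSeg]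
  constructor
  · rintro ⟨e, h⟩
    refine ⟨Encodable.encode e, fun b => ?_⟩
    obtain ⟨k, hk, h⟩ := h b.unpair.1 b.unpair.2
    exact ⟨k, hk, by rwa [Denumerable.ofNat_encode, min_eq_left hk]⟩
  · rintro ⟨a, h⟩
    refine ⟨Denumerable.ofNat Code a, fun n m => ?_⟩
    obtain ⟨k, hk, h⟩ := h (Nat.pair n m)
    rw [Nat.unpair_pair] at hk h
    exact ⟨k, hk, by rwa [min_eq_left hk] at h⟩

/-! ### Machines realizing `Σ⁰₃` classes -/

theorem mu_eq_infinitePi :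
    mu = Measure.infinitePi fun _ => (PMF.uniformOfFintype Bool).toMeasure := by
  refine measure_ext_of_cylinder fun X n => ?_
  have hcyl : PiNat.cylinder X n = Set.pi (Finset.range n) fun i => {X i} := by
    ext Y
    simp [PiNat.mem_cylinder_iff, Set.mem_pi]
  rw [mu_cylinder, hcyl, Measure.infinitePi_pi _ fun _ _ => measurableSet_singleton _]
  simp

theorem mu_setOf_eqOn_eq_zero {E : Set ℕ} (hE : E.Infinite) (W : Cantor) :
    mu {Z | Set.EqOn Z W E} = 0 := by
  have hle : ∀ m : ℕ, mu {Z | Set.EqOn Z W E} ≤ 2⁻¹ ^ m := fun m => by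
    obtain ⟨t, ht, rfl⟩ := hE.exists_subset_card_eq m
    calc mu {Z | Set.EqOn Z W E} ≤ mu (Set.pi t fun i => {W i}) :=
          measure_mono fun Z hZ i hi => hZ (ht hi)
      _ = 2⁻¹ ^ t.card := by
          rw [mu_eq_infinitePi, Measure.infinitePi_pi _ fun _ _ => measurableSet_singleton _]
          simp
  exact le_antisymm (ge_of_tendsto' (ENNReal.tendsto_pow_atTop_nhds_zero_of_lt_one
    (ENNReal.inv_lt_one.2 (by norm_num))) hle) bot_le

theorem map_decide_oracleSeg_oX (X : Cantor) (k : ℕ) :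
    (oracleSeg (oX X) k).map (fun x => decide (x = 1)) = initSeg X k := by
  rw [← map_toNat_initSeg, List.map_map]
  exact List.map_id'' (fun b => by cases b <;> rfl) _

theorem exists_mem_domSet_iff {P : List Bool → ℕ → Prop}
    (hP : PrimrecPred fun p : List Bool × ℕ => P p.1 p.2) :
    ∃ c : CodeO, ∀ X n, n ∈ domSet c X ↔ ∃ k, P (initSeg X k) n := by
  have hg : Primrec fun p : List ℕ × ℕ =>
      if P (p.1.map fun i => decide (i = 1)) p.2 then some 0 else (none : Option ℕ) :=
    Primrec.ite (hP.comp (f := fun p : List ℕ × ℕ => (p.1.map fun i => decide (i = 1), p.2))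
      (by fun_prop)) (by fun_prop) (by fun_prop)
  obtain ⟨c, hc⟩ := CodeO.exists_eval_eq_rfindOpt
    (g := fun L n => if P (L.map fun i => decide (i = 1)) n then some 0 else none) hg
  refine ⟨c, fun X n => ?_⟩
  simp [domSet, evalO, hc, Nat.rfindOpt_dom, map_decide_oracleSeg_oX]

/-- The deficiency set of `h : ℕ → ℕ`: the arguments whose value is not exceeded by all later
ones. -/
def deficiencySet (h : ℕ → ℕ) : Set ℕ :=
  {s | ∃ t, s < t ∧ h t ≤ h s}

theorem finite_compl_deficiencySet {h : ℕ → ℕ} {v : ℕ} (hv : {s | h s = v}.Infinite) :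
    (deficiencySet h)ᶜ.Finite := by
  have hlt : ∀ s ∈ (deficiencySet h)ᶜ, ∀ t, s < t → h s < h t := fun s hs t ht =>
    not_le.1 fun hle => hs ⟨t, ht, hle⟩
  refine Set.Finite.of_finite_image (f := h) ((Set.finite_lt_nat v).subset ?_) ?_
  · rintro _ ⟨s, hs, rfl⟩
    obtain ⟨t, rfl, hst⟩ := hv.exists_gt s
    exact hlt s hs t hst
  · exact StrictMonoOn.injOn fun s hs t _ hst => hlt s hs t hst

theorem infinite_compl_deficiencySet {h : ℕ → ℕ} (hfin : ∀ v, {s | h s = v}.Finite) :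
    (deficiencySet h)ᶜ.Infinite := by
  rw [Set.infinite_iff_exists_gt]
  intro N
  obtain ⟨s₀, hs₀, hmin⟩ := exists_minimalFor_of_wellFoundedLT (N < ·) h ⟨N + 1, N.lt_succ_self⟩
  obtain ⟨s, hs, hmax⟩ := (hfin (h s₀)).exists_maximalFor id _ ⟨s₀, rfl⟩
  have hle : s₀ ≤ s := by
    rcases le_total s₀ s with hle | hle
    · exact hle
    · exact hmax rfl hle
  refine ⟨s, ?_, hs₀.trans_le hle⟩
  rintro ⟨t, hst, hts⟩
  rw [hs] at hts
  have ht : h t = h s₀ := hts.antisymm (hmin (hs₀.trans_le (hle.trans hst.le)) hts)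
  exact hst.not_ge (hmax ht hst.le)

/-- `k` is the first stage by which every `b' ≤ b` has a witness `j ≤ k` for `Q a b' j`. -/
def IsFirstStage (Q : ℕ → ℕ → ℕ → Prop) (a b k : ℕ) : Prop :=
  (∀ b' < b + 1, ∃ j < k + 1, Q a b' j) ∧ ∀ i < k, ¬ ∀ b' < b + 1, ∃ j < i + 1, Q a b' j

/-- A function taking the value `a` infinitely often exactly when `∀ b, ∃ k, Q a b k`: stages
coding a progress of `a` have value `a`, and all other ones are their own values. -/
noncomputable def stageRank (Q : ℕ → ℕ → ℕ → Prop) (s : ℕ) : ℕ :=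
  if IsFirstStage Q s.unpair.1 s.unpair.2.unpair.1 s.unpair.2.unpair.2 then s.unpair.1 else s

theorem stageRank_congr {Q Q' : ℕ → ℕ → ℕ → Prop} {s : ℕ}
    (h : ∀ a b, ∀ k ≤ s, Q a b k ↔ Q' a b k) : stageRank Q s = stageRank Q' s := by
  have hk : s.unpair.2.unpair.2 ≤ s := (Nat.unpair_right_le _).trans (Nat.unpair_right_le _)
  have hcover : ∀ a b, ∀ k ≤ s, (∀ b' < b + 1, ∃ j < k + 1, Q a b' j) ↔
      ∀ b' < b + 1, ∃ j < k + 1, Q' a b' j := fun a b k hk =>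
    forall₂_congr fun b' _ => exists_congr fun j => and_congr_right fun hj => h a b' j (by omega)
  have hfirst : ∀ a b, ∀ k ≤ s, IsFirstStage Q a b k ↔ IsFirstStage Q' a b k := fun a b k hk =>
    and_congr (hcover a b k hk) (forall₂_congr fun i hi => not_congr (hcover a b i (by omega)))
  simp only [stageRank, hfirst _ _ _ hk]

theorem IsFirstStage.unique {Q : ℕ → ℕ → ℕ → Prop} {a b k k' : ℕ} (h : IsFirstStage Q a b k)
    (h' : IsFirstStage Q a b k') : k = k' :=
  le_antisymm (not_lt.1 fun hlt => h.2 _ hlt h'.1) (not_lt.1 fun hlt => h'.2 _ hlt h.1)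

theorem infinite_setOf_stageRank_eq {Q : ℕ → ℕ → ℕ → Prop} {a : ℕ} (h : ∀ b, ∃ k, Q a b k) :
    {s | stageRank Q s = a}.Infinite := by
  have hfirst : ∀ b, ∃ k, IsFirstStage Q a b k := fun b => by
    have hex : ∃ k, ∀ b' < b + 1, ∃ j < k + 1, Q a b' j := by
      choose f hf using h
      refine ⟨(Finset.range (b + 1)).sup f, fun b' hb => ⟨f b', ?_, hf b'⟩⟩
      exact Nat.lt_succ_of_le (Finset.le_sup (f := f) (Finset.mem_range.2 hb))
    exact ⟨Nat.find hex, Nat.find_spec hex, fun i hi => Nat.find_min hex hi⟩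
  choose k hk using hfirst
  refine Set.infinite_of_injective_forall_mem (f := fun b => Nat.pair a (Nat.pair b (k b)))
    (fun b b' hb => ?_) fun b => ?_
  · exact (Nat.pair_eq_pair.1 (Nat.pair_eq_pair.1 hb).2).1
  · simp [stageRank, hk]

theorem finite_setOf_stageRank_eq {Q : ℕ → ℕ → ℕ → Prop} {a : ℕ} (h : ¬ ∀ b, ∃ k, Q a b k) :
    {s | stageRank Q s = a}.Finite := by
  push Not at h
  obtain ⟨b, hb⟩ := h
  refine ((Set.finite_lt_nat b).biUnion fun b' _ => Set.Subsingleton.finite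
    (s := {s | ∃ k, s = Nat.pair a (Nat.pair b' k) ∧ IsFirstStage Q a b' k}) ?_).insert a |>.subset
      fun s hs => ?_
  · rintro _ ⟨k, rfl, hk⟩ _ ⟨k', rfl, hk'⟩
    rw [hk.unique hk']
  · have hs : stageRank Q s = a := hs
    unfold stageRank at hs
    split_ifs at hs with hfirst
    · rw [hs] at hfirst
      refine Or.inr (Set.mem_biUnion (x := s.unpair.2.unpair.1) ?_
        ⟨s.unpair.2.unpair.2, ?_, hfirst⟩)
      · by_contra hle
        obtain ⟨j, -, hj⟩ := hfirst.1 b (Nat.lt_succ_of_le (not_lt.1 hle))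
        exact hb j hj
      · rw [Nat.pair_unpair, ← hs, Nat.pair_unpair]
    · exact Or.inl hs

/-- The string of the first `k` bits at even positions of `L`. -/
def evenBits (L : List Bool) (k : ℕ) : List Bool :=
  (List.range k).map fun i => (L[2 * i]?).getD false

theorem evenBits_initSeg_interleave (Y Z : Cantor) {l k : ℕ} (h : 2 * k ≤ l) :
    evenBits (initSeg (interleave (Y, Z)) l) k = initSeg Y k := by
  refine List.map_congr_left fun i hi => ?_
  rw [List.mem_range] at hi
  have hil : 2 * i < l := by omega
  simp [initSeg, interleave, hil]

/-- The machine realizing `sigmaThree R` is seen to halt on `n` from the initial segment `L` of the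
oracle `interleave (Y, Z)`: either `Z n = true`, or `n` is in the deficiency set of the stage rank
of `fun a b k => R a b (Y ↾ k)`. -/
def HaltsDeficient (R : ℕ → ℕ → List Bool → Prop) (L : List Bool) (n : ℕ) : Prop :=
  L[2 * n + 1]? = some true ∨ ∃ t < L.length / 2, n < t ∧
    stageRank (fun a b k => R a b (evenBits L k)) t ≤
      stageRank (fun a b k => R a b (evenBits L k)) n

theorem primrecPred_haltsDeficient {R : ℕ → ℕ → List Bool → Prop}
    (hR : PrimrecPred fun x : ℕ × ℕ × List Bool => R x.1 x.2.1 x.2.2) :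
    PrimrecPred fun p : List Bool × ℕ => HaltsDeficient R p.1 p.2 := by
  have hcover : PrimrecPred fun x : List Bool × ℕ × ℕ × ℕ =>
      ∀ b' < x.2.2.1 + 1, ∃ j < x.2.2.2 + 1, R x.2.1 b' (evenBits x.1 j) := by
    refine primrecPred_forall_lt (by fun_prop) (primrecPred_exists_lt (by fun_prop) ?_)
    unfold evenBits
    exact hR.comp (f := fun p : ((List Bool × ℕ × ℕ × ℕ) × ℕ) × ℕ => (p.1.1.2.1, p.1.2,
      (List.range p.2).map fun i => (p.1.1.1[2 * i]?).getD false)) (by fun_prop)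
  have hfirst : PrimrecPred fun x : List Bool × ℕ × ℕ × ℕ =>
      IsFirstStage (fun a b k => R a b (evenBits x.1 k)) x.2.1 x.2.2.1 x.2.2.2 :=
    hcover.and (primrecPred_forall_lt (by fun_prop) (PrimrecPred.not (hcover.comp
      (f := fun p : (List Bool × ℕ × ℕ × ℕ) × ℕ => (p.1.1, p.1.2.1, p.1.2.2.1, p.2))
      (by fun_prop))))
  have hrank : Primrec fun x : List Bool × ℕ =>
      stageRank (fun a b k => R a b (evenBits x.1 k)) x.2 :=
    Primrec.ite (hfirst.comp (f := fun x : List Bool × ℕ => (x.1, x.2.unpair.1,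
      x.2.unpair.2.unpair.1, x.2.unpair.2.unpair.2)) (by fun_prop)) (by fun_prop) (by fun_prop)
  refine PrimrecPred.or (by fun_prop) (primrecPred_exists_lt (by fun_prop)
    (PrimrecPred.and (by fun_prop) (primrecPred_le ?_ ?_)))
  · exact hrank.comp (g := fun p : (List Bool × ℕ) × ℕ => (p.1.1, p.2)) (by fun_prop)
  · exact hrank.comp (g := fun p : (List Bool × ℕ) × ℕ => (p.1.1, p.1.2)) (by fun_prop)

theorem exists_haltsDeficient_iff (R : ℕ → ℕ → List Bool → Prop) (Y Z : Cantor) (n : ℕ) :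
    (∃ k, HaltsDeficient R (initSeg (interleave (Y, Z)) k) n) ↔
      Z n = true ∨ n ∈ deficiencySet (stageRank fun a b k => R a b (initSeg Y k)) := by
  have hodd : interleave (Y, Z) (2 * n + 1) = Z n := by
    simp [interleave, show (2 * n + 1) / 2 = n by omega]
  have hrank : ∀ {l s}, 2 * s ≤ l →
      stageRank (fun a b k => R a b (evenBits (initSeg (interleave (Y, Z)) l) k)) s =
        stageRank (fun a b k => R a b (initSeg Y k)) s := fun {l s} hs =>
    stageRank_congr fun a b k hk => by rw [evenBits_initSeg_interleave Y Z (by omega)]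
  simp only [HaltsDeficient, length_initSeg, deficiencySet, Set.mem_ofPred_eq]
  constructor
  · rintro ⟨k, h | ⟨t, ht, hnt, h⟩⟩
    · obtain ⟨hk, h⟩ := List.getElem?_eq_some_iff.1 h
      simp only [initSeg, List.getElem_map, List.getElem_range, hodd] at h
      exact Or.inl h
    · rw [hrank (by omega), hrank (by omega)] at h
      exact Or.inr ⟨t, hnt, h⟩
  · rintro (h | ⟨t, hnt, h⟩)
    · exact ⟨2 * n + 2, Or.inl (by simp [initSeg, hodd, h])⟩
    · exact ⟨2 * t + 2, Or.inr ⟨t, by omega, hnt, by rwa [hrank (by omega), hrank (by omega)]⟩⟩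

theorem computablePred_of_finite_compl {S : Set ℕ} (h : Sᶜ.Finite) :
    ComputablePred fun n => n ∈ S := by
  have hprim : PrimrecPred fun n : ℕ => ¬ ∃ x ∈ h.toFinset.toList, x = n :=
    (PrimrecRel.comp (PrimrecRel.exists_mem_list (R := fun x n : ℕ => x = n) Primrec.eq)
      (Primrec.const h.toFinset.toList) Primrec.id).not
  obtain ⟨hd, hchar⟩ := hprim
  exact ComputablePred.of_eq ⟨hd, hchar.to_comp⟩ fun n => by simp

theorem COF_subset_COM (c : CodeO) : COF c ⊆ COM c :=
  fun _ h => computablePred_of_finite_compl h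

theorem mu_setOf_computablePred_union {D : Set ℕ} (hD : Dᶜ.Infinite) :
    mu {Z | ComputablePred fun n => Z n = true ∨ n ∈ D} = 0 := by
  refine measure_mono_null (t := ⋃ e : Nat.Partrec.Code,
    {Z | Set.EqOn Z (fun n => decide (e.eval n = Part.some 1)) Dᶜ}) (fun Z hZ => ?_)
    (measure_iUnion_null fun e => mu_setOf_eqOn_eq_zero hD _)
  obtain ⟨e, he⟩ := computablePred_iff_exists_code.1 hZ
  refine Set.mem_iUnion.2 ⟨e, fun n hn => ?_⟩
  have hn : n ∉ D := hn
  cases h : Z n <;> simp [he, h, hn]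

theorem muR_eq_of_forall_interleave {S T : Set Cantor} (hS : MeasurableSet S)
    (hT : MeasurableSet T) (hin : ∀ Y ∈ S, ∀ Z, interleave (Y, Z) ∈ T)
    (hout : ∀ Y ∉ S, mu {Z | interleave (Y, Z) ∈ T} = 0) : muR T = muR S := by
  unfold muR
  congr 1
  rw [← mu_map_interleave, Measure.map_apply measurable_interleave hT,
    Measure.prod_apply (measurable_interleave hT), mu_map_interleave,
    ← lintegral_indicator_one hS]
  refine lintegral_congr fun Y => ?_
  by_cases hY : Y ∈ S
  · have huniv : Prod.mk Y ⁻¹' (interleave ⁻¹' T) = Set.univ :=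
      Set.eq_univ_of_forall (hin Y hY)
    simp [huniv, hY]
  · rw [Set.indicator_of_notMem hY]
    exact hout Y hY

theorem IsSigmaThree.exists_muR_eq {S : Set Cantor} (hS : IsSigmaThree S) :
    ∃ c : CodeO, muR (COF c) = muR S ∧ muR (COM c) = muR S := by
  have hSm := hS.measurableSet
  obtain ⟨R, hR, rfl⟩ := hS
  obtain ⟨c, hc⟩ := exists_mem_domSet_iff (primrecPred_haltsDeficient hR)
  have hdom : ∀ Y Z n, n ∈ domSet c (interleave (Y, Z)) ↔
      Z n = true ∨ n ∈ deficiencySet (stageRank fun a b k => R a b (initSeg Y k)) := fun Y Z n =>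
    (hc _ n).trans (exists_haltsDeficient_iff R Y Z n)
  have hin : ∀ Y ∈ sigmaThree R, ∀ Z, interleave (Y, Z) ∈ COF c := by
    rintro Y ⟨a, ha⟩ Z
    exact (finite_compl_deficiencySet (infinite_setOf_stageRank_eq ha)).subset
      (Set.compl_subset_compl.2 fun n hn => (hdom Y Z n).2 (Or.inr hn))
  have hout : ∀ Y ∉ sigmaThree R, mu {Z | interleave (Y, Z) ∈ COM c} = 0 := by
    intro Y hY
    simp only [COM, Set.mem_ofPred_eq, hdom]
    exact mu_setOf_computablePred_union (infinite_compl_deficiencySet fun a =>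
      finite_setOf_stageRank_eq fun ha => hY ⟨a, ha⟩)
  exact ⟨c,
    muR_eq_of_forall_interleave hSm (isSigmaThree_COF c).measurableSet hin
      fun Y hY => measure_mono_null (Set.preimage_mono (COF_subset_COM c)) (hout Y hY),
    muR_eq_of_forall_interleave hSm (isSigmaThree_COM c).measurableSet
      (fun Y hY Z => COF_subset_COM c (hin Y hY Z)) hout⟩

/-! ### Left-c.e. reals as measures of `Σ⁰₃` classes -/

/-- The number with binary expansion `L`, the most significant digit coming first. -/
def stringVal (L : List Bool) : ℕ := L.foldl (fun v d => 2 * v + d.toNat) 0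

@[fun_prop]
theorem primrec_stringVal {α : Type*} [Primcodable α] {f : α → List Bool} (hf : Primrec f) :
    Primrec fun a => stringVal (f a) :=
  Primrec.list_foldl (h := fun _ (p : ℕ × Bool) => 2 * p.1 + p.2.toNat) hf (Primrec.const 0)
    (by unfold Primrec₂; fun_prop)

theorem stringVal_initSeg (X : Cantor) (n : ℕ) : stringVal (initSeg X n) = initVal X n := by
  rw [stringVal, initSeg]
  induction n with
  | zero => rfl
  | succ n ih => rw [List.range_succ, List.map_append, List.foldl_append, ih]; rfl

theorem forall_initVal_digits_le_iff {x q : ℝ} (hx : x ∈ Set.Ico 0 1) :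
    (∀ n, (initVal (digits x) n : ℝ) ≤ q * 2 ^ n) ↔ x ≤ q := by
  have hfloor : ∀ n, (initVal (digits x) n : ℝ) = ⌊x * 2 ^ n⌋ := fun n => by
    exact_mod_cast congrArg (Int.cast (R := ℝ)) (initVal_digits hx n)
  simp only [hfloor]
  constructor
  · intro h
    by_contra! hlt
    obtain ⟨n, hn⟩ := exists_pow_lt_of_lt_one (sub_pos.2 hlt) (show (2⁻¹ : ℝ) < 1 by norm_num)
    rw [inv_pow, inv_lt_iff_one_lt_mul₀ (by positivity)] at hn
    linarith [h n, Int.lt_floor_add_one (x * 2 ^ n)]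
  · intro h n
    exact (Int.floor_le _).trans (by gcongr)

theorem muR_setOf_exists_rat {γ : ℝ} (h0 : 0 ≤ γ) (h1 : γ ≤ 1)
    (hmeas : MeasurableSet {X | ∃ q : ℚ, (q : ℝ) < γ ∧ ∀ n, (initVal X n : ℝ) ≤ q * 2 ^ n}) :
    muR {X | ∃ q : ℚ, (q : ℝ) < γ ∧ ∀ n, (initVal X n : ℝ) ≤ q * 2 ^ n} = γ := by
  have hIco : digits ⁻¹' {X | ∃ q : ℚ, (q : ℝ) < γ ∧ ∀ n, (initVal X n : ℝ) ≤ q * 2 ^ n} ∩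
      Set.Ico 0 1 = Set.Ico 0 γ := by
    ext x
    constructor
    · rintro ⟨⟨q, hq, hxq⟩, hx⟩
      exact ⟨hx.1, ((forall_initVal_digits_le_iff hx).1 hxq).trans_lt hq⟩
    · intro hx
      have hx' : x ∈ Set.Ico 0 1 := ⟨hx.1, hx.2.trans_le h1⟩
      obtain ⟨q, hxq, hq⟩ := exists_rat_btwn hx.2
      exact ⟨⟨q, hq, (forall_initVal_digits_le_iff hx').2 hxq.le⟩, hx'⟩
  rw [muR, mu, Measure.map_apply measurable_digits hmeas,
    Measure.restrict_apply (measurable_digits hmeas), hIco, Real.volume_Ico, sub_zero,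
    ENNReal.toReal_ofReal h0]

theorem LeftCeIn.isSigmaThree {γ : ℝ} (h : LeftCeIn (iterJump 2) γ) :
    IsSigmaThree {X | ∃ q : ℚ, (q : ℝ) < γ ∧ ∀ n, (initVal X n : ℝ) ≤ q * 2 ^ n} := by
  obtain ⟨R, hR, hRγ⟩ := ceIn_iterJump_two_iff.1 h
  have hlt : ∀ q : ℚ, (q : ℝ) < γ ↔ ∃ a, ∀ b, ∃ k, R (Encodable.encode q) a b k := fun q => by
    rw [← hRγ]; simp
  have hR' : PrimrecPred fun x : ℕ × ℕ × List Bool =>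
      ∃ k < x.2.2.length, R x.1.unpair.1 x.1.unpair.2 x.2.1 k :=
    primrecPred_exists_lt (by fun_prop) (hR.comp (f := fun x : (ℕ × ℕ × List Bool) × ℕ =>
      (x.1.1.unpair.1, x.1.1.unpair.2, x.1.2.1, x.2)) (by fun_prop))
  refine ⟨fun a b L => b ≤ L.length ∧ IsRatCode a.unpair.1 ∧
    (∃ k < L.length, R a.unpair.1 a.unpair.2 b k) ∧
    ¬ RatCodeLT a.unpair.1 (stringVal (L.take b)) 0 (2 ^ b), by fun_prop, ?_⟩
  have hle : ∀ (q : ℚ) (X : Cantor) (b k : ℕ), b ≤ k →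
      (¬ RatCodeLT (Encodable.encode q) (stringVal ((initSeg X k).take b)) 0 (2 ^ b) ↔
        (initVal X b : ℝ) ≤ q * 2 ^ b) := fun q X b k hb => by
    rw [take_initSeg, min_eq_left hb, stringVal_initSeg, ratCodeLT_encode, not_lt]
    simp
  ext X
  simp only [sigmaThree, Set.mem_ofPred_eq, length_initSeg]
  constructor
  · rintro ⟨q, hq, hX⟩
    obtain ⟨a, ha⟩ := (hlt q).1 hq
    refine ⟨Nat.pair (Encodable.encode q) a, fun b => ?_⟩
    obtain ⟨k, hk⟩ := ha b
    refine ⟨max b (k + 1), le_max_left .., ?_⟩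
    simp only [Nat.unpair_pair]
    exact ⟨isRatCode_iff.2 ⟨q, rfl⟩, ⟨k, le_max_right _ (k + 1), hk⟩,
      (hle q X b _ (le_max_left ..)).2 (hX b)⟩
  · rintro ⟨a, ha⟩
    obtain ⟨q, hq⟩ := isRatCode_iff.1 (ha 0).choose_spec.2.1
    rw [← hq] at ha
    refine ⟨q, (hlt q).2 ⟨a.unpair.2, fun b => ?_⟩, fun b => ?_⟩
    · obtain ⟨-, -, -, ⟨k, -, hk⟩, -⟩ := ha b
      exact ⟨k, hk⟩
    · obtain ⟨k, hb, -, -, h⟩ := ha b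
      exact (hle q X b k hb).1 h

theorem LeftCeIn.exists_muR_eq {γ : ℝ} (h : LeftCeIn (iterJump 2) γ) (h0 : 0 ≤ γ) (h1 : γ ≤ 1) :
    ∃ c : CodeO, muR (COF c) = γ ∧ muR (COM c) = γ := by
  obtain ⟨c, hcof, hcom⟩ := h.isSigmaThree.exists_muR_eq
  have hγ := muR_setOf_exists_rat h0 h1 h.isSigmaThree.measurableSet
  exact ⟨c, hcof.trans hγ, hcom.trans hγ⟩

/-! ### A left-c.e. random real -/

/-- The dyadic interval `[j / 2 ^ m, (j + 1) / 2 ^ m)`. -/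
def dyadicCell (m j : ℕ) : Set ℝ := Set.Ico ((j : ℝ) / 2 ^ m) (((j : ℝ) + 1) / 2 ^ m)

theorem mem_dyadicCell_iff {m j : ℕ} {x : ℝ} (hx : 0 ≤ x) :
    x ∈ dyadicCell m j ↔ ⌊x * 2 ^ m⌋₊ = j := by
  rw [dyadicCell, Set.mem_Ico, div_le_iff₀ (by positivity), lt_div_iff₀ (by positivity),
    Nat.floor_eq_iff (by positivity)]

theorem dyadicCell_succ_subset (m j : ℕ) : dyadicCell (m + 1) j ⊆ dyadicCell m (j / 2) := by
  have hlo : 2 * ((j / 2 : ℕ) : ℝ) ≤ j := by exact_mod_cast Nat.mul_div_le j 2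
  have hhi : (j : ℝ) + 1 ≤ 2 * ((j / 2 : ℕ) + 1) := by
    exact_mod_cast (show j + 1 ≤ 2 * (j / 2 + 1) by omega)
  refine Set.Ico_subset_Ico ?_ ?_ <;> rw [pow_succ', ← div_div] <;> gcongr <;> linarith

/-- The union of the cells of level `m` in the unit interval which satisfy `V`. -/
def cellUnion (m : ℕ) (V : ℕ → Prop) : Set ℝ :=
  ⋃ j ∈ (Finset.range (2 ^ m)).filter V, dyadicCell m j

theorem mem_cellUnion_iff {m : ℕ} {V : ℕ → Prop} {x : ℝ} (hx : x ∈ Set.Ico (0 : ℝ) 1) :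
    x ∈ cellUnion m V ↔ V ⌊x * 2 ^ m⌋₊ := by
  have hlt : ⌊x * 2 ^ m⌋₊ < 2 ^ m := by
    rw [Nat.floor_lt (mul_nonneg hx.1 (by positivity))]
    push_cast
    exact mul_lt_of_lt_one_left (by positivity) hx.2
  simp [cellUnion, mem_dyadicCell_iff hx.1, hlt]

theorem volume_cellUnion (m : ℕ) (V : ℕ → Prop) :
    volume (cellUnion m V) = ENNReal.ofReal (Nat.count V (2 ^ m) / 2 ^ m) := by
  have hdisj : Set.PairwiseDisjoint Set.univ (dyadicCell m) := fun i _ j _ hij =>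
    Set.disjoint_left.2 fun x hi hj => hij <| by
      have hx : 0 ≤ x := le_trans (by positivity) hi.1
      rw [← (mem_dyadicCell_iff hx).1 hi, ← (mem_dyadicCell_iff hx).1 hj]
  have hcell : ∀ j, volume (dyadicCell m j) = ENNReal.ofReal (1 / 2 ^ m) := fun j => by
    rw [dyadicCell, Real.volume_Ico, ← sub_div, add_sub_cancel_left]
  rw [cellUnion, measure_biUnion_finset (hdisj.subset (Set.subset_univ _))
    fun j _ => measurableSet_Ico, Finset.sum_congr rfl fun j _ => hcell j, Finset.sum_const,
    ← Nat.count_eq_card_filter_range, nsmul_eq_mul, ← ENNReal.ofReal_natCast,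
    ← ENNReal.ofReal_mul (by positivity), mul_one_div]

section

variable {U : ℕ → ℕ → ℕ → Prop}

/-- The cells enumerated at level `m` by `U e` have total length at most `2⁻¹ ^ (e + 2)`. -/
def IsSmall (U : ℕ → ℕ → ℕ → Prop) (e m : ℕ) : Prop :=
  Nat.count (U e m) (2 ^ m) * 2 ^ (e + 2) ≤ 2 ^ m

/-- The `j`-th cell of level `n` lies in `[0, 1 / 4)`, or in a cell which some `U e` with `e ≤ n`
enumerates at a level `m ≤ n` at which it is still small. Covering `[0, 1 / 4)` keeps the leftmost
uncovered point positive. -/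
def IsCovered (U : ℕ → ℕ → ℕ → Prop) (n j : ℕ) : Prop :=
  4 * (j + 1) ≤ 2 ^ n ∨
    ∃ e < n + 1, ∃ m < n + 1, IsSmall U e m ∧ U e m (j / 2 ^ (n - m))

/-- The number of cells of level `n` before the first one which is not covered. -/
noncomputable def firstUncovered (U : ℕ → ℕ → ℕ → Prop) (n : ℕ) : ℕ :=
  Nat.count (fun j => ∀ i < j + 1, IsCovered U n i) (2 ^ n)

theorem lt_firstUncovered_iff {n j : ℕ} :
    j < firstUncovered U n ↔ j < 2 ^ n ∧ ∀ i < j + 1, IsCovered U n i :=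
  lt_count_iff_of_antitone fun _ _ hij h i hi => h i (by omega)

theorem not_isCovered_firstUncovered {n : ℕ} (h : firstUncovered U n < 2 ^ n) :
    ¬ IsCovered U n (firstUncovered U n) := fun hcov =>
  lt_irrefl (firstUncovered U n) <| lt_firstUncovered_iff.2 ⟨h, fun i hi => by
    rcases Nat.lt_succ_iff_lt_or_eq.1 hi with hi | rfl
    · exact (lt_firstUncovered_iff.1 hi).2 i i.lt_succ_self
    · exact hcov⟩

theorem IsCovered.succ {n j : ℕ} (h : IsCovered U n (j / 2)) : IsCovered U (n + 1) j := by
  rcases h with h | ⟨e, he, m, hm, hsmall, hU⟩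
  · left
    rw [pow_succ]
    omega
  · refine Or.inr ⟨e, by omega, m, by omega, hsmall, ?_⟩
    rwa [show n + 1 - m = n - m + 1 by omega, pow_succ', ← Nat.div_div_eq_div_mul]

theorem two_mul_firstUncovered_le (n : ℕ) :
    2 * firstUncovered U n ≤ firstUncovered U (n + 1) := by
  refine le_of_forall_lt fun j hj => lt_firstUncovered_iff.2 ?_
  obtain ⟨hlt, hcov⟩ := lt_firstUncovered_iff.1 (show j / 2 < firstUncovered U n by omega)
  exact ⟨by rw [pow_succ]; omega, fun i hi => (hcov _ (by omega)).succ⟩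

theorem firstUncovered_two_pos : 0 < firstUncovered U 2 :=
  lt_firstUncovered_iff.2 ⟨by norm_num, fun i hi => Or.inl (by omega)⟩

theorem monotone_firstUncovered_div : Monotone fun n => (firstUncovered U n : ℝ) / 2 ^ n := by
  refine monotone_nat_of_le_succ fun n => ?_
  have h : (2 * firstUncovered U n : ℝ) ≤ firstUncovered U (n + 1) := by
    exact_mod_cast two_mul_firstUncovered_le n
  rw [pow_succ', ← div_div]
  gcongr
  linarith

theorem monotone_cellUnion (hU : ∀ e m j, U e m (j / 2) → U e (m + 1) j) (e : ℕ) :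
    Monotone fun m => cellUnion m (U e m) ∩ Set.Ico 0 1 := by
  refine monotone_nat_of_le_succ fun m x hx => ⟨?_, hx.2⟩
  have hxU := (mem_cellUnion_iff hx.2).1 hx.1
  refine (mem_cellUnion_iff hx.2).2 (hU _ _ _ ?_)
  rwa [← Nat.floor_div_ofNat, pow_succ, ← mul_assoc, mul_div_cancel_right₀ _ two_ne_zero]

theorem volume_iUnion_cellUnion_le (hU : ∀ e m j, U e m (j / 2) → U e (m + 1) j)
    (e N : ℕ) :
    volume {x ∈ Set.Ico (0 : ℝ) 1 | ∃ m < N, IsSmall U e m ∧ x ∈ cellUnion m (U e m)} ≤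
      ENNReal.ofReal (2⁻¹ ^ (e + 2)) := by
  induction N with
  | zero => simp
  | succ N ih =>
    by_cases hN : IsSmall U e N
    · calc volume _ ≤ volume (cellUnion N (U e N)) := by
            refine measure_mono ?_
            rintro x ⟨hx, m, hm, -, hxm⟩
            exact (monotone_cellUnion hU e (Nat.le_of_lt_succ hm) ⟨hxm, hx⟩).1
        _ ≤ ENNReal.ofReal (2⁻¹ ^ (e + 2)) := by
            rw [volume_cellUnion]
            refine ENNReal.ofReal_le_ofReal ?_
            rw [inv_pow, div_le_iff₀ (by positivity), inv_mul_eq_div, le_div_iff₀ (by positivity)]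
            exact_mod_cast hN
    · refine (measure_mono ?_).trans ih
      rintro x ⟨hx, m, hm, hsmall, hxm⟩
      refine ⟨hx, m, (Nat.le_of_lt_succ hm).lt_of_ne ?_, hsmall, hxm⟩
      rintro rfl
      exact hN hsmall

theorem Ico_firstUncovered_subset (n : ℕ) :
    Set.Ico (0 : ℝ) (firstUncovered U n / 2 ^ n) ⊆ Set.Ico 0 (1 / 4) ∪
      ⋃ e ∈ Finset.range (n + 1), {x ∈ Set.Ico (0 : ℝ) 1 |
        ∃ m < n + 1, IsSmall U e m ∧ x ∈ cellUnion m (U e m)} := by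
  rintro x ⟨hx0, hx⟩
  rw [lt_div_iff₀ (by positivity)] at hx
  obtain ⟨hlt, hcov⟩ := lt_firstUncovered_iff.1 ((Nat.floor_lt (by positivity)).2 hx)
  have hn : (0 : ℝ) < 2 ^ n := by positivity
  have hfloor := Nat.lt_floor_add_one (x * 2 ^ n)
  have hx1 : x ∈ Set.Ico (0 : ℝ) 1 := by
    refine ⟨hx0, lt_of_mul_lt_mul_right ?_ hn.le⟩
    rw [one_mul]
    exact hfloor.trans_le (by exact_mod_cast hlt)
  rcases hcov _ (Nat.lt_succ_self _) with h | ⟨e, he, m, hm, hsmall, hUm⟩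
  · refine Or.inl ⟨hx0, ?_⟩
    have h' : 4 * ((⌊x * 2 ^ n⌋₊ : ℝ) + 1) ≤ 2 ^ n := by exact_mod_cast h
    nlinarith
  · refine Or.inr (Set.mem_biUnion (Finset.mem_coe.2 (Finset.mem_range.2 he))
      ⟨hx1, m, hm, hsmall, (mem_cellUnion_iff hx1).2 ?_⟩)
    convert hUm using 1
    rw [← Nat.floor_div_natCast]
    congr 1
    rw [Nat.cast_pow, Nat.cast_ofNat, eq_div_iff (by positivity), mul_assoc, ← pow_add,
      Nat.add_sub_cancel' (Nat.le_of_lt_succ hm)]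

theorem firstUncovered_div_le (hU : ∀ e m j, U e m (j / 2) → U e (m + 1) j) (n : ℕ) :
    (firstUncovered U n : ℝ) / 2 ^ n ≤ 3 / 4 := by
  have hgeom : ∑ e ∈ Finset.range (n + 1), (2⁻¹ : ℝ) ^ (e + 2) ≤ 1 / 2 := by
    have h := sum_geometric_two_le (n + 1)
    rw [one_div] at h
    simp_rw [pow_add, ← Finset.sum_mul]
    linarith
  have hvol : volume (Set.Ico (0 : ℝ) (firstUncovered U n / 2 ^ n)) ≤
      ENNReal.ofReal (1 / 4 + ∑ e ∈ Finset.range (n + 1), (2⁻¹ : ℝ) ^ (e + 2)) := by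
    rw [ENNReal.ofReal_add (by norm_num) (Finset.sum_nonneg fun _ _ => by positivity),
      ENNReal.ofReal_sum_of_nonneg fun _ _ => by positivity]
    refine (measure_mono (Ico_firstUncovered_subset n)).trans <|
      (measure_union_le _ _).trans (add_le_add (by simp) ?_)
    exact (measure_biUnion_finset_le _ _).trans
      (Finset.sum_le_sum fun e _ => volume_iUnion_cellUnion_le hU e (n + 1))
  rw [Real.volume_Ico, sub_zero] at hvol
  have h := hvol.trans (ENNReal.ofReal_le_ofReal (add_le_add_right hgeom _))
  rw [ENNReal.ofReal_le_ofReal_iff (by norm_num)] at h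
  linarith

end

/-- Within `m` stages of its computation with oracle segment `L`, the code with number `e`
enumerates into component `e + 2` of a test an open interval with rational endpoints which contains
the closure of `dyadicCell m j`. -/
def EnumeratesCell (L : List ℕ) (e m j : ℕ) : Prop :=
  ∃ w < m, IsRatCode w.unpair.1 ∧ IsRatCode w.unpair.2 ∧
    HaltsBy e (L.take m) (Nat.pair (e + 2) w) ∧
    RatCodeLT w.unpair.1 j 0 (2 ^ m) ∧ RatCodeGT w.unpair.2 (j + 1) 0 (2 ^ m)

theorem primrec_firstUncovered_enumeratesCell :
    Primrec fun L : List ℕ => firstUncovered (EnumeratesCell L) L.length := by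
  unfold firstUncovered IsCovered IsSmall EnumeratesCell
  fun_prop

/-- The cells enumerated by the test components with the full oracle `O`. -/
def OracleCell (O : ℕ → ℕ) (e m j : ℕ) : Prop := EnumeratesCell (oracleSeg O m) e m j

theorem enumeratesCell_oracleSeg (O : ℕ → ℕ) {n e m : ℕ} (hmn : m ≤ n) :
    EnumeratesCell (oracleSeg O n) e m = OracleCell O e m := by
  funext j
  simp only [OracleCell, EnumeratesCell, take_oracleSeg, min_eq_left hmn, min_self]

theorem firstUncovered_enumeratesCell (O : ℕ → ℕ) (n : ℕ) :
    firstUncovered (EnumeratesCell (oracleSeg O n)) n = firstUncovered (OracleCell O) n := by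
  have hcov : IsCovered (EnumeratesCell (oracleSeg O n)) n = IsCovered (OracleCell O) n := by
    funext j
    refine propext (or_congr_right (exists_congr fun e => and_congr_right fun _ =>
      exists_congr fun m => and_congr_right fun hm => ?_))
    rw [IsSmall, IsSmall, enumeratesCell_oracleSeg O (Nat.le_of_lt_succ hm)]
  rw [firstUncovered, firstUncovered, hcov]

theorem oracleCell_iff {O : ℕ → ℕ} {e m j : ℕ} : OracleCell O e m j ↔ ∃ p q : ℚ,
    Encodable.encode (p, q) < m ∧
    HaltsBy e (oracleSeg O m) (Nat.pair (e + 2) (Encodable.encode (p, q))) ∧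
    (p : ℝ) < j / 2 ^ m ∧ ((j : ℝ) + 1) / 2 ^ m < q := by
  have hlt : ∀ p : ℚ, RatCodeLT (Encodable.encode p) j 0 (2 ^ m) ↔
      (p : ℝ) < j / 2 ^ m := fun p => by
    rw [ratCodeLT_encode, lt_div_iff₀ (by positivity)]
    simp
  have hgt : ∀ q : ℚ, RatCodeGT (Encodable.encode q) (j + 1) 0 (2 ^ m) ↔
      ((j : ℝ) + 1) / 2 ^ m < q := fun q => by
    rw [ratCodeGT_encode, div_lt_iff₀ (by positivity)]
    simp
  rw [OracleCell, EnumeratesCell, take_oracleSeg, min_self]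
  constructor
  · rintro ⟨w, hw, hp, hq, hhalt, hpj, hjq⟩
    obtain ⟨p, q, rfl⟩ := isRatCode_unpair_iff.1 ⟨hp, hq⟩
    rw [Encodable.encode_prod_val, Nat.unpair_pair] at hpj hjq
    exact ⟨p, q, hw, hhalt, (hlt p).1 hpj, (hgt q).1 hjq⟩
  · rintro ⟨p, q, hw, hhalt, hpj, hjq⟩
    obtain ⟨hp, hq⟩ := isRatCode_unpair_iff.2 ⟨p, q, rfl⟩
    refine ⟨_, hw, hp, hq, hhalt, ?_, ?_⟩ <;> rw [Encodable.encode_prod_val, Nat.unpair_pair]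
    · exact (hlt p).2 hpj
    · exact (hgt q).2 hjq

theorem OracleCell.succ {O : ℕ → ℕ} {e m j : ℕ} (h : OracleCell O e m (j / 2)) :
    OracleCell O e (m + 1) j := by
  obtain ⟨p, q, hw, hhalt, hp, hq⟩ := oracleCell_iff.1 h
  have hlt : (j : ℝ) / 2 ^ (m + 1) < (j + 1) / 2 ^ (m + 1) := by gcongr; linarith
  obtain ⟨hlo, hhi⟩ := (Set.Ico_subset_Ico_iff hlt).1 (dyadicCell_succ_subset m j)
  exact oracleCell_iff.2
    ⟨p, q, hw.trans m.lt_succ_self, hhalt.mono m.le_succ, hp.trans_le hlo, hhi.trans_lt hq⟩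

/-- The leftmost real avoiding `[0, 1 / 4)` and, for each `e`, the cells enumerated into component
`e + 2` of the test with number `e` as long as their total length obeys the bound on a test. -/
noncomputable def leftmostUncovered (O : ℕ → ℕ) : ℝ :=
  ⨆ n, (firstUncovered (OracleCell O) n : ℝ) / 2 ^ n

theorem firstUncovered_oracleCell_div_le (O : ℕ → ℕ) (n : ℕ) :
    (firstUncovered (OracleCell O) n : ℝ) / 2 ^ n ≤ 3 / 4 :=
  firstUncovered_div_le (U := OracleCell O) (fun _ _ _ h => h.succ) n

theorem firstUncovered_div_le_leftmostUncovered (O : ℕ → ℕ) (n : ℕ) :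
    (firstUncovered (OracleCell O) n : ℝ) / 2 ^ n ≤ leftmostUncovered O :=
  le_ciSup (f := fun n => (firstUncovered (OracleCell O) n : ℝ) / 2 ^ n)
    ⟨3 / 4, Set.forall_mem_range.2 (firstUncovered_oracleCell_div_le O)⟩ n

theorem leftmostUncovered_pos (O : ℕ → ℕ) : 0 < leftmostUncovered O :=
  (firstUncovered_div_le_leftmostUncovered O 2).trans_lt' <|
    div_pos (by exact_mod_cast firstUncovered_two_pos) (by norm_num)

theorem leftmostUncovered_le_one (O : ℕ → ℕ) : leftmostUncovered O ≤ 1 :=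
  ciSup_le fun n => (firstUncovered_oracleCell_div_le O n).trans (by norm_num)

theorem leftCeIn_leftmostUncovered (O : ℕ → ℕ) : LeftCeIn O (leftmostUncovered O) := by
  refine leftCeIn_of_approx (B := fun _ => 0) (D := 1) primrec_firstUncovered_enumeratesCell
    (by fun_prop) (fun t => ?_) fun x hx => ?_
  · simpa [approx, firstUncovered_enumeratesCell] using firstUncovered_div_le_leftmostUncovered O t
  · obtain ⟨t, ht⟩ := exists_lt_of_lt_ciSup hx
    exact ⟨t, by simpa [approx, firstUncovered_enumeratesCell] using ht⟩

theorem isSmall_oracleCell {O : ℕ → ℕ} {W : Set ℕ} {e : ℕ}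
    (hW : ∀ m, m ∈ W ↔ ∃ k, HaltsBy e (oracleSeg O k) m)
    (hvol : volume (testSet W (e + 2)) ≤ ENNReal.ofReal (2⁻¹ ^ (e + 2))) (m : ℕ) :
    IsSmall (OracleCell O) e m := by
  have hsub : cellUnion m (OracleCell O e m) ⊆ testSet W (e + 2) := by
    intro x hx
    simp only [cellUnion, Set.mem_iUnion, Finset.mem_filter] at hx
    obtain ⟨j, ⟨-, hj⟩, hxj⟩ := hx
    obtain ⟨p, q, -, hhalt, hp, hq⟩ := oracleCell_iff.1 hj
    exact ⟨p, q, (hW _).2 ⟨m, hhalt⟩, hp.trans_le hxj.1, hxj.2.trans hq⟩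
  have h := (measure_mono hsub).trans hvol
  rw [volume_cellUnion, ENNReal.ofReal_le_ofReal_iff (by positivity), div_le_iff₀ (by positivity),
    inv_pow, inv_mul_eq_div, le_div_iff₀ (by positivity)] at h
  exact_mod_cast h

theorem exists_oracleCell_firstUncovered {O : ℕ → ℕ} {e k : ℕ} {p q : ℚ}
    (hhalt : HaltsBy e (oracleSeg O k) (Nat.pair (e + 2) (Encodable.encode (p, q))))
    (hp : p < leftmostUncovered O) (hq : leftmostUncovered O < q) :
    ∃ n ≥ e, OracleCell O e n (firstUncovered (OracleCell O) n) := by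
  obtain ⟨l, hl⟩ := exists_lt_of_lt_ciSup hp
  obtain ⟨r, hr⟩ := exists_pow_lt_of_lt_one (sub_pos.2 hq) (show (2⁻¹ : ℝ) < 1 by norm_num)
  let n := k + l + r + e + (Encodable.encode (p, q) + 1)
  have hpow : (2⁻¹ : ℝ) ^ n ≤ 2⁻¹ ^ r :=
    pow_le_pow_of_le_one (by norm_num) (by norm_num) (by omega)
  refine ⟨n, by omega, oracleCell_iff.2 ⟨p, q, by omega, hhalt.mono (by omega),
    hl.trans_le (monotone_firstUncovered_div (by omega)), ?_⟩⟩
  rw [add_div, one_div, ← inv_pow]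
  linarith [firstUncovered_div_le_leftmostUncovered O n]

theorem mlRandomIn_leftmostUncovered (O : ℕ → ℕ) : MLRandomIn O (leftmostUncovered O) := by
  rintro W ⟨c, rfl⟩ hvol
  have hW : ∀ m, m ∈ {m | (c.eval O m).Dom} ↔ ∃ k, HaltsBy c.encode (oracleSeg O k) m :=
    fun m => dom_iff_haltsBy
  refine ⟨c.encode + 2, ?_⟩
  rintro ⟨p, q, hmem, hp, hq⟩
  obtain ⟨k, hhalt⟩ := (hW _).1 hmem
  obtain ⟨n, hn, hcell⟩ := exists_oracleCell_firstUncovered hhalt hp hq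
  have hlt : firstUncovered (OracleCell O) n < 2 ^ n := by
    have h := (firstUncovered_oracleCell_div_le O n).trans_lt (show (3 / 4 : ℝ) < 1 by norm_num)
    rw [div_lt_one (by positivity)] at h
    exact_mod_cast h
  exact not_isCovered_firstUncovered hlt <| Or.inr ⟨c.encode, by omega, n, by omega,
    isSmall_oracleCell hW (hvol _) n, by simpa using hcell⟩

/-! ### Randomness of sums of left-c.e. reals -/

theorem volume_le_of_expanding {E : Set ℝ} {φ : ℝ → ℝ} {a : ℝ} (ha : 0 < a)
    (h : ∀ x ∈ E, ∀ y ∈ E, x < y → a * (y - x) ≤ φ y - φ x) :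
    volume E ≤ ENNReal.ofReal a⁻¹ * volume (φ '' E) := by
  have habs : ∀ x ∈ E, ∀ y ∈ E, a * |x - y| ≤ |φ x - φ y| := by
    intro x hx y hy
    rcases lt_trichotomy x y with hxy | rfl | hxy
    · rw [abs_sub_comm, abs_of_pos (sub_pos.2 hxy), abs_sub_comm]
      exact (h x hx y hy hxy).trans (le_abs_self _)
    · simp
    · rw [abs_of_pos (sub_pos.2 hxy)]
      exact (h y hy x hx hxy).trans (le_abs_self _)
  have hanti : AntilipschitzWith (Real.toNNReal a⁻¹) (E.domRestrict φ) :=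
    AntilipschitzWith.of_le_mul_dist fun x y => by
      rw [Real.coe_toNNReal _ (by positivity), inv_mul_eq_div, le_div_iff₀ ha, mul_comm]
      exact habs x x.2 y y.2
  have hvol := hanti.le_hausdorffMeasure_image zero_le_one Set.univ
  rwa [← isometry_subtype_coe.hausdorffMeasure_image (Or.inl zero_le_one), Set.image_univ,
    Set.image_univ, Subtype.range_coe, Set.range_domRestrict, hausdorffMeasure_real,
    ENNReal.rpow_one] at hvol

/- Each point is moved by the shift belonging to the first stage at which it appears; as larger
points appear later, this map expands distances by the factor `a`. -/
theorem volume_iUnion_le_of_mapsTo {β γ : ℕ → ℝ} (hβ : Monotone β) (hγ : Monotone γ) {a : ℝ}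
    (ha : 0 < a) {D : ℕ → Set ℝ} (hD : ∀ s, IsLowerSet (D s)) {T : Set ℝ}
    (hT : ∀ s, ∀ x ∈ D s, β s < x → a * x + γ s ∈ T) :
    volume {x | ∃ s, β s < x ∧ x ∈ D s} ≤ ENNReal.ofReal a⁻¹ * volume T := by
  choose! first hfirst hmin using fun (x : ℝ) (hx : ∃ s, β s < x ∧ x ∈ D s) =>
    (⟨Nat.find hx, Nat.find_spec hx, fun s => Nat.find_min' hx⟩ :
      ∃ n, (β n < x ∧ x ∈ D n) ∧ ∀ s, β s < x ∧ x ∈ D s → n ≤ s)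
  refine (volume_le_of_expanding (φ := fun x => a * x + γ (first x)) ha ?_).trans
    (mul_le_mul_right (measure_mono ?_) _)
  · intro x hx y hy hxy
    have hle : first x ≤ first y := by
      by_contra! hlt
      exact hlt.not_ge (hmin x hx _ ⟨(hβ hlt.le).trans_lt (hfirst x hx).1,
        hD _ hxy.le (hfirst y hy).2⟩)
    have := hγ hle
    linarith
  · rintro _ ⟨x, hx, rfl⟩
    exact hT _ x (hfirst x hx).2 (hfirst x hx).1

section

variable {O : ℕ → ℕ} {β : ℝ} {g : List ℕ → ℕ} {C : ℕ → ℕ → List ℕ → Prop}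
  {A N : ℕ → ℕ → List ℕ → ℕ}

theorem ceIn_ratIntervals (hg : Primrec g)
    (hC : PrimrecPred fun x : ℕ × ℕ × List ℕ => C x.1 x.2.1 x.2.2)
    (hA : Primrec fun x : ℕ × ℕ × List ℕ => A x.1 x.2.1 x.2.2)
    (hN : Primrec fun x : ℕ × ℕ × List ℕ => N x.1 x.2.1 x.2.2) :
    ∃ W, CeIn O W ∧ ∀ i, testSet W i = {x | ∃ a s, C i a (oracleSeg O s) ∧ approx O g s < x ∧
      x < A i a (oracleSeg O s) / 2 ^ N i a (oracleSeg O s)} := by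
  have hsel : Primrec fun x : ℕ × List ℕ × ℕ => (x.2.2.unpair.1, x.1, x.2.1) := by fun_prop
  have hC' : PrimrecPred fun x : ℕ × List ℕ × ℕ => C x.2.2.unpair.1 x.1 x.2.1 :=
    PrimrecPred.comp hC hsel
  have := hA.comp hsel
  have := hN.comp hsel
  refine ⟨_, ceIn_setOf_exists (P := fun a L m =>
    (IsRatCode m.unpair.2.unpair.1 ∧ IsRatCode m.unpair.2.unpair.2) ∧ C m.unpair.1 a L ∧
    ¬ RatCodeLT m.unpair.2.unpair.1 (g L) 0 (2 ^ L.length) ∧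
    ¬ RatCodeGT m.unpair.2.unpair.2 (A m.unpair.1 a L) 0 (2 ^ N m.unpair.1 a L))
    (.and (by fun_prop) (.and hC' (by fun_prop))),
    fun i => ?_⟩
  have hlo : ∀ (p : ℚ) (s : ℕ), ¬ RatCodeLT (Encodable.encode p) (g (oracleSeg O s)) 0 (2 ^ s) ↔
      approx O g s ≤ p := fun p s => by
    rw [ratCodeLT_encode, approx, div_le_iff₀ (by positivity), not_lt]
    simp
  have hhi : ∀ (q : ℚ) (a n : ℕ), ¬ RatCodeGT (Encodable.encode q) a 0 (2 ^ n) ↔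
      (q : ℝ) ≤ a / 2 ^ n := fun q a n => by
    rw [ratCodeGT_encode, le_div_iff₀ (by positivity), not_lt]
    simp
  ext x
  simp only [testSet, Set.mem_ofPred_eq, Nat.unpair_pair, isRatCode_unpair_iff,
    Encodable.encode_prod_val, length_oracleSeg, hlo, hhi]
  constructor
  · rintro ⟨p, q, ⟨a, s, -, hCs, hps, hqs⟩, hpx, hxq⟩
    exact ⟨a, s, hCs, hps.trans_lt hpx, hxq.trans_le hqs⟩
  · rintro ⟨a, s, hCs, hsx, hx⟩
    obtain ⟨p, hp, hpx⟩ := exists_rat_btwn hsx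
    obtain ⟨q, hxq, hq⟩ := exists_rat_btwn hx
    exact ⟨p, q, ⟨a, s, ⟨p, q, rfl⟩, hCs, hp.le, hq.le⟩, hpx, hxq⟩

theorem MLRandomIn.exists_forall_le (hr : MLRandomIn O β) (hg : Primrec g)
    (hC : PrimrecPred fun x : ℕ × ℕ × List ℕ => C x.1 x.2.1 x.2.2)
    (hA : Primrec fun x : ℕ × ℕ × List ℕ => A x.1 x.2.1 x.2.2)
    (hN : Primrec fun x : ℕ × ℕ × List ℕ => N x.1 x.2.1 x.2.2)
    (hvol : ∀ i, volume {x | ∃ a s, C i a (oracleSeg O s) ∧ approx O g s < x ∧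
      x < A i a (oracleSeg O s) / 2 ^ N i a (oracleSeg O s)} ≤ ENNReal.ofReal (2⁻¹ ^ i)) :
    ∃ i, ∀ a s, C i a (oracleSeg O s) → approx O g s < β →
      (A i a (oracleSeg O s) : ℝ) / 2 ^ N i a (oracleSeg O s) ≤ β := by
  obtain ⟨W, hW, htest⟩ := ceIn_ratIntervals (O := O) hg hC hA hN
  obtain ⟨i, hi⟩ := hr W hW fun i => by
    rw [htest]
    exact hvol i
  rw [htest] at hi
  exact ⟨i, fun a s hCs hs => not_lt.1 fun hlt => hi ⟨a, s, hCs, hs, hlt⟩⟩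

end

/-- Stage `L` of pulling back component `i + k` of the test with number `e` along
`x ↦ 2⁻¹ ^ k * x + γ`: the entry `a` consists of `j`, `n` and the code of a rational interval which
has been enumerated and contains the images of all points between the current approximation `g L`
and `j / 2 ^ n`, computed with the current approximation `h L` to `γ`. -/
def PullsBack (e k : ℕ) (g h : List ℕ → ℕ) (i a : ℕ) (L : List ℕ) : Prop :=
  (IsRatCode a.unpair.2.unpair.1 ∧ IsRatCode a.unpair.2.unpair.2) ∧
    HaltsBy e L (Nat.pair (i + k) a.unpair.2) ∧
    RatCodeLT a.unpair.2.unpair.1 (g L + 2 ^ k * h L) 0 (2 ^ k * 2 ^ L.length) ∧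
    RatCodeGT a.unpair.2.unpair.2
      (a.unpair.1.unpair.1 * 2 ^ L.length + 2 ^ k * 2 ^ a.unpair.1.unpair.2 * h L) 0
      (2 ^ k * 2 ^ a.unpair.1.unpair.2 * 2 ^ L.length)

theorem pullsBack_iff {O : ℕ → ℕ} {e k i a s : ℕ} {g h : List ℕ → ℕ} :
    PullsBack e k g h i a (oracleSeg O s) ↔ ∃ p q : ℚ, Encodable.encode (p, q) = a.unpair.2 ∧
      HaltsBy e (oracleSeg O s) (Nat.pair (i + k) (Encodable.encode (p, q))) ∧
      p < 2⁻¹ ^ k * approx O g s + approx O h s ∧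
      2⁻¹ ^ k * ((a.unpair.1.unpair.1 : ℝ) / 2 ^ a.unpair.1.unpair.2) + approx O h s < q := by
  rw [PullsBack, isRatCode_unpair_iff]
  simp only [exists_and_right.symm, length_oracleSeg]
  refine exists_congr fun p => exists_congr fun q => and_congr_right fun hpq => ?_
  rw [← hpq, Encodable.encode_prod_val, Nat.unpair_pair]
  refine and_congr_right fun _ => and_congr ?_ ?_
  · have hval : (2⁻¹ : ℝ) ^ k * approx O g s + approx O h s =
        ((g (oracleSeg O s) + 2 ^ k * h (oracleSeg O s) : ℕ) : ℝ) / (2 ^ k * 2 ^ s : ℕ) := by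
      rw [approx, approx, inv_pow]
      push_cast
      field_simp
    rw [hval, ratCodeLT_encode, lt_div_iff₀ (by positivity), Nat.cast_zero, add_zero]
  · have hval : ∀ j n : ℕ, (2⁻¹ : ℝ) ^ k * ((j : ℝ) / 2 ^ n) + approx O h s =
        ((j * 2 ^ s + 2 ^ k * 2 ^ n * h (oracleSeg O s) : ℕ) : ℝ) / (2 ^ k * 2 ^ n * 2 ^ s : ℕ) :=
      fun j n => by
        rw [approx, inv_pow]
        push_cast
        field_simp
    rw [hval, ratCodeGT_encode, div_lt_iff₀ (by positivity), Nat.cast_zero, add_zero]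

theorem exists_nat_div_two_pow_btwn {x y : ℝ} (hx : 0 ≤ x) (hxy : x < y) :
    ∃ j n : ℕ, x < j / 2 ^ n ∧ (j : ℝ) / 2 ^ n < y := by
  obtain ⟨n, hn⟩ := exists_pow_lt_of_lt_one (sub_pos.2 hxy) (show (2⁻¹ : ℝ) < 1 by norm_num)
  refine ⟨⌊x * 2 ^ n⌋₊ + 1, n, ?_, ?_⟩
  · rw [lt_div_iff₀ (by positivity)]
    exact_mod_cast Nat.lt_floor_add_one (x * 2 ^ n)
  · have hfloor := Nat.floor_le (show 0 ≤ x * 2 ^ n by positivity)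
    rw [inv_pow, inv_lt_iff_one_lt_mul₀ (by positivity)] at hn
    rw [div_lt_iff₀ (by positivity)]
    push_cast
    linarith

section

variable {O : ℕ → ℕ} {β γ : ℝ} {e k : ℕ} {g h : List ℕ → ℕ} {W : Set ℕ}

theorem volume_setOf_pullsBack_le (hg : IsApproxBelow O β g) (hh : IsApproxBelow O γ h)
    (hW : ∀ m, m ∈ W ↔ ∃ s, HaltsBy e (oracleSeg O s) m)
    (hvol : ∀ i, volume (testSet W i) ≤ ENNReal.ofReal (2⁻¹ ^ i)) (i : ℕ) :
    volume {x | ∃ a s, PullsBack e k g h i a (oracleSeg O s) ∧ approx O g s < x ∧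
      x < (a.unpair.1.unpair.1 : ℝ) / 2 ^ a.unpair.1.unpair.2} ≤ ENNReal.ofReal (2⁻¹ ^ i) := by
  let D (s : ℕ) : Set ℝ := {x | ∃ p q : ℚ,
    HaltsBy e (oracleSeg O s) (Nat.pair (i + k) (Encodable.encode (p, q))) ∧
      p < 2⁻¹ ^ k * approx O g s + approx O h s ∧ 2⁻¹ ^ k * x + approx O h s < q}
  have hD : ∀ s, IsLowerSet (D s) := by
    rintro s x y hyx ⟨p, q, hhalt, hp, hq⟩
    refine ⟨p, q, hhalt, hp, hq.trans_le' ?_⟩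
    gcongr
  have hT : ∀ s, ∀ x ∈ D s, approx O g s < x → 2⁻¹ ^ k * x + approx O h s ∈ testSet W (i + k) := by
    rintro s x ⟨p, q, hhalt, hp, hq⟩ hx
    refine ⟨p, q, (hW _).2 ⟨s, hhalt⟩, hp.trans ?_, hq⟩
    gcongr
  calc _ ≤ volume {x | ∃ s, approx O g s < x ∧ x ∈ D s} := by
        refine measure_mono ?_
        rintro x ⟨a, s, ha, hsx, hx⟩
        obtain ⟨p, q, -, hhalt, hp, hq⟩ := pullsBack_iff.1 ha
        refine ⟨s, hsx, p, q, hhalt, hp, hq.trans_le' ?_⟩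
        gcongr
    _ ≤ ENNReal.ofReal (2⁻¹ ^ k)⁻¹ * ENNReal.ofReal (2⁻¹ ^ (i + k)) :=
        (volume_iUnion_le_of_mapsTo hg.monotone hh.monotone (by positivity) hD hT).trans
          (mul_le_mul_right (hvol _) _)
    _ = ENNReal.ofReal (2⁻¹ ^ i) := by
        rw [← ENNReal.ofReal_mul (by positivity), pow_add, mul_comm,
          mul_inv_cancel_right₀ (by positivity)]

theorem exists_pullsBack_of_mem_testSet (hβ : 0 < β) (hg : IsApproxBelow O β g)
    (hh : IsApproxBelow O γ h) (hW : ∀ m, m ∈ W ↔ ∃ s, HaltsBy e (oracleSeg O s) m) {i : ℕ}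
    (hmem : 2⁻¹ ^ k * β + γ ∈ testSet W (i + k)) :
    ∃ a s, PullsBack e k g h i a (oracleSeg O s) ∧
      β < (a.unpair.1.unpair.1 : ℝ) / 2 ^ a.unpair.1.unpair.2 := by
  obtain ⟨p, q, hpq, hp, hq⟩ := hmem
  obtain ⟨t, ht⟩ := (hW _).1 hpq
  have hpow : (0 : ℝ) < 2⁻¹ ^ k := by positivity
  obtain ⟨r, hr⟩ := hh.exists_lt (p - 2⁻¹ ^ k * β) (by linarith)
  obtain ⟨u, hu⟩ := hg.exists_lt ((p - approx O h r) / 2⁻¹ ^ k) (by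
    rw [div_lt_iff₀ hpow]
    linarith)
  rw [div_lt_iff₀ hpow] at hu
  obtain ⟨j, n, hj, hjn⟩ := exists_nat_div_two_pow_btwn hβ.le
    (show β < (q - γ) / 2⁻¹ ^ k by rw [lt_div_iff₀ hpow]; linarith)
  rw [lt_div_iff₀ hpow] at hjn
  have hmono_g := mul_le_mul_of_nonneg_left (hg.monotone (show u ≤ t + r + u by omega)) hpow.le
  have hmono_h := hh.monotone (show r ≤ t + r + u by omega)
  have hle := hh.le (t + r + u)
  refine ⟨Nat.pair (Nat.pair j n) (Encodable.encode (p, q)), t + r + u,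
    pullsBack_iff.2 ⟨p, q, by simp, ht.mono (by omega), by linarith, ?_⟩, by simpa using hj⟩
  simp only [Nat.unpair_pair]
  linarith

end

theorem MLRandomIn.inv_two_pow_mul_add {O : ℕ → ℕ} {β γ : ℝ} (hr : MLRandomIn O β) (hβ : 0 < β)
    (hβO : LeftCeIn O β) (hγ : 0 ≤ γ) (hγO : LeftCeIn O γ) (k : ℕ) :
    MLRandomIn O (2⁻¹ ^ k * β + γ) := by
  obtain ⟨g, hg⟩ := hβO.exists_isApproxBelow hβ.le
  obtain ⟨h, hh⟩ := hγO.exists_isApproxBelow hγ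
  rintro W ⟨c, rfl⟩ hvol
  have hW : ∀ m, m ∈ {m | (c.eval O m).Dom} ↔ ∃ k, HaltsBy c.encode (oracleSeg O k) m :=
    fun m => dom_iff_haltsBy
  have hgp := hg.primrec
  have hhp := hh.primrec
  obtain ⟨i, hi⟩ := hr.exists_forall_le (C := PullsBack c.encode k g h)
    (A := fun _ a _ => a.unpair.1.unpair.1) (N := fun _ a _ => a.unpair.1.unpair.2) hgp
    (by unfold PullsBack; fun_prop) (by fun_prop) (by fun_prop)
    (volume_setOf_pullsBack_le hg hh hW hvol)
  refine ⟨i + k, fun hmem => ?_⟩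
  obtain ⟨a, s, ha, hlt⟩ := exists_pullsBack_of_mem_testSet hβ hg hh hW hmem
  exact (hi a s ha (hg.lt hβ s)).not_gt hlt

/-! ### The Kučera–Slaman theorem -/

/- The points lie between the values at consecutive stages of `r s = max {α t + c * (β s - β t) :
t ≤ s}`, in the part of that step which comes from the growth of `c * β`. -/
theorem volume_setOf_lt_add_le {α β : ℕ → ℝ} (hα : Monotone α) (hβ : Monotone β) {c : ℝ}
    (hc : 0 ≤ c) (h0 : 0 ≤ β 0) (h1 : ∀ s, β s ≤ 1) :
    volume {x | ∃ t s, t ≤ s ∧ α s < x ∧ x < α t + c * (β s - β t)} ≤ ENNReal.ofReal c := by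
  let r (s : ℕ) : ℝ := c * β s + partialSups (fun t => α t - c * β t) s
  have hle : ∀ {t s}, t ≤ s → α t + c * (β s - β t) ≤ r s := fun {t s} hts => by
    have := le_partialSups_of_le (fun t => α t - c * β t) hts
    linarith
  have hsub : {x | ∃ t s, t ≤ s ∧ α s < x ∧ x < α t + c * (β s - β t)} ⊆
      ⋃ j, Set.Ico (r j) (r j + c * (β (j + 1) - β j)) := by
    rintro x ⟨t, s, hts, hsx, hx⟩
    have hex : ∃ s, x < r s := ⟨s, hx.trans_le (hle hts)⟩
    have hns : Nat.find hex ≤ s := Nat.find_min' hex (hx.trans_le (hle hts))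
    have hαx : α (Nat.find hex) < x := (hα hns).trans_lt hsx
    have hxn : x < r (Nat.find hex) := Nat.find_spec hex
    rcases hn : Nat.find hex with _ | j
    · simp only [hn, r, partialSups_zero] at hαx hxn
      linarith
    · have hj : r j ≤ x := not_lt.1 (Nat.find_min hex (by omega))
      refine Set.mem_iUnion.2 ⟨j, hj, ?_⟩
      rw [hn] at hαx hxn
      simp only [r, partialSups_add_one, ← max_add_add_left, lt_sup_iff] at hxn ⊢
      rcases hxn with hxn | hxn <;> linarith
  refine (measure_mono hsub).trans ((measure_iUnion_le _).trans
    (ENNReal.tsum_le_of_sum_range_le fun n => ?_))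
  simp only [Real.volume_Ico, add_sub_cancel_left]
  rw [← ENNReal.ofReal_sum_of_nonneg fun j _ => mul_nonneg hc (sub_nonneg.2 (hβ j.le_succ)),
    ← Finset.mul_sum, Finset.sum_range_sub]
  exact ENNReal.ofReal_le_ofReal (mul_le_of_le_one_right hc (by linarith [h1 n]))

section

variable {O : ℕ → ℕ} {α β : ℝ} {g h : List ℕ → ℕ}

theorem approx_add_inv_two_pow_mul (hh : IsApproxBelow O β h) {t s : ℕ} (hts : t ≤ s) (i : ℕ) :
    approx O g t + 2⁻¹ ^ i * (approx O h s - approx O h t) =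
      ((2 ^ i * 2 ^ s * g (oracleSeg O t) + 2 ^ t * h (oracleSeg O s) -
        2 ^ s * h (oracleSeg O t) : ℕ) : ℝ) / 2 ^ (i + t + s) := by
  have hmono := hh.monotone hts
  rw [approx, approx, div_le_div_iff₀ (by positivity) (by positivity)] at hmono
  have hle : 2 ^ s * h (oracleSeg O t) ≤
      2 ^ i * 2 ^ s * g (oracleSeg O t) + 2 ^ t * h (oracleSeg O s) := by
    refine le_add_left ?_
    rw [mul_comm, mul_comm (2 ^ t)]
    exact_mod_cast hmono
  rw [Nat.cast_sub hle, approx, approx, approx, inv_pow]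
  push_cast
  field_simp
  ring

theorem MLRandomIn.exists_inv_two_pow_mul_sub_approx_le (hr : MLRandomIn O α) (hα : 0 < α)
    (hg : IsApproxBelow O α g) (hh : IsApproxBelow O β h) (hβ : β ≤ 1) :
    ∃ i, ∀ t, 2⁻¹ ^ i * (β - approx O h t) ≤ α - approx O g t := by
  have hgp := hg.primrec
  have hhp := hh.primrec
  obtain ⟨i, hi⟩ := hr.exists_forall_le (C := fun _ t L => t ≤ L.length)
    (A := fun i t L => 2 ^ i * 2 ^ L.length * g (L.take t) + 2 ^ t * h L -
      2 ^ L.length * h (L.take t))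
    (N := fun i t L => i + t + L.length) hgp (by fun_prop) (by fun_prop) (by fun_prop) fun i => by
      refine (measure_mono ?_).trans
        (volume_setOf_lt_add_le hg.monotone hh.monotone (c := 2⁻¹ ^ i) (by positivity)
          (by rw [approx]; positivity) fun s => (hh.le s).trans hβ)
      rintro x ⟨t, s, hts, hsx, hx⟩
      rw [length_oracleSeg] at hts
      rw [length_oracleSeg, take_oracleSeg, min_eq_left hts,
        ← approx_add_inv_two_pow_mul hh hts] at hx
      exact ⟨t, s, hts, hsx, hx⟩
  refine ⟨i, fun t => not_lt.1 fun hlt => ?_⟩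
  have hpow : (0 : ℝ) < 2⁻¹ ^ i := by positivity
  obtain ⟨s, hs⟩ := hh.exists_lt (approx O h t + (α - approx O g t) / 2⁻¹ ^ i) (by
    rw [← lt_sub_iff_add_lt', div_lt_iff₀ hpow]
    linarith)
  have hle := hi t (max s t) (by simp) (hg.lt hα _)
  rw [length_oracleSeg, take_oracleSeg, min_eq_left (le_max_right s t),
    ← approx_add_inv_two_pow_mul hh (le_max_right s t)] at hle
  have hs' := hs.trans_le (hh.monotone (le_max_left s t))
  rw [← lt_sub_iff_add_lt', div_lt_iff₀ hpow] at hs'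
  linarith

theorem leftCeIn_of_inv_two_pow_mul_sub_approx_le (hg : IsApproxBelow O α g)
    (hh : IsApproxBelow O β h) {i k : ℕ} (hik : i < k)
    (hle : ∀ t, 2⁻¹ ^ i * (β - approx O h t) ≤ α - approx O g t) :
    LeftCeIn O ((2 ^ k * α - β) / (2 ^ k - 1)) := by
  have hpow : (1 : ℝ) < 2 ^ k := one_lt_pow₀ one_lt_two (by omega)
  have hcast : ((2 ^ k - 1 : ℕ) : ℝ) = 2 ^ k - 1 := by
    rw [Nat.cast_sub Nat.one_le_two_pow]
    push_cast
    rfl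
  have happrox : ∀ t, approx O (fun L => 2 ^ k * g L) t = 2 ^ k * approx O g t := fun t => by
    rw [approx, approx]
    push_cast
    ring
  have hgp := hg.primrec
  refine leftCeIn_of_approx (A := fun L => 2 ^ k * g L) (D := 2 ^ k - 1) (by fun_prop) hh.primrec
    (fun t => ?_) fun x hx => ?_
  · rw [hcast, div_mul_cancel₀ _ (by linarith), happrox]
    have ht := hle t
    rw [inv_pow, inv_mul_le_iff₀ (by positivity)] at ht
    have hik : (2 : ℝ) ^ i * (α - approx O g t) ≤ 2 ^ k * (α - approx O g t) :=
      mul_le_mul_of_nonneg_right (pow_le_pow_right₀ one_le_two hik.le) (sub_nonneg.2 (hg.le t))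
    linarith
  · rw [lt_div_iff₀ (by linarith)] at hx
    obtain ⟨t, ht⟩ := hg.exists_lt ((x * (2 ^ k - 1) + β) / 2 ^ k) (by
      rw [div_lt_iff₀ (by linarith)]
      linarith)
    rw [div_lt_iff₀ (by linarith)] at ht
    refine ⟨t, ?_⟩
    rw [hcast, happrox]
    linarith [hh.le t]

end

theorem MLRandomIn.exists_forall_leftCeIn {O : ℕ → ℕ} {α β : ℝ} (hr : MLRandomIn O α) (hα : 0 < α)
    (hαO : LeftCeIn O α) (hβ0 : 0 ≤ β) (hβ1 : β ≤ 1) (hβO : LeftCeIn O β) :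
    ∃ i, ∀ k > i, LeftCeIn O ((2 ^ k * α - β) / (2 ^ k - 1)) := by
  obtain ⟨g, hg⟩ := hαO.exists_isApproxBelow hα.le
  obtain ⟨h, hh⟩ := hβO.exists_isApproxBelow hβ0
  obtain ⟨i, hi⟩ := hr.exists_inv_two_pow_mul_sub_approx_le hα hg hh hβ1
  exact ⟨i, fun k hk => leftCeIn_of_inv_two_pow_mul_sub_approx_le hg hh hk hi⟩

/-! ### Oracle machines which read a header -/

theorem drop_oracleSeg (O : ℕ → ℕ) (d k : ℕ) :
    (oracleSeg O k).drop d = oracleSeg (fun i => O (d + i)) (k - d) := by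
  ext1 i
  simp only [List.getElem?_drop, getElem?_oracleSeg, Nat.lt_sub_iff_add_lt']

theorem rfindOpt_eq_of_mem_iff {α : Type*} {f : ℕ → Option α} {p : Part α}
    (h : ∀ v, v ∈ p ↔ ∃ k, f k = some v) : Nat.rfindOpt f = p := by
  refine Part.ext fun v => ⟨fun hv => (h v).2 (Nat.rfindOpt_spec hv), fun hv => ?_⟩
  obtain ⟨k, hk⟩ := (h v).1 hv
  obtain ⟨w, hw⟩ := Part.dom_iff_mem.1 (Nat.rfindOpt_dom.2 ⟨k, v, hk⟩)
  rwa [Part.mem_unique hv ((h w).2 (Nat.rfindOpt_spec hw))]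

/-- If `p` recognizes, at the beginning of the oracle, a header of length `d` naming the machine
`c`, then `u` runs `c` with the rest of the oracle. -/
theorem CodeO.exists_eval_eq_of_header {p : List ℕ → Option (ℕ × ℕ)} (hp : Primrec p) :
    ∃ u : CodeO, ∀ (O : ℕ → ℕ) (c : CodeO) (d : ℕ),
      (∀ k, p (oracleSeg O k) = if d ≤ k then some (c.encode, d) else none) →
      ∀ n, u.eval O n = c.eval (fun i => O (d + i)) n := by
  have hdrop : Primrec fun x : (List ℕ × ℕ) × ℕ × ℕ => x.1.1.drop x.2.2 :=
    Primrec.list_drop.comp (by fun_prop) (by fun_prop)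
  have hg : Primrec fun x : List ℕ × ℕ => (p x.1).bind fun h => stageEval h.1 (x.1.drop h.2) x.2 :=
    Primrec.option_bind (by fun_prop) (primrec_stageEval (by fun_prop) hdrop (by fun_prop))
  obtain ⟨u, hu⟩ := exists_eval_eq_rfindOpt
    (g := fun L n => (p L).bind fun h => stageEval h.1 (L.drop h.2) n) hg
  refine ⟨u, fun O c d h n => (hu O n).trans (rfindOpt_eq_of_mem_iff fun v => ?_)⟩
  rw [mem_eval_iff_stageEval]
  refine ⟨fun ⟨k, hk⟩ => ⟨d + k, ?_⟩, fun ⟨k, hk⟩ => ?_⟩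
  · rw [h, if_pos (Nat.le_add_right d k), Option.bind_some, drop_oracleSeg, Nat.add_sub_cancel_left,
      hk]
  · rw [h] at hk
    split_ifs at hk
    · exact ⟨k - d, by rwa [Option.bind_some, drop_oracleSeg] at hk⟩
    · simp at hk

theorem oX_prepend_length_add (ρ : List Bool) (X : Cantor) (i : ℕ) :
    oX (prepend ρ X) (ρ.length + i) = oX X i := by
  simp [oX, prepend_length_add]

theorem exists_evalO_prepend_eq_of_header {p : List Bool → Option (ℕ × ℕ)} (hp : Primrec p) :
    ∃ u : CodeO, ∀ (ρ : List Bool) (X : Cantor) (c : CodeO),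
      (∀ k, p (initSeg (prepend ρ X) k) =
        if ρ.length ≤ k then some (c.encode, ρ.length) else none) →
      ∀ n, evalO (prepend ρ X) u n = evalO X c n := by
  obtain ⟨u, hu⟩ := CodeO.exists_eval_eq_of_header
    (p := fun L => p (L.map fun x => decide (x = 1))) (by fun_prop)
  refine ⟨u, fun ρ X c h n => (hu (oX (prepend ρ X)) c ρ.length (fun k => ?_) n).trans ?_⟩
  · simpa only [map_decide_oracleSeg_oX] using h k
  · exact congrArg (c.eval · n) (funext (oX_prepend_length_add ρ X))

theorem exists_evalO_prepend_singleton (c d : CodeO) : ∃ e : CodeO,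
    (∀ X n, evalO (prepend [false] X) e n = evalO X c n) ∧
      ∀ X n, evalO (prepend [true] X) e n = evalO X d n := by
  obtain ⟨e, he⟩ := exists_evalO_prepend_eq_of_header (p := fun L =>
    if 0 < L.length then some (if L[0]?.getD false = true then d.encode else c.encode, 1)
    else none) (by fun_prop)
  have header : ∀ (b : Bool) (X : Cantor) (k : ℕ),
      (initSeg (prepend [b] X) k)[0]? = if 0 < k then some b else none := fun b X k => by
    split_ifs with h <;> simp [initSeg, prepend, h]
  refine ⟨e, fun X => he [false] X c fun k => ?_, fun X => he [true] X d fun k => ?_⟩ <;>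
  · simp only [length_initSeg, header, List.length_singleton, Nat.one_le_iff_ne_zero,
      Nat.pos_iff_ne_zero]
    split_ifs <;> simp_all

/-! ### Universal oracle machines -/

theorem initSeg_prepend_length_add (ρ : List Bool) (X : Cantor) (k : ℕ) :
    initSeg (prepend ρ X) (ρ.length + k) = ρ ++ initSeg X k := by
  have h : initSeg (prepend ρ X) ρ.length = ρ := extends_prepend ρ X
  rw [initSeg, List.range_add, List.map_append, ← initSeg, h, List.map_map]
  exact congrArg (ρ ++ ·) (List.map_congr_left fun i _ => prepend_length_add ρ X i)

theorem initSeg_prepend_of_le {ρ : List Bool} {k : ℕ} (h : k ≤ ρ.length) (X : Cantor) :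
    initSeg (prepend ρ X) k = ρ.take k := by
  have hρ : initSeg (prepend ρ X) ρ.length = ρ := extends_prepend ρ X
  rw [← congrArg (List.take k) hρ, take_initSeg, min_eq_left h]

/-- The string `0ᵉ1`. -/
def unaryString (e : ℕ) : List Bool := List.replicate e false ++ [true]

theorem length_unaryString (e : ℕ) : (unaryString e).length = e + 1 := by simp [unaryString]

theorem primrec_unaryString : Primrec unaryString := by
  have h : Primrec fun e => (List.range e).map (fun _ => false) ++ [true] := by fun_prop
  exact h.of_eq fun e => by simp [unaryString]

theorem idxOf_true_unaryString_append (e : ℕ) (l : List Bool) :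
    (unaryString e ++ l).idxOf true = e := by
  rw [unaryString, List.append_assoc, List.idxOf_append_of_notMem (by simp)]
  simp

theorem eq_of_unaryString_prefix {e e' : ℕ} (h : unaryString e <+: unaryString e') : e = e' := by
  obtain ⟨l, hl⟩ := h
  calc e = (unaryString e ++ l).idxOf true := (idxOf_true_unaryString_append e l).symm
    _ = (unaryString e' ++ []).idxOf true := by rw [hl, List.append_nil]
    _ = e' := idxOf_true_unaryString_append e' []

theorem true_mem_initSeg_prepend_unaryString {e k : ℕ} {X : Cantor} :
    true ∈ initSeg (prepend (unaryString e) X) k ↔ e < k := by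
  obtain h | ⟨j, rfl⟩ : k ≤ e ∨ ∃ j, k = (unaryString e).length + j := by
    rw [length_unaryString]
    exact (le_or_gt k e).imp_right Nat.exists_eq_add_of_le
  · rw [initSeg_prepend_of_le (by rw [length_unaryString]; omega)]
    simp [unaryString, List.take_append, Nat.sub_eq_zero_of_le h, h]
  · rw [initSeg_prepend_length_add]
    simp only [unaryString, List.mem_append, List.mem_singleton, or_true, true_or, true_iff,
      List.length_append, List.length_replicate, List.length_singleton]
    omega

theorem exists_universalOM : ∃ u : CodeO, UniversalOM u := by
  have hidxOf : Primrec fun L : List Bool => L.idxOf true :=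
    Primrec.list_idxOf.comp (Primrec.const true) Primrec.id
  obtain ⟨u, hu⟩ := exists_evalO_prepend_eq_of_header (p := fun L =>
    if L.idxOf true < L.length then some (L.idxOf true, L.idxOf true + 1) else none) (by fun_prop)
  refine ⟨u, fun c => unaryString c.encode,
    ⟨fun e => Encodable.encode (unaryString e), ?_, fun c => rfl⟩, ?_, fun c X => ?_⟩
  · exact (Primrec.encode.comp primrec_unaryString).to_comp
  · rintro _ ⟨c, rfl⟩ _ ⟨d, rfl⟩ h
    exact congrArg unaryString (eq_of_unaryString_prefix h)
  · refine hu _ X c fun k => ?_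
    simp only [List.idxOf_lt_length_iff, true_mem_initSeg_prepend_unaryString, length_unaryString,
      Nat.add_one_le_iff]
    split_ifs with h
    · obtain ⟨j, rfl⟩ : ∃ j, k = (unaryString c.encode).length + j :=
        Nat.exists_eq_add_of_le (by rwa [length_unaryString])
      rw [initSeg_prepend_length_add, idxOf_true_unaryString_append]
    · rfl

theorem prepend_cons (b : Bool) (ρ : List Bool) (X : Cantor) :
    prepend (b :: ρ) X = prepend [b] (prepend ρ X) := by
  funext n
  cases n <;> simp [prepend]

theorem UniversalOM.of_evalO_prepend_false {c e : CodeO} (hc : UniversalOM c)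
    (h : ∀ X n, evalO (prepend [false] X) e n = evalO X c n) : UniversalOM e := by
  obtain ⟨σ, ⟨f, hf, hfσ⟩, hprefix, hσ⟩ := hc
  have hcons : Primrec fun m : ℕ => Nat.pair (Encodable.encode false) m + 1 := by fun_prop
  refine ⟨fun c => false :: σ c, ⟨fun n => Nat.pair (Encodable.encode false) (f n) + 1,
    hcons.to_comp.comp hf, fun c => by simp only [hfσ]; rfl⟩, ?_, fun c X n => ?_⟩
  · rintro _ ⟨c, rfl⟩ _ ⟨d, rfl⟩ hcd
    exact congrArg _ (hprefix _ ⟨c, rfl⟩ _ ⟨d, rfl⟩ (List.cons_prefix_cons.1 hcd).2)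
  · rw [prepend_cons, h, hσ]

/-! ### The probability that the domain has a given property -/

/-- The oracles for which the domain of the machine `c` has the property `Q`. Both `COF c` and
`COM c` are of this form. -/
def domClass (Q : Set ℕ → Prop) (c : CodeO) : Set Cantor := {X | Q (domSet c X)}

theorem preimage_prepend_domClass {Q : Set ℕ → Prop} {c e : CodeO} {ρ : List Bool}
    (h : ∀ X n, evalO (prepend ρ X) e n = evalO X c n) :
    prepend ρ ⁻¹' domClass Q e = domClass Q c := by
  ext X
  simp only [domClass, domSet, Set.mem_preimage, Set.mem_ofPred_eq, h]

theorem muR_eq_inv_two_pow_mul_add {S : Set Cantor} (hS : MeasurableSet S) (ρ : List Bool) :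
    muR S = 2⁻¹ ^ ρ.length * muR (prepend ρ ⁻¹' S) + muR (S \ {X | Extends X ρ}) := by
  rw [← muR_inter_extends hS]
  exact (measureReal_inter_add_sdiff (μ := mu) (measurableSet_extends ρ)).symm

theorem muR_eq_half_mul_add_half_mul {S : Set Cantor} (hS : MeasurableSet S) :
    muR S = 2⁻¹ * muR (prepend [false] ⁻¹' S) + 2⁻¹ * muR (prepend [true] ⁻¹' S) := by
  have hcompl : S \ {X | Extends X [false]} = S ∩ {X | Extends X [true]} := by
    ext X
    simp [extends_iff]
  rw [muR_eq_inv_two_pow_mul_add hS [false], hcompl, muR_inter_extends hS]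
  simp only [List.length_singleton, pow_one]

section DomainProbability

variable {Q : Set ℕ → Prop}

theorem UniversalOM.nRandom_three_muR_domClass {u : CodeO} (hu : UniversalOM u)
    (hQ : IsSigmaThree (domClass Q u))
    (hsurj : ∀ γ, 0 ≤ γ → γ ≤ 1 → LeftCeIn (iterJump 2) γ → ∃ c, muR (domClass Q c) = γ) :
    NRandom 3 (muR (domClass Q u)) := by
  let β := leftmostUncovered (iterJump 2)
  have hβ0 : 0 < β := leftmostUncovered_pos _
  have hβ : LeftCeIn (iterJump 2) β := leftCeIn_leftmostUncovered _
  obtain ⟨c, hc⟩ := hsurj β hβ0.le (leftmostUncovered_le_one _) hβ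
  obtain ⟨σ, -, -, hσ⟩ := hu
  rw [muR_eq_inv_two_pow_mul_add hQ.measurableSet (σ c), preimage_prepend_domClass (hσ c), hc]
  exact (mlRandomIn_leftmostUncovered _).inv_two_pow_mul_add hβ0 hβ (muR_nonneg _)
    (hQ.diff_extends (σ c)).leftCeIn _

theorem UniversalOM.exists_muR_domClass_eq_mix {u : CodeO} (hu : UniversalOM u)
    (hQ : ∀ c, MeasurableSet (domClass Q c)) (d : CodeO) (k : ℕ) :
    ∃ v, UniversalOM v ∧ muR (domClass Q v) =
      2⁻¹ ^ k * muR (domClass Q u) + (1 - 2⁻¹ ^ k) * muR (domClass Q d) := by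
  induction k with
  | zero => exact ⟨u, hu, by simp⟩
  | succ k ih =>
    obtain ⟨v, hv, hvk⟩ := ih
    obtain ⟨e, hfalse, htrue⟩ := exists_evalO_prepend_singleton v d
    refine ⟨e, hv.of_evalO_prepend_false hfalse, ?_⟩
    rw [muR_eq_half_mul_add_half_mul (hQ e), preimage_prepend_domClass hfalse,
      preimage_prepend_domClass htrue, hvk]
    ring

theorem exists_universalOM_muR_domClass_eq (hQ : ∀ c, IsSigmaThree (domClass Q c))
    (hsurj : ∀ γ, 0 ≤ γ → γ ≤ 1 → LeftCeIn (iterJump 2) γ → ∃ c, muR (domClass Q c) = γ)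
    {α : ℝ} (h0 : 0 < α) (h1 : α < 1) (hr : NRandom 3 α) (hα : LeftCeIn (iterJump 2) α) :
    ∃ u, UniversalOM u ∧ muR (domClass Q u) = α := by
  obtain ⟨u, hu⟩ := exists_universalOM
  set β := muR (domClass Q u) with hβ
  have hβ0 : 0 ≤ β := muR_nonneg _
  have hβ1 : β ≤ 1 := muR_le_one _
  obtain ⟨i, hi⟩ := MLRandomIn.exists_forall_leftCeIn hr h0 hα hβ0 hβ1 (hQ u).leftCeIn
  have htop : Filter.Tendsto (fun k : ℕ => (2 : ℝ) ^ k) .atTop .atTop :=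
    tendsto_pow_atTop_atTop_of_one_lt one_lt_two
  obtain ⟨k, hki, hkα, hkα'⟩ := ((Filter.eventually_gt_atTop i).and
    ((htop.eventually_gt_atTop (1 / α)).and (htop.eventually_gt_atTop (1 / (1 - α))))).exists
  rw [div_lt_iff₀ h0] at hkα
  rw [div_lt_iff₀ (sub_pos.2 h1)] at hkα'
  have hpos : (0 : ℝ) < 2 ^ k - 1 := by linarith
  obtain ⟨d, hd⟩ := hsurj ((2 ^ k * α - β) / (2 ^ k - 1))
    (div_nonneg (by linarith) hpos.le) ((div_le_one hpos).2 (by linarith)) (hi k hki)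
  obtain ⟨v, hv, hvk⟩ := hu.exists_muR_domClass_eq_mix (fun c => (hQ c).measurableSet) d k
  refine ⟨v, hv, hvk.trans ?_⟩
  rw [hd, ← hβ, inv_pow]
  field_simp
  ring

end DomainProbability

end RandProb

namespace RandProb

/-- **Cofiniteness and computability probabilities for universal oracle machines.**
For a universal oracle machine, the probability of computing a function with cofinite
domain (respectively, with computable domain) is a 3-random `∅''`-left-c.e. real.
Conversely, every 3-random `∅''`-left-c.e. real in `(0,1)` is the cofiniteness
probability of some universal oracle machine, and also the computability probability of
some universal oracle machine. -/
theorem cof_com_probability_characterization :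
    (∀ u : CodeO, UniversalOM u →
        (NRandom 3 (muR (COF u)) ∧ LeftCeIn (iterJump 2) (muR (COF u))) ∧
        (NRandom 3 (muR (COM u)) ∧ LeftCeIn (iterJump 2) (muR (COM u)))) ∧
    (∀ α : ℝ, 0 < α → α < 1 → NRandom 3 α → LeftCeIn (iterJump 2) α →
        (∃ u : CodeO, UniversalOM u ∧ muR (COF u) = α) ∧
        (∃ v : CodeO, UniversalOM v ∧ muR (COM v) = α)) := by
  let cofin : Set ℕ → Prop := fun D => Dᶜ.Finite
  let comp : Set ℕ → Prop := fun D => ComputablePred fun n => n ∈ D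
  have hcofin (γ : ℝ) (h0 : 0 ≤ γ) (h1 : γ ≤ 1) (h : LeftCeIn (iterJump 2) γ) :
      ∃ c, muR (domClass cofin c) = γ := (h.exists_muR_eq h0 h1).imp fun _ hc => hc.1
  have hcomp (γ : ℝ) (h0 : 0 ≤ γ) (h1 : γ ≤ 1) (h : LeftCeIn (iterJump 2) γ) :
      ∃ c, muR (domClass comp c) = γ := (h.exists_muR_eq h0 h1).imp fun _ hc => hc.2
  refine ⟨fun u hu => ⟨⟨?_, (isSigmaThree_COF u).leftCeIn⟩, ?_, (isSigmaThree_COM u).leftCeIn⟩,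
    fun α h0 h1 hr hα => ⟨?_, ?_⟩⟩
  · exact hu.nRandom_three_muR_domClass (Q := cofin) (isSigmaThree_COF u) hcofin
  · exact hu.nRandom_three_muR_domClass (Q := comp) (isSigmaThree_COM u) hcomp
  · exact exists_universalOM_muR_domClass_eq (Q := cofin) isSigmaThree_COF hcofin h0 h1 hr hα
  · exact exists_universalOM_muR_domClass_eq (Q := comp) isSigmaThree_COM hcomp h0 h1 hr hα

end RandProb
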